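/- Let Q be an ergodic CP-distribution on ℝ² (with respect to the dyadic partition). Then the set {π ∈ G(2,1) : dim πQ < min(1, dim Q)} is at most countable. -/

import Mathlib

/-!
A direction `θ` with `β θ < min 1 α` is shown to be isolated in the following sense: there is
`ε > 0` with `β (θ + φ) ≥ β θ + ε` whenever `0 < |φ| < ε` (`CPE.main_prop`). A set of reals
all of whose points have this property is countable, because each point can be separated from the
others by a box with rational corners around `(θ, β θ)` (`CPE.countable_of_isolated`).

For the isolation, write `U θ m` for the projection in direction `θ` discretised at scale `2 ^ (-m)`
and choose `m` with `ρ = 2 ^ m * tan φ` of modulus in `[1/2, 1]`. Given `U θ m`, the projection in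
direction `θ + φ` at scale `m + n` is, up to a factor `cos φ` and a bounded error, a sum `A + B` of
`A = U θ (m + n)` and of a discretised coordinate `B` orthogonal to `θ` of the generation-`n` cell
(`CPE.Bf`). Entropies are averaged over `Q` (`CPE.hh`), and the invariance of `Q` under
magnification makes them stationary (`CPE.hh_stat`). This has the following consequences.

* The mutual information of `A` and the generation-`n` cell given `U θ m` is an increment of a
  bounded monotone sequence in `m`, so `A` and `B` are almost independent for large `m`, that is, for
  small `φ` (`CPE.aCI_tendsto`).
* The entropy of `A` given `U θ m` is about `n * β θ * log 2`, and that of `A + B` at most about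
  `n * β (θ + φ) * log 2` (`CPE.incr_upper`, `CPE.incr_lower`, `CPE.X_upper`).
* Given `U θ m`, the pair of `U θ n` and `B` determines the generation-`n` cell up to boundedly many
  choices, so `B` has entropy about at least `n * (α - β θ) * log 2`, which is a positive proportion of
  `n` (`CPE.cc_lower`, `CPE.B_lower`).
* Since `β θ < 1`, the conditional laws of blocks of digits of `A` are mostly carried by few values, so
  at most scales they are far from uniform (`CPE.light_tendsto`, `CPE.excess`).

These facts are confronted with an inverse theorem for the entropy of sums (`CPE.multiscale`): if `B`
has positive entropy at a positive proportion of scales, and `A` and `B` are almost independent, then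
either `A` has almost full entropy at many scales, or the entropy of `A + B` exceeds that of `A` by a
definite proportion. At a single scale (`CPE.core`) one takes two pieces of `B` that are far apart. If
adding either piece to `A` gives nearly the same law, then so does adding any mixed convolution power
of the two pieces; these powers are spread along a long arithmetic progression, which forces the law
of `A` to be nearly uniform at that scale. The passage from entropy to total variation is Pinsker's
inequality (`CPE.pinsker`). Thus `β (θ + φ)` exceeds `β θ` by a definite amount
(`CPE.final_ineq`).
-/

open MeasureTheory Set Filter
open scoped ENNReal Classical

noncomputable section

/-- A measure is exact dimensional with dimension `d`. -/
def ExactDim {X : Type*} [PseudoMetricSpace X] [MeasurableSpace X]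
    (μ : Measure X) (d : ℝ) : Prop :=
  ∀ᵐ x ∂μ, Tendsto (fun r : ℝ => Real.log (μ (Metric.ball x r)).toReal / Real.log r)
    (nhdsWithin 0 (Set.Ioi 0)) (nhds d)

/-- The half-open dyadic cell of generation `k` containing `x`. -/
def dcell {d : ℕ} (k : ℕ) (x : Fin d → ℝ) : Set (Fin d → ℝ) :=
  {y | ∀ i, ⌊(2 : ℝ) ^ k * y i⌋ = ⌊(2 : ℝ) ^ k * x i⌋}

/-- The homothety mapping the generation-`k` dyadic cell of `x` onto `[0,1)^d`. -/
def dscale {d : ℕ} (k : ℕ) (x : Fin d → ℝ) : (Fin d → ℝ) → (Fin d → ℝ) :=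
  fun y i => (2 : ℝ) ^ k * y i - ⌊(2 : ℝ) ^ k * x i⌋

/-- The component `μ^{D_k(x)}`: the normalized restriction of `μ` to the generation-`k` dyadic
cell of `x`, rescaled to the unit cube. -/
def component {d : ℕ} (μ : Measure (Fin d → ℝ)) (k : ℕ) (x : Fin d → ℝ) :
    Measure (Fin d → ℝ) :=
  (μ (dcell k x))⁻¹ • (μ.restrict (dcell k x)).map (dscale k x)

/-- The component `μ^{D_k(x)}` as a probability measure (with a junk value in the degenerate
case `μ(D_k(x)) ∈ {0, ∞}`). -/
def componentP {d : ℕ} (μ : Measure (Fin d → ℝ)) (k : ℕ) (x : Fin d → ℝ) :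
    ProbabilityMeasure (Fin d → ℝ) :=
  if h : IsProbabilityMeasure (component μ k x) then ⟨component μ k x, h⟩
  else ⟨Measure.dirac 0, by infer_instance⟩

/-- The σ-algebra on the space of probability measures inherited from the evaluation
σ-algebra on the space of measures. -/
instance {Ω : Type*} [MeasurableSpace Ω] : MeasurableSpace (ProbabilityMeasure Ω) :=
  inferInstanceAs (MeasurableSpace {μ : Measure Ω // IsProbabilityMeasure μ})

/-- The unit cube `[0,1)^d`. -/
def unitCube (d : ℕ) : Set (Fin d → ℝ) := {y | ∀ i, 0 ≤ y i ∧ y i < 1}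

/-- The magnification operator `M(μ, x) = (μ^{D_1(x)}, S_{D_1(x)}(x))`. -/
def CPmag {d : ℕ} :
    ProbabilityMeasure (Fin d → ℝ) × (Fin d → ℝ) →
      ProbabilityMeasure (Fin d → ℝ) × (Fin d → ℝ) :=
  fun p => (componentP (p.1 : Measure (Fin d → ℝ)) 1 p.2, dscale 1 p.2 p.2)

/-- A CP-distribution: a probability distribution on pairs (measure on the unit cube, point of
the unit cube) that is invariant under magnification and adapted (the point component is
distributed according to the measure component). -/
def IsCPDist {d : ℕ}
    (Q : Measure (ProbabilityMeasure (Fin d → ℝ) × (Fin d → ℝ))) : Prop :=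
  IsProbabilityMeasure Q ∧
    (∀ᵐ p ∂Q, (p.1 : Measure (Fin d → ℝ)) (unitCube d) = 1 ∧ p.2 ∈ unitCube d) ∧
    Q.map CPmag = Q ∧
    Q = (Q.map Prod.fst).bind fun ν => (ν : Measure (Fin d → ℝ)).map fun x => (ν, x)

/-- Ergodicity of the magnification system `(P([0,1)^d) × [0,1)^d, Q, M)`. -/
def CPErgodic {d : ℕ}
    (Q : Measure (ProbabilityMeasure (Fin d → ℝ) × (Fin d → ℝ))) : Prop :=
  ∀ S : Set (ProbabilityMeasure (Fin d → ℝ) × (Fin d → ℝ)),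
    MeasurableSet S → CPmag ⁻¹' S = S → Q S = 0 ∨ Q S = 1

/-- The orthogonal projection of the plane onto the line of angle `θ`, identified with `ℝ`. -/
def projDir (θ : ℝ) (x : Fin 2 → ℝ) : ℝ := x 0 * Real.cos θ + x 1 * Real.sin θ

namespace CPE

/-! ### Entropy on a finite weighted set -/

section FiniteEntropy

variable {ι κ κ' κ'' : Type*} [Fintype ι]

/-- The mass of the fibre of `f` over `k` for the weights `p`. -/
def pm (p : ι → ℝ) (f : ι → κ) (k : κ) : ℝ := ∑ j, if f j = k then p j else 0

/-- Shannon entropy (natural logarithm) of `f` under the weights `p`, written as an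
expectation over the underlying finite set. -/
def Ent (p : ι → ℝ) (f : ι → κ) : ℝ := ∑ i, p i * (-Real.log (pm p f (f i)))

lemma pm_nonneg {p : ι → ℝ} (hp : ∀ i, 0 ≤ p i) (f : ι → κ) (k : κ) : 0 ≤ pm p f k :=
  Finset.sum_nonneg fun j _ => by split_ifs <;> simp [hp]

lemma le_pm {p : ι → ℝ} (hp : ∀ i, 0 ≤ p i) (f : ι → κ) (i : ι) : p i ≤ pm p f (f i) := by
  have := Finset.single_le_sum (f := fun j => if f j = f i then p j else 0)
    (fun j _ => by split_ifs <;> simp [hp]) (Finset.mem_univ i)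
  simpa [pm] using this

lemma pm_pos {p : ι → ℝ} (hp : ∀ i, 0 ≤ p i) (f : ι → κ) {i : ι} (hi : p i ≠ 0) :
    0 < pm p f (f i) :=
  lt_of_lt_of_le (lt_of_le_of_ne (hp i) (Ne.symm hi)) (le_pm hp f i)

lemma pm_le_sum {p : ι → ℝ} (hp : ∀ i, 0 ≤ p i) (f : ι → κ) (k : κ) : pm p f k ≤ ∑ i, p i :=
  Finset.sum_le_sum fun j _ => by split_ifs <;> simp [hp]

lemma pm_mono {p : ι → ℝ} (hp : ∀ i, 0 ≤ p i) {f : ι → κ} {g : ι → κ'} {k : κ} {l : κ'}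
    (h : ∀ j, f j = k → g j = l) : pm p f k ≤ pm p g l := by
  refine Finset.sum_le_sum fun j _ => ?_
  by_cases h1 : f j = k
  · simp [h1, h j h1]
  · simp only [h1, if_false]; split_ifs <;> simp [hp]

lemma pm_congr (p : ι → ℝ) {f : ι → κ} {g : ι → κ'} {k : κ} {l : κ'}
    (h : ∀ j, f j = k ↔ g j = l) : pm p f k = pm p g l :=
  Finset.sum_congr rfl fun j _ => by simp [h j]

/-- Regrouping a sum along the fibres of `f`. -/
lemma sum_fiber (p : ι → ℝ) (f : ι → κ) (F : κ → ℝ) {s : Finset κ} (hs : ∀ i, f i ∈ s) :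
    ∑ i, p i * F (f i) = ∑ k ∈ s, pm p f k * F k := by
  simp only [pm, Finset.sum_mul]
  rw [Finset.sum_comm]
  refine Finset.sum_congr rfl fun i _ => ?_
  rw [Finset.sum_eq_single (f i)]
  · simp
  · intro b _ hb; simp [Ne.symm hb]
  · intro h; exact absurd (hs i) h

lemma sum_pm (p : ι → ℝ) (f : ι → κ) {s : Finset κ} (hs : ∀ i, f i ∈ s) :
    ∑ k ∈ s, pm p f k = ∑ i, p i := by
  simpa using (sum_fiber p f (fun _ => 1) hs).symm

lemma sum_fiber_supp (p : ι → ℝ) (f : ι → κ) (F : κ → ℝ)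
    (s : Finset κ) (hs : ∀ i, p i ≠ 0 → f i ∈ s) :
    ∑ i, p i * F (f i) = ∑ k ∈ s, pm p f k * F k := by
  rw [sum_fiber p f F (s := s ∪ Finset.univ.image f) (by simp)]
  symm
  apply Finset.sum_subset Finset.subset_union_left
  intro k _ hk
  have : pm p f k = 0 := by
    refine Finset.sum_eq_zero fun j _ => ?_
    split_ifs with h
    · by_contra hj; exact hk (h ▸ hs j hj)
    · rfl
  simp [this]

lemma Ent_eq (p : ι → ℝ) (f : ι → κ) {s : Finset κ} (hs : ∀ i, f i ∈ s) :
    Ent p f = ∑ k ∈ s, Real.negMulLog (pm p f k) := by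
  rw [Ent, sum_fiber p f (fun k => -Real.log (pm p f k)) hs]
  exact Finset.sum_congr rfl fun k _ => by rw [Real.negMulLog]; ring

lemma Ent_mono {p : ι → ℝ} (hp : ∀ i, 0 ≤ p i) {f : ι → κ} {g : ι → κ'}
    (h : ∀ i j, f i = f j → g i = g j) : Ent p g ≤ Ent p f := by
  refine Finset.sum_le_sum fun i _ => ?_
  by_cases hi : p i = 0
  · simp [hi]
  · refine mul_le_mul_of_nonneg_left (neg_le_neg ?_) (hp i)
    exact Real.log_le_log (pm_pos hp f hi) (pm_mono hp fun j hj => h j i hj)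

lemma Ent_congr {p : ι → ℝ} {f : ι → κ} {g : ι → κ'}
    (h : ∀ i j, f i = f j ↔ g i = g j) : Ent p f = Ent p g := by
  refine Finset.sum_congr rfl fun i _ => ?_
  rw [pm_congr p (fun j => h j i)]

lemma Ent_nonneg {p : ι → ℝ} (hp : ∀ i, 0 ≤ p i) (h1 : ∑ i, p i ≤ 1) (f : ι → κ) :
    0 ≤ Ent p f := by
  refine Finset.sum_nonneg fun i _ => mul_nonneg (hp i) ?_
  have := Real.log_nonpos (pm_nonneg hp f (f i)) ((pm_le_sum hp f (f i)).trans h1)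
  linarith

/-- **Conditional Gibbs inequality.** A conditional entropy is bounded by the expected code
length of any conditional (sub)probability kernel `t`. -/
lemma gibbs {p : ι → ℝ} (hp : ∀ i, 0 ≤ p i) (f : ι → κ) (g : ι → κ') (t : κ → κ' → ℝ)
    (S : κ' → Finset κ) (hS : ∀ i, p i ≠ 0 → f i ∈ S (g i)) (ht0 : ∀ k l, 0 ≤ t k l)
    (htpos : ∀ i, p i ≠ 0 → 0 < t (f i) (g i))
    (ht : ∀ i, p i ≠ 0 → ∑ k ∈ S (g i), t k (g i) ≤ 1) :
    Ent p (fun i => (f i, g i)) - Ent p g ≤ ∑ i, p i * (-Real.log (t (f i) (g i))) := by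
  set fg : ι → κ × κ' := fun i => (f i, g i) with hfg
  have key : ∑ i, p i * (pm p g (g i) * t (f i) (g i) / pm p fg (fg i)) ≤ ∑ i, p i := by
    let F : κ × κ' → ℝ := fun kl => pm p g kl.2 * t kl.1 kl.2 / pm p fg kl
    let G : Finset κ' := (Finset.univ.filter (fun i => p i ≠ 0)).image g
    have h1 := sum_fiber_supp p fg F ((G.sigma S).image fun x => (x.2, x.1)) (by
      intro i hi
      simp only [Finset.mem_image, Finset.mem_sigma]
      exact ⟨⟨g i, f i⟩, ⟨Finset.mem_image.2 ⟨i, by simp [hi], rfl⟩, hS i hi⟩, rfl⟩)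
    refine h1.le.trans ?_
    rw [Finset.sum_image (by
      rintro ⟨a, b⟩ _ ⟨c, d⟩ _ h; simp only [Prod.mk.injEq] at h
      obtain ⟨h1, h2⟩ := h; subst h1; subst h2; rfl)]
    rw [Finset.sum_sigma]
    have h2 : ∀ l ∈ G, ∑ k ∈ S l, pm p fg (k, l) * F (k, l) ≤ pm p g l := by
      intro l hl
      obtain ⟨i, hi, rfl⟩ := Finset.mem_image.1 hl
      have hi' : p i ≠ 0 := by simpa using hi
      calc ∑ k ∈ S (g i), pm p fg (k, g i) * F (k, g i)
          ≤ ∑ k ∈ S (g i), pm p g (g i) * t k (g i) := by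
            refine Finset.sum_le_sum fun k _ => ?_
            by_cases h0 : pm p fg (k, g i) = 0
            · rw [h0, zero_mul]; exact mul_nonneg (pm_nonneg hp _ _) (ht0 _ _)
            · simp only [F]; rw [mul_div_cancel₀ _ h0]
        _ = pm p g (g i) * ∑ k ∈ S (g i), t k (g i) := by rw [Finset.mul_sum]
        _ ≤ pm p g (g i) * 1 := mul_le_mul_of_nonneg_left (ht i hi') (pm_nonneg hp _ _)
        _ = _ := mul_one _
    calc _ ≤ ∑ l ∈ G, pm p g l := Finset.sum_le_sum h2
      _ ≤ ∑ l ∈ Finset.univ.image g, pm p g l := by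
        refine Finset.sum_le_sum_of_subset_of_nonneg
          (Finset.image_subset_image (Finset.filter_subset _ _)) fun _ _ _ => pm_nonneg hp _ _
      _ = _ := sum_pm p g (by simp)
  have h3 : Ent p fg - Ent p g - ∑ i, p i * (-Real.log (t (f i) (g i)))
      ≤ ∑ i, p i * (pm p g (g i) * t (f i) (g i) / pm p fg (fg i)) - ∑ i, p i := by
    rw [Ent, Ent, ← Finset.sum_sub_distrib, ← Finset.sum_sub_distrib, ← Finset.sum_sub_distrib]
    refine Finset.sum_le_sum fun i _ => ?_
    by_cases hi : p i = 0
    · simp [hi]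
    · have a := pm_pos hp g hi
      have b := pm_pos hp fg hi
      have c := htpos i hi
      have := Real.log_le_sub_one_of_pos (div_pos (mul_pos a c) b)
      rw [Real.log_div (mul_pos a c).ne' b.ne', Real.log_mul a.ne' c.ne'] at this
      have := mul_le_mul_of_nonneg_left this (hp i)
      linarith
  linarith

/-- Strong subadditivity of entropy. -/
lemma Ent_submod {p : ι → ℝ} (hp : ∀ i, 0 ≤ p i) (f : ι → κ) (g : ι → κ') (c : ι → κ'') :
    Ent p (fun i => (f i, g i, c i)) + Ent p c
      ≤ Ent p (fun i => (f i, c i)) + Ent p (fun i => (g i, c i)) := by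
  have := gibbs hp f (fun i => (g i, c i))
    (fun k l => pm p (fun i => (f i, c i)) (k, l.2) / pm p c l.2)
    (fun _ => Finset.univ.image f) (by simp)
    (fun _ _ => div_nonneg (pm_nonneg hp _ _) (pm_nonneg hp _ _))
    (fun i hi => div_pos (pm_pos hp (fun i => (f i, c i)) hi) (pm_pos hp c hi))
    (fun i hi => by
      rw [← Finset.sum_div, div_le_one (pm_pos hp c hi)]
      simp only [pm]
      rw [Finset.sum_comm]
      refine Finset.sum_le_sum fun j _ => ?_
      by_cases hj : c j = c i
      · rw [Finset.sum_eq_single (f j)] <;> simp +contextual [hj, Ne.symm, eq_comm]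
      · simp [hj])
  have h2 : ∑ i, p i * (-Real.log (pm p (fun i => (f i, c i)) (f i, c i) / pm p c (c i)))
      = Ent p (fun i => (f i, c i)) - Ent p c := by
    rw [Ent, Ent, ← Finset.sum_sub_distrib]
    refine Finset.sum_congr rfl fun i _ => ?_
    by_cases hi : p i = 0
    · simp [hi]
    · rw [Real.log_div (pm_pos hp (fun i => (f i, c i)) hi).ne' (pm_pos hp c hi).ne']; ring
  rw [h2] at this
  linarith

/-- If `f` takes at most `N` values on each fibre of `g`, then `H(f,g) ≤ H(g) + log N`. -/
lemma Ent_card {p : ι → ℝ} (hp : ∀ i, 0 ≤ p i) (h1 : ∑ i, p i = 1) (f : ι → κ) (g : ι → κ')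
    {N : ℝ} (hN : 0 < N) (S : κ' → Finset κ) (hS : ∀ i, f i ∈ S (g i))
    (hc : ∀ i, ((S (g i)).card : ℝ) ≤ N) :
    Ent p (fun i => (f i, g i)) ≤ Ent p g + Real.log N := by
  have := gibbs hp f g (fun _ _ => 1 / N) S (fun i _ => hS i) (fun _ _ => by positivity)
    (fun _ _ => by positivity) (fun i _ => by
      rw [Finset.sum_const, nsmul_eq_mul, mul_one_div, div_le_one hN]; exact hc i)
  simp only [one_div, Real.log_inv, neg_neg] at this
  rw [← Finset.sum_mul, h1] at this
  linarith

/-- If the integer valued `f` oscillates by at most `r` on each fibre of `g`, then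
`H(f,g) ≤ H(g) + log (2r+1)`. -/
lemma Ent_osc {p : ι → ℝ} (hp : ∀ i, 0 ≤ p i) (h1 : ∑ i, p i = 1) (f : ι → ℤ) (g : ι → κ')
    (r : ℕ) (h : ∀ i j, g i = g j → |f i - f j| ≤ r) :
    Ent p (fun i => (f i, g i)) ≤ Ent p g + Real.log (2 * r + 1) := by
  let c : κ' → ℤ := fun l => if h : ∃ i, g i = l then f h.choose else 0
  have hc : ∀ i, |f i - c (g i)| ≤ r := fun i => by
    have he : ∃ j, g j = g i := ⟨i, rfl⟩
    simp only [c, dif_pos he]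
    exact h _ _ he.choose_spec.symm
  refine Ent_card hp h1 f g (by positivity) (fun l => Finset.Icc (c l - r) (c l + r)) ?_ ?_
  · intro i
    have := abs_le.1 (hc i)
    rw [Finset.mem_Icc]; omega
  · intro i
    have : (Finset.Icc (c (g i) - r) (c (g i) + r)).card = 2 * r + 1 := by
      rw [Int.card_Icc]; omega
    rw [this]; push_cast; rfl

lemma Ent_le_pair_left {p : ι → ℝ} (hp : ∀ i, 0 ≤ p i) (f : ι → κ) (g : ι → κ') :
    Ent p f ≤ Ent p (fun i => (f i, g i)) :=
  Ent_mono hp fun i j h => by simp only [Prod.mk.injEq] at h; exact h.1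

lemma Ent_le_pair_right {p : ι → ℝ} (hp : ∀ i, 0 ≤ p i) (f : ι → κ) (g : ι → κ') :
    Ent p g ≤ Ent p (fun i => (f i, g i)) :=
  Ent_mono hp fun i j h => by simp only [Prod.mk.injEq] at h; exact h.2

/-- The entropy of `f` against that of a function `g` that determines it up to oscillation `r`. -/
lemma Ent_le_osc {p : ι → ℝ} (hp : ∀ i, 0 ≤ p i) (h1 : ∑ i, p i = 1) (f : ι → ℤ) (g : ι → κ')
    (c : ι → κ) (r : ℕ) (h : ∀ i j, g i = g j → c i = c j → |f i - f j| ≤ r) :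
    Ent p (fun i => (f i, c i)) ≤ Ent p (fun i => (g i, c i)) + Real.log (2 * r + 1) := by
  have h2 := Ent_osc hp h1 f (fun i => (g i, c i)) r
    (fun i j hij => by simp only [Prod.mk.injEq] at hij; exact h i j hij.1 hij.2)
  refine le_trans (Ent_mono hp ?_) h2
  intro i j hij
  simp only [Prod.mk.injEq] at hij ⊢
  exact ⟨hij.1, hij.2.2⟩

lemma Ent_const {p : ι → ℝ} (h1 : ∑ i, p i = 1) (c : κ) : Ent p (fun _ => c) = 0 := by
  simp [Ent, pm, h1]

lemma Ent_pair_le_add {p : ι → ℝ} (hp : ∀ i, 0 ≤ p i) (h1 : ∑ i, p i = 1) (f : ι → κ)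
    (g : ι → κ') : Ent p (fun i => (f i, g i)) ≤ Ent p f + Ent p g := by
  have h := Ent_submod hp f g (fun _ => ())
  rw [Ent_const h1, Ent_congr (g := fun i => (f i, g i)) (by simp),
    Ent_congr (f := fun i => (f i, ())) (g := f) (by simp),
    Ent_congr (f := fun i => (g i, ())) (g := g) (by simp)] at h
  linarith

end FiniteEntropy
end CPE

namespace CPE

/-! ### Finitely supported laws on the integers and convolution -/

section Laws

/-- Finitely supported functions on `ℤ` with convolution as product. -/
abbrev ZAlg : Type := AddMonoidAlgebra ℝ ℤ

/-- The `ℓ¹` norm. -/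
def nrm (x : ZAlg) : ℝ := x.coeff.sum fun _ r => |r|

lemma nrm_eq (x : ZAlg) {s : Finset ℤ} (hs : x.coeff.support ⊆ s) :
    nrm x = ∑ n ∈ s, |x.coeff n| :=
  Finsupp.sum_of_support_subset _ hs _ (by simp)

lemma sum_abs_le_nrm (x : ZAlg) (s : Finset ℤ) : ∑ n ∈ s, |x.coeff n| ≤ nrm x := by
  rw [nrm_eq x (s := x.coeff.support ∪ s) Finset.subset_union_left]
  exact Finset.sum_le_sum_of_subset_of_nonneg Finset.subset_union_right fun _ _ _ => abs_nonneg _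

lemma nrm_zero : nrm 0 = 0 := by simp [nrm]

lemma nrm_neg (x : ZAlg) : nrm (-x) = nrm x := by
  rw [nrm_eq (-x) (s := x.coeff.support) (by simp), nrm_eq x (s := x.coeff.support) subset_rfl]
  simp

lemma nrm_add (x y : ZAlg) : nrm (x + y) ≤ nrm x + nrm y := by
  have h : (x + y).coeff.support ⊆ x.coeff.support ∪ y.coeff.support := Finsupp.support_add
  rw [nrm_eq (x + y) h, nrm_eq x Finset.subset_union_left, nrm_eq y Finset.subset_union_right,
    ← Finset.sum_add_distrib]
  exact Finset.sum_le_sum fun n _ => by simpa using abs_add_le _ _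

lemma nrm_sum {ι : Type*} (s : Finset ι) (x : ι → ZAlg) :
    nrm (∑ i ∈ s, x i) ≤ ∑ i ∈ s, nrm (x i) := by
  induction s using Finset.induction_on with
  | empty => simp [nrm_zero]
  | insert a s ha ih =>
    rw [Finset.sum_insert ha, Finset.sum_insert ha]
    exact (nrm_add _ _).trans (by linarith)

lemma nrm_single (n : ℤ) (r : ℝ) : nrm (AddMonoidAlgebra.single n r) = |r| := by
  rw [nrm, AddMonoidAlgebra.coeff_single, Finsupp.sum_single_index (by simp)]

lemma nrm_smul (c : ℝ) (x : ZAlg) : nrm (c • x) = |c| * nrm x := by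
  rw [nrm_eq (c • x) (s := x.coeff.support) Finsupp.support_smul, nrm_eq x subset_rfl,
    Finset.mul_sum]
  simp [abs_mul]

lemma eq_sum_single (x : ZAlg) :
    x = ∑ n ∈ x.coeff.support, AddMonoidAlgebra.single n (x.coeff n) :=
  (AddMonoidAlgebra.sum_coeff_single x).symm

lemma mul_eq_sum (x y : ZAlg) : x * y = ∑ n ∈ x.coeff.support, ∑ k ∈ y.coeff.support,
    AddMonoidAlgebra.single (n + k) (x.coeff n * y.coeff k) := by
  conv_lhs => rw [eq_sum_single x, eq_sum_single y]
  rw [Finset.sum_mul_sum]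
  simp only [AddMonoidAlgebra.single_mul_single]

lemma nrm_mul (x y : ZAlg) : nrm (x * y) ≤ nrm x * nrm y := by
  rw [mul_eq_sum, nrm_eq x subset_rfl, nrm_eq y subset_rfl, Finset.sum_mul_sum]
  refine (nrm_sum _ _).trans (Finset.sum_le_sum fun n _ => (nrm_sum _ _).trans ?_)
  exact Finset.sum_le_sum fun k _ => by rw [nrm_single, abs_mul]

/-- The total mass. -/
def tot (x : ZAlg) : ℝ := x.coeff.sum fun _ r => r

lemma tot_add (x y : ZAlg) : tot (x + y) = tot x + tot y :=
  Finsupp.sum_add_index' (by simp) (by simp)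

lemma tot_sum {ι : Type*} (s : Finset ι) (x : ι → ZAlg) :
    tot (∑ i ∈ s, x i) = ∑ i ∈ s, tot (x i) := by
  induction s using Finset.induction_on with
  | empty => simp [tot]
  | insert a s ha ih => rw [Finset.sum_insert ha, Finset.sum_insert ha, tot_add, ih]

lemma tot_single (n : ℤ) (r : ℝ) : tot (AddMonoidAlgebra.single n r) = r := by
  rw [tot, AddMonoidAlgebra.coeff_single, Finsupp.sum_single_index rfl]

lemma tot_mul (x y : ZAlg) : tot (x * y) = tot x * tot y := by
  rw [mul_eq_sum]
  simp only [tot_sum, tot_single]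
  rw [← Finset.sum_mul_sum]; rfl

/-- `x` is a probability law on `ℤ` carried by the interval `[a, b]`. -/
structure IsLaw (x : ZAlg) (a b : ℤ) : Prop where
  nonneg : ∀ n, 0 ≤ x.coeff n
  tot_one : tot x = 1
  supp : ∀ n, x.coeff n ≠ 0 → a ≤ n ∧ n ≤ b

lemma IsLaw.nrm_one {x : ZAlg} {a b : ℤ} (h : IsLaw x a b) : nrm x = 1 := by
  rw [← h.tot_one, nrm, tot]
  exact Finset.sum_congr rfl fun n _ => abs_of_nonneg (h.nonneg n)

lemma IsLaw.one : IsLaw 1 0 0 where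
  nonneg n := by
    rw [AddMonoidAlgebra.one_def, AddMonoidAlgebra.coeff_single, Finsupp.single_apply]
    split_ifs <;> simp
  tot_one := by rw [AddMonoidAlgebra.one_def, tot_single]
  supp n h := by
    rw [AddMonoidAlgebra.one_def, AddMonoidAlgebra.coeff_single, Finsupp.single_apply] at h
    split_ifs at h with h1
    · omega
    · exact absurd rfl h

lemma IsLaw.mul {x y : ZAlg} {a b a' b' : ℤ} (hx : IsLaw x a b) (hy : IsLaw y a' b') :
    IsLaw (x * y) (a + a') (b + b') where
  nonneg n := by
    rw [mul_eq_sum]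
    simp only [AddMonoidAlgebra.coeff_sum, Finsupp.coe_finsetSum, Finset.sum_apply,
      AddMonoidAlgebra.coeff_single, Finsupp.single_apply]
    refine Finset.sum_nonneg fun i _ => Finset.sum_nonneg fun j _ => ?_
    split_ifs
    · exact mul_nonneg (hx.nonneg _) (hy.nonneg _)
    · exact le_rfl
  tot_one := by rw [tot_mul, hx.tot_one, hy.tot_one, one_mul]
  supp n h := by
    rw [mul_eq_sum] at h
    simp only [AddMonoidAlgebra.coeff_sum, Finsupp.coe_finsetSum, Finset.sum_apply,
      AddMonoidAlgebra.coeff_single, Finsupp.single_apply] at h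
    obtain ⟨i, hi, h⟩ := Finset.exists_ne_zero_of_sum_ne_zero h
    obtain ⟨j, hj, h⟩ := Finset.exists_ne_zero_of_sum_ne_zero h
    have h1 := hx.supp i (Finsupp.mem_support_iff.1 hi)
    have h2 := hy.supp j (Finsupp.mem_support_iff.1 hj)
    split_ifs at h with h3
    · omega
    · exact absurd rfl h

lemma IsLaw.pow {x : ZAlg} {a b : ℤ} (hx : IsLaw x a b) (n : ℕ) : IsLaw (x ^ n) (n * a) (n * b) := by
  induction n with
  | zero => simpa using IsLaw.one
  | succ n ih =>
    have := ih.mul hx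
    rw [pow_succ]
    convert this using 1 <;> push_cast <;> ring

/-- The law of `f` under the weights `p`. -/
def lw {ι : Type*} [Fintype ι] (p : ι → ℝ) (f : ι → ℤ) : ZAlg :=
  ∑ i, AddMonoidAlgebra.single (f i) (p i)

lemma lw_coeff {ι : Type*} [Fintype ι] (p : ι → ℝ) (f : ι → ℤ) (n : ℤ) :
    (lw p f).coeff n = pm p f n := by
  simp only [lw, pm, AddMonoidAlgebra.coeff_sum, Finsupp.coe_finsetSum, Finset.sum_apply,
      AddMonoidAlgebra.coeff_single, Finsupp.single_apply]
  exact Finset.sum_congr rfl fun i _ => by split_ifs <;> rfl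

lemma nrm_lw_le {ι : Type*} [Fintype ι] (p : ι → ℝ) (f : ι → ℤ) : nrm (lw p f) ≤ ∑ i, |p i| :=
  (nrm_sum _ _).trans (Finset.sum_le_sum fun i _ => by rw [nrm_single])

lemma tot_lw {ι : Type*} [Fintype ι] (p : ι → ℝ) (f : ι → ℤ) : tot (lw p f) = ∑ i, p i := by
  rw [lw, tot_sum]; simp only [tot_single]

lemma lw_mul_lw {ι ι' : Type*} [Fintype ι] [Fintype ι'] (p : ι → ℝ) (f : ι → ℤ) (q : ι' → ℝ)
    (g : ι' → ℤ) : lw p f * lw q g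
      = lw (fun x : ι × ι' => p x.1 * q x.2) (fun x => f x.1 + g x.2) := by
  rw [lw, lw, lw, Finset.sum_mul_sum, Fintype.sum_prod_type]
  simp only [AddMonoidAlgebra.single_mul_single]

end Laws
end CPE

namespace CPE

/-! ### Random walks along an arithmetic progression of scales -/

section Core

variable {ι : Type*} [Fintype ι]

/-- Weights of the joint distribution of a uniform `k ∈ {0,…,J-1}`, an independent point of
`(ι, p)` and, given `k`, an independent integer with law `ν k`. -/
def jw (p : ι → ℝ) {J : ℕ} (ν : Fin J → ZAlg)
    (ξ : (k : Fin J) × (ι × (ν k).coeff.support)) : ℝ :=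
  (J : ℝ)⁻¹ * p ξ.2.1 * (ν ξ.1).coeff ξ.2.2

lemma sum_jw (p : ι → ℝ) {J : ℕ} (ν : Fin J → ZAlg) (hν : ∀ k, tot (ν k) = 1)
    (F : Fin J → ι → ℝ) :
    ∑ ξ, jw p ν ξ * F ξ.1 ξ.2.1 = ∑ k, ∑ i, (J : ℝ)⁻¹ * p i * F k i := by
  rw [Fintype.sum_sigma]
  refine Finset.sum_congr rfl fun k _ => ?_
  rw [Fintype.sum_prod_type]
  refine Finset.sum_congr rfl fun i _ => ?_
  simp only [jw]
  have h : ∑ r : (ν k).coeff.support, (ν k).coeff r = 1 := by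
    rw [← hν k, tot, Finsupp.sum]
    exact Finset.sum_coe_sort (ν k).coeff.support (fun r => (ν k).coeff r)
  calc ∑ r : (ν k).coeff.support, (J : ℝ)⁻¹ * p i * (ν k).coeff r * F k i
      = (J : ℝ)⁻¹ * p i * F k i * ∑ r : (ν k).coeff.support, (ν k).coeff r := by
        rw [Finset.mul_sum]; exact Finset.sum_congr rfl fun _ _ => by ring
    _ = _ := by rw [h, mul_one]

lemma jw_nonneg {ι₀ : Type*} {p : ι₀ → ℝ} (hp : ∀ i, 0 ≤ p i) {J : ℕ} {ν : Fin J → ZAlg}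
    (hν : ∀ k n, 0 ≤ (ν k).coeff n) (ξ) : 0 ≤ jw p ν ξ :=
  mul_nonneg (mul_nonneg (by positivity) (hp _)) (hν _ _)

lemma sum_jw_one {p : ι → ℝ} (h1 : ∑ i, p i = 1) {J : ℕ} (hJ : 0 < J) {ν : Fin J → ZAlg}
    (hν : ∀ k, tot (ν k) = 1) : ∑ ξ, jw p ν ξ = 1 := by
  have := sum_jw p ν hν (fun _ _ => 1)
  simp only [mul_one] at this
  rw [this]
  have hJ' : (J : ℝ) ≠ 0 := by positivity
  simp [← Finset.mul_sum, h1, hJ']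

lemma pm_jw_pair (p : ι → ℝ) {J : ℕ} (ν : Fin J → ZAlg) (hν : ∀ k, tot (ν k) = 1)
    {κ κ' : Type*} (h : Fin J → κ) (g : ι → κ') (y : κ) (a : κ') :
    pm (jw p ν) (fun ξ => (h ξ.1, g ξ.2.1)) (y, a)
      = ((J : ℝ)⁻¹ * (Finset.univ.filter fun k => h k = y).card) * pm p g a := by
  have := sum_jw p ν hν (fun k i => if (h k, g i) = (y, a) then 1 else 0)
  simp only [mul_ite, mul_one, mul_zero] at this
  refine Eq.trans (Finset.sum_congr rfl fun ξ _ => by split_ifs <;> rfl) (this.trans ?_)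
  simp only [pm, Prod.mk.injEq, Finset.card_filter]
  push_cast
  rw [Finset.mul_sum _ _ (J : ℝ)⁻¹, Finset.sum_mul_sum]
  refine Finset.sum_congr rfl fun k _ => Finset.sum_congr rfl fun i _ => ?_
  by_cases h1 : h k = y <;> by_cases h2 : g i = a <;> simp [h1, h2]

lemma Ent_jw_pair {p : ι → ℝ} (hp : ∀ i, 0 ≤ p i) (h1 : ∑ i, p i = 1) {J : ℕ} (hJ : 0 < J)
    (ν : Fin J → ZAlg) (hν : ∀ k, tot (ν k) = 1) {κ' : Type*} (g : ι → κ') :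
    Ent (jw p ν) (fun ξ => (ξ.1, g ξ.2.1)) = Ent p g + Real.log J := by
  have hJ' : (J : ℝ) ≠ 0 := by positivity
  rw [Ent]
  have e : ∀ ξ : (k : Fin J) × (ι × (ν k).coeff.support),
      pm (jw p ν) (fun ξ => (ξ.1, g ξ.2.1)) (ξ.1, g ξ.2.1) = (J : ℝ)⁻¹ * pm p g (g ξ.2.1) := by
    intro ξ
    have key : ∀ n : ℕ, n = 1 → (J : ℝ)⁻¹ * n * pm p g (g ξ.2.1) = (J : ℝ)⁻¹ * pm p g (g ξ.2.1) := by
      rintro _ rfl; simp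
    rw [pm_jw_pair p ν hν (fun k => k) g]
    exact key _ (Finset.card_eq_one.2 ⟨ξ.1, by ext; simp⟩)
  simp only [e]
  rw [sum_jw p ν hν (fun _ i => -Real.log ((J : ℝ)⁻¹ * pm p g (g i)))]
  rw [Finset.sum_const, Finset.card_univ, Fintype.card_fin, nsmul_eq_mul, Finset.mul_sum]
  calc _ = ∑ i, (p i * (-Real.log (pm p g (g i))) + p i * Real.log J) := by
        refine Finset.sum_congr rfl fun i _ => ?_
        by_cases hi : p i = 0
        · simp [hi]
        · rw [Real.log_mul (inv_ne_zero hJ') (pm_pos hp g hi).ne', Real.log_inv]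
          field_simp
          ring
    _ = _ := by rw [Finset.sum_add_distrib, ← Finset.sum_mul, h1, one_mul, Ent]

lemma lw_mul_coeff (p : ι → ℝ) (A : ι → ℤ) (y : ZAlg) (x : ℤ) :
    (lw p A * y).coeff x
      = ∑ i, ∑ r : y.coeff.support, if A i + r = x then p i * y.coeff r else 0 := by
  conv_lhs => rw [eq_sum_single y, lw, Finset.sum_mul_sum]
  simp only [AddMonoidAlgebra.single_mul_single, AddMonoidAlgebra.coeff_sum,
    Finsupp.coe_finsetSum, Finset.sum_apply, AddMonoidAlgebra.coeff_single, Finsupp.single_apply]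
  refine Finset.sum_congr rfl fun i _ => ?_
  rw [← Finset.sum_coe_sort y.coeff.support]

lemma pm_jw_X (p : ι → ℝ) (A : ι → ℤ) {J : ℕ} (ν : Fin J → ZAlg) (x : ℤ) (k : Fin J) :
    pm (jw p ν) (fun ξ => (A ξ.2.1 + ξ.2.2, ξ.1)) (x, k)
      = (J : ℝ)⁻¹ * (lw p A * ν k).coeff x := by
  rw [lw_mul_coeff, pm, Fintype.sum_sigma, Finset.sum_eq_single k]
  · rw [Fintype.sum_prod_type, Finset.mul_sum]
    refine Finset.sum_congr rfl fun i _ => ?_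
    rw [Finset.mul_sum]
    refine Finset.sum_congr rfl fun r _ => ?_
    simp only [Prod.mk.injEq, and_true, jw]
    split_ifs <;> ring
  · intro b _ hb
    simp [hb]
  · simp

/-- The mutual information between `k` and `X = A + N` is small if the conditional laws of `X`
given `k` are close to one another. -/
lemma info_jw {p : ι → ℝ} (hp : ∀ i, 0 ≤ p i) (h1 : ∑ i, p i = 1) (A : ι → ℤ) {J : ℕ}
    (hJ : 0 < J) (ν : Fin J → ZAlg) (hν : ∀ k, tot (ν k) = 1) (hν0 : ∀ k n, 0 ≤ (ν k).coeff n)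
    {ε : ℝ} (hε : ∀ k k', nrm (lw p A * ν k - lw p A * ν k') ≤ ε) :
    Ent (jw p ν) (fun ξ => A ξ.2.1 + (ξ.2.2 : ℤ)) + Real.log J
      ≤ Ent (jw p ν) (fun ξ => (A ξ.2.1 + (ξ.2.2 : ℤ), ξ.1)) + J * ε := by
  have hJ' : (0 : ℝ) < J := by positivity
  have hw := jw_nonneg hp hν0
  have hw1 := sum_jw_one h1 hJ hν
  set w := jw p ν with hwdef
  set X : (k : Fin J) × (ι × (ν k).coeff.support) → ℤ := fun ξ => A ξ.2.1 + (ξ.2.2 : ℤ) with hX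
  set Xk : (k : Fin J) × (ι × (ν k).coeff.support) → ℤ × Fin J := fun ξ => (X ξ, ξ.1) with hXk
  let pk : Fin J → ℤ → ℝ := fun k x => (lw p A * ν k).coeff x
  have hpm : ∀ x k, pm w Xk (x, k) = (J : ℝ)⁻¹ * pk k x := fun x k => pm_jw_X p A ν x k
  have hpk0 : ∀ k x, 0 ≤ pk k x := fun k x => by
    have := pm_nonneg hw Xk (x, k)
    rw [hpm] at this
    exact nonneg_of_mul_nonneg_right this (by positivity)
  have hpmX : ∀ x, pm w X x = (J : ℝ)⁻¹ * ∑ k, pk k x := by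
    intro x
    rw [Finset.mul_sum]
    simp only [← hpm, pm]
    rw [Finset.sum_comm]
    refine Finset.sum_congr rfl fun ξ _ => ?_
    simp only [hXk, Prod.mk.injEq]
    by_cases h : X ξ = x <;> simp [h]
  let S : Finset (ℤ × Fin J) := (Finset.univ.image X) ×ˢ Finset.univ
  have hS : ∀ ξ, Xk ξ ∈ S := fun ξ => by simp [S, hXk]
  have step1 : Ent w X + Real.log J - Ent w Xk
      ≤ ∑ ξ, w ξ * (pk (Xk ξ).2 (Xk ξ).1 / ((J : ℝ)⁻¹ * ∑ k, pk k (Xk ξ).1) - 1) := by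
    have : Real.log J = ∑ ξ, w ξ * Real.log J := by rw [← Finset.sum_mul, hw1, one_mul]
    rw [this, Ent, Ent, ← Finset.sum_add_distrib, ← Finset.sum_sub_distrib]
    refine Finset.sum_le_sum fun ξ _ => ?_
    by_cases hξ : w ξ = 0
    · simp [hξ]
    have a := pm_pos hw X hξ
    have b := pm_pos hw Xk hξ
    have b' : pm w Xk (Xk ξ) = (J : ℝ)⁻¹ * pk (Xk ξ).2 (Xk ξ).1 := hpm _ _
    have a' := hpmX (X ξ)
    have a'' : (Xk ξ).1 = X ξ := rfl
    have b'' : pk (Xk ξ).2 (Xk ξ).1 = J * pm w Xk (Xk ξ) := by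
      rw [b']; field_simp
    rw [b'', a'', ← a']
    have := Real.log_le_sub_one_of_pos (div_pos (mul_pos hJ' b) a)
    rw [Real.log_div (mul_pos hJ' b).ne' a.ne', Real.log_mul hJ'.ne' b.ne'] at this
    have := mul_le_mul_of_nonneg_left this (hw ξ)
    linarith
  have step2 : ∑ ξ, w ξ * (pk (Xk ξ).2 (Xk ξ).1 / ((J : ℝ)⁻¹ * ∑ k, pk k (Xk ξ).1) - 1)
      ≤ ∑ z ∈ S, |pk z.2 z.1 - (J : ℝ)⁻¹ * ∑ k, pk k z.1| := by
    rw [sum_fiber w Xk (fun z => pk z.2 z.1 / ((J : ℝ)⁻¹ * ∑ k, pk k z.1) - 1) hS]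
    refine Finset.sum_le_sum fun z _ => ?_
    obtain ⟨x, k⟩ := z
    rw [hpm]
    simp only
    set v := (J : ℝ)⁻¹ * ∑ k, pk k x with hv
    have hle : (J : ℝ)⁻¹ * pk k x ≤ v := by
      rw [hv]
      refine mul_le_mul_of_nonneg_left ?_ (by positivity)
      exact Finset.single_le_sum (f := fun k => pk k x) (fun k _ => hpk0 k x) (Finset.mem_univ k)
    have h0 : 0 ≤ (J : ℝ)⁻¹ * pk k x := mul_nonneg (by positivity) (hpk0 k x)
    rcases (h0.trans hle).eq_or_lt with hv0 | hv0
    · have : (J : ℝ)⁻¹ * pk k x = 0 := le_antisymm (hle.trans hv0.symm.le) h0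
      rw [this, zero_mul]; exact abs_nonneg _
    · calc (J : ℝ)⁻¹ * pk k x * (pk k x / v - 1)
          = ((J : ℝ)⁻¹ * pk k x / v) * (pk k x - v) := by field_simp
        _ ≤ ((J : ℝ)⁻¹ * pk k x / v) * |pk k x - v| :=
            mul_le_mul_of_nonneg_left (le_abs_self _) (by positivity)
        _ ≤ 1 * |pk k x - v| :=
            mul_le_mul_of_nonneg_right ((div_le_one hv0).2 hle) (abs_nonneg _)
        _ = _ := one_mul _
  have step3 : ∑ z ∈ S, |pk z.2 z.1 - (J : ℝ)⁻¹ * ∑ k, pk k z.1| ≤ J * ε := by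
    rw [Finset.sum_product_right]
    have : ∀ k : Fin J, ∑ x ∈ Finset.univ.image X, |pk k x - (J : ℝ)⁻¹ * ∑ k', pk k' x| ≤ ε := by
      intro k
      calc _ ≤ ∑ x ∈ Finset.univ.image X, (J : ℝ)⁻¹ * ∑ k', |pk k x - pk k' x| := by
            refine Finset.sum_le_sum fun x _ => ?_
            have : pk k x - (J : ℝ)⁻¹ * ∑ k', pk k' x
                = (J : ℝ)⁻¹ * ∑ k', (pk k x - pk k' x) := by
              rw [Finset.sum_sub_distrib, Finset.sum_const, Finset.card_univ, Fintype.card_fin,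
                nsmul_eq_mul, mul_sub]
              field_simp
            rw [this, abs_mul, abs_of_pos (inv_pos.2 hJ')]
            exact mul_le_mul_of_nonneg_left (Finset.abs_sum_le_sum_abs _ _) (by positivity)
        _ = (J : ℝ)⁻¹ * ∑ k', ∑ x ∈ Finset.univ.image X, |pk k x - pk k' x| := by
            rw [← Finset.mul_sum, Finset.sum_comm]
        _ ≤ (J : ℝ)⁻¹ * ∑ k' : Fin J, ε := by
            refine mul_le_mul_of_nonneg_left (Finset.sum_le_sum fun k' _ => ?_) (by positivity)
            refine le_trans ?_ (hε k k')
            refine le_trans (le_of_eq ?_) (sum_abs_le_nrm _ (Finset.univ.image X))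
            exact Finset.sum_congr rfl fun x _ => by simp [pk]
        _ = ε := by simp; field_simp
    calc _ ≤ ∑ k : Fin J, ε := Finset.sum_le_sum fun k _ => this k
      _ = J * ε := by simp
  linarith

end Core
end CPE

namespace CPE

/-! ### Entropy gain of a walk with displaced steps -/

section CoreLemma

variable {ι : Type*} [Fintype ι]

lemma abs_sub_lt_of_div_eq {P x y : ℤ} (hP : 0 < P) (h : x / P = y / P) : |x - y| < P := by
  have h1 := Int.mul_ediv_add_emod x P
  have h2 := Int.mul_ediv_add_emod y P
  have h3 := Int.emod_nonneg x hP.ne'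
  have h4 := Int.emod_lt_of_pos x hP
  have h5 := Int.emod_nonneg y hP.ne'
  have h6 := Int.emod_lt_of_pos y hP
  rw [h] at h1
  rw [abs_lt]; constructor <;> linarith

lemma abs_div_sub_div_le {P x y : ℤ} (hP : 0 < P) {r : ℤ} (h : |x - y| ≤ r * P) :
    |x / P - y / P| ≤ r := by
  have h1 := Int.mul_ediv_add_emod x P
  have h2 := Int.mul_ediv_add_emod y P
  have h3 := Int.emod_nonneg x hP.ne'
  have h4 := Int.emod_lt_of_pos x hP
  have h5 := Int.emod_nonneg y hP.ne'
  have h6 := Int.emod_lt_of_pos y hP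
  rw [abs_le] at h ⊢
  constructor
  · by_contra hc
    have : x / P - y / P ≤ -r - 1 := by omega
    nlinarith
  · by_contra hc
    have : r + 1 ≤ x / P - y / P := by omega
    nlinarith

/-- A progression of step `d` has at most `P/d + 1` terms in a cell of length `P`. -/
lemma ap_count {J : ℕ} (c₀ : ℤ) {d P : ℤ} (hd : 0 < d) (hP : 0 < P) (y : ℤ) :
    ((Finset.univ.filter fun k : Fin J => (c₀ + k * d) / P = y).card : ℝ) ≤ P / d + 1 := by
  have hdR : (0 : ℝ) < d := by exact_mod_cast hd
  have hPR : (0 : ℝ) < P := by exact_mod_cast hP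
  by_cases hne : (Finset.univ.filter fun k : Fin J => (c₀ + k * d) / P = y).Nonempty
  · obtain ⟨k₀, hk₀, hmin⟩ := Finset.exists_min_image _ (fun k : Fin J => (k : ℕ)) hne
    have hsub : ((Finset.univ.filter fun k : Fin J => (c₀ + k * d) / P = y).image
        (fun k : Fin J => (k : ℕ))) ⊆ Finset.Icc (k₀ : ℕ) (k₀ + ⌊(P : ℝ) / d⌋₊) := by
      intro n hn
      obtain ⟨k, hk, rfl⟩ := Finset.mem_image.1 hn
      have hle : (k₀ : ℕ) ≤ k := hmin k hk
      rw [Finset.mem_Icc]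
      refine ⟨hle, ?_⟩
      have e : (c₀ + k * d) / P = (c₀ + k₀ * d) / P := by
        rw [(Finset.mem_filter.1 hk).2, (Finset.mem_filter.1 hk₀).2]
      have h3 := (abs_lt.1 (abs_sub_lt_of_div_eq hP e)).2
      have h4 : ((k : ℤ) - k₀) * d < P := by linarith
      have h5 : ((k : ℝ) - k₀) * d < P := by exact_mod_cast h4
      have h6 : ((k - k₀ : ℕ) : ℝ) ≤ (P : ℝ) / d := by
        rw [Nat.cast_sub hle, le_div_iff₀ hdR]; exact h5.le
      have := Nat.le_floor h6
      omega
    have h7 := Finset.card_le_card hsub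
    rw [Finset.card_image_of_injective _ Fin.val_injective, Nat.card_Icc] at h7
    have h8 : (⌊(P : ℝ) / d⌋₊ : ℝ) ≤ (P : ℝ) / d := Nat.floor_le (by positivity)
    have h9 : (Finset.univ.filter fun k : Fin J => (c₀ + k * d) / P = y).card
        ≤ ⌊(P : ℝ) / d⌋₊ + 1 := by omega
    have h10 : ((Finset.univ.filter fun k : Fin J => (c₀ + k * d) / P = y).card : ℝ)
        ≤ ⌊(P : ℝ) / d⌋₊ + 1 := by exact_mod_cast h9
    linarith
  · rw [Finset.not_nonempty_iff_eq_empty.1 hne]; simp; positivity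

/-- An interval of length `L` meets at most `L/Q + 2` cells of length `Q`. -/
lemma card_cells {c₀ L Q : ℤ} (hL : 0 ≤ L) (hQ : 0 < Q) :
    ((Finset.Icc (c₀ / Q) ((c₀ + L) / Q)).card : ℝ) ≤ L / Q + 2 := by
  have hQR : (0 : ℝ) < Q := by exact_mod_cast hQ
  rw [Int.card_Icc]
  have hnn : 0 ≤ (c₀ + L) / Q + 1 - c₀ / Q := by
    have : c₀ / Q ≤ (c₀ + L) / Q := Int.ediv_le_ediv hQ (by linarith)
    omega
  have e1 : (((c₀ + L) / Q + 1 - c₀ / Q).toNat : ℝ) = (((c₀ + L) / Q + 1 - c₀ / Q : ℤ) : ℝ) := by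
    exact_mod_cast congrArg (Int.cast (R := ℝ)) (Int.toNat_of_nonneg hnn)
  rw [e1]
  have b1 := Int.ediv_mul_le (c₀ + L) hQ.ne'
  have b2 := Int.lt_ediv_add_one_mul_self c₀ hQ
  have b3 : ((c₀ + L) / Q - c₀ / Q - 1) * Q < L := by linarith
  have b4 : ((((c₀ + L) / Q - c₀ / Q - 1 : ℤ)) : ℝ) * Q < L := by exact_mod_cast b3
  have b5 : ((((c₀ + L) / Q - c₀ / Q - 1 : ℤ)) : ℝ) ≤ L / Q := by
    rw [le_div_iff₀ hQR]; exact b4.le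
  push_cast at b5 ⊢
  linarith

lemma pm_jw_pair_le {p : ι → ℝ} (hp : ∀ i, 0 ≤ p i) {J : ℕ} (ν : Fin J → ZAlg)
    (hν : ∀ k, tot (ν k) = 1) {κ κ' : Type*} [dec : DecidableEq κ] (h : Fin J → κ) (g : ι → κ')
    {y : κ} {N : ℝ} (hN : ((Finset.univ.filter fun k => h k = y).card : ℝ) ≤ N) (a : κ') :
    pm (jw p ν) (fun ξ => (h ξ.1, g ξ.2.1)) (y, a) ≤ ((J : ℝ)⁻¹ * N) * pm p g a := by
  rw [pm_jw_pair p ν hν h g y a]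
  refine mul_le_mul_of_nonneg_right (mul_le_mul_of_nonneg_left ?_ (by positivity))
    (pm_nonneg hp g a)
  refine le_trans (le_of_eq ?_) hN
  congr!

set_option maxHeartbeats 400000 in
/-- **Entropy gain of a walk along two displaced laws.** Let `μ₀, μ₁` be laws on intervals of
length `ℓ` whose left end points differ by `d` with `K ℓ ≤ d ≤ J ℓ`. If adding `μ₀` or `μ₁` to
the law of `A` gives nearly the same result, then so do the convolutions with
`μ₀^{J-1-k} μ₁^k`, `0 ≤ k < J`. These live near an arithmetic progression of step `d`, which
forces `A` to have almost full entropy between the scales `J ℓ` and `K J ℓ`. -/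
theorem core {p : ι → ℝ} (hp : ∀ i, 0 ≤ p i) (h1 : ∑ i, p i = 1) (A : ι → ℤ) {J K ℓ : ℕ}
    (hJ : 0 < J) (hK : 0 < K) (hℓ : 0 < ℓ) {μ₀ μ₁ : ZAlg} {a₀ a₁ : ℤ}
    (hμ₀ : IsLaw μ₀ a₀ (a₀ + (ℓ - 1))) (hμ₁ : IsLaw μ₁ a₁ (a₁ + (ℓ - 1)))
    (hd1 : (K * ℓ : ℤ) ≤ a₁ - a₀) (hd2 : a₁ - a₀ ≤ J * ℓ) :
    Real.log K - (Real.log 6 + 4 * Real.log 5) - J ^ 2 * nrm (lw p A * (μ₀ - μ₁))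
      ≤ Ent p (fun i => A i / ((J * ℓ : ℕ) : ℤ)) - Ent p (fun i => A i / ((K * (J * ℓ) : ℕ) : ℤ)) := by
  set δ := nrm (lw p A * (μ₀ - μ₁)) with hδ
  have hδ0 : 0 ≤ δ := Finset.sum_nonneg fun _ _ => abs_nonneg _
  let νn : ℕ → ZAlg := fun n => μ₀ ^ (J - 1 - n) * μ₁ ^ n
  let ν : Fin J → ZAlg := fun k => νn k
  set d := a₁ - a₀ with hd
  let c : Fin J → ℤ := fun k => (J - 1 : ℤ) * a₀ + k * d
  set P : ℤ := ((J * ℓ : ℕ) : ℤ) with hP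
  set Q : ℤ := ((K * (J * ℓ) : ℕ) : ℤ) with hQ
  have hPpos : 0 < P := by rw [hP]; exact_mod_cast Nat.mul_pos hJ hℓ
  have hQpos : 0 < Q := by rw [hQ]; exact_mod_cast Nat.mul_pos hK (Nat.mul_pos hJ hℓ)
  have hQP : Q = P * K := by rw [hP, hQ]; push_cast; ring
  have hPQ : P ≤ Q := by rw [hQP]; nlinarith [show (1 : ℤ) ≤ K by exact_mod_cast hK]
  have hdpos : 0 < d := lt_of_lt_of_le (by positivity) hd1
  have hlaw : ∀ k, IsLaw (ν k) (c k) (c k + (P - 1)) := by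
    intro k
    have h := (hμ₀.pow (J - 1 - k)).mul (hμ₁.pow k)
    have hk : (k : ℕ) ≤ J - 1 := by have := k.2; omega
    have e : ((J - 1 - k : ℕ) : ℤ) = J - 1 - k := by omega
    refine ⟨h.nonneg, h.tot_one, fun n hn => ?_⟩
    have h2 := h.supp n hn
    rw [e] at h2
    simp only [c, hP, hd]
    push_cast
    have hk0 : (0 : ℤ) ≤ k := by positivity
    have hℓ1 : (1 : ℤ) ≤ ℓ := by exact_mod_cast hℓ
    have hJ1 : (1 : ℤ) ≤ J := by exact_mod_cast hJ
    constructor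
    · linarith [h2.1]
    · nlinarith [h2.2]
  have hν0 : ∀ k n, 0 ≤ (ν k).coeff n := fun k => (hlaw k).nonneg
  have hν : ∀ k, tot (ν k) = 1 := fun k => (hlaw k).tot_one
  -- one exchange of a factor changes the convolution by at most `δ`
  have hstep : ∀ n, n + 1 ≤ J - 1 → nrm (lw p A * νn n - lw p A * νn (n + 1)) ≤ δ := by
    intro n hn
    obtain ⟨q, hq⟩ : ∃ q, J - 1 = n + 1 + q := ⟨J - 1 - (n + 1), by omega⟩
    have e1 : J - 1 - n = q + 1 := by omega
    have e2 : J - 1 - (n + 1) = q := by omega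
    have : lw p A * νn n - lw p A * νn (n + 1)
        = (lw p A * (μ₀ - μ₁)) * (μ₀ ^ q * μ₁ ^ n) := by
      simp only [νn, e1, e2]; ring
    rw [this]
    refine (nrm_mul _ _).trans ?_
    rw [((hμ₀.pow q).mul (hμ₁.pow n)).nrm_one, mul_one]
  have hmulti : ∀ n q, n + q ≤ J - 1 → nrm (lw p A * νn n - lw p A * νn (n + q)) ≤ q * δ := by
    intro n q
    induction q with
    | zero => intro _; simp [nrm_zero]
    | succ q ih =>
      intro h
      have a := ih (by omega)
      have b := hstep (n + q) (by omega)
      have e : lw p A * νn n - lw p A * νn (n + (q + 1))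
        = (lw p A * νn n - lw p A * νn (n + q))
          + (lw p A * νn (n + q) - lw p A * νn (n + q + 1)) := by
        rw [← add_assoc]; ring
      rw [e]
      refine (nrm_add _ _).trans ?_
      push_cast; linarith
  have hε : ∀ k k', nrm (lw p A * ν k - lw p A * ν k') ≤ J * δ := by
    have main : ∀ k k' : Fin J, (k : ℕ) ≤ k' → nrm (lw p A * ν k - lw p A * ν k') ≤ J * δ := by
      intro k k' hkk
      obtain ⟨q, hq⟩ := Nat.exists_eq_add_of_le hkk
      have := k'.2
      have h := hmulti k q (by omega)
      rw [← hq] at h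
      refine h.trans (mul_le_mul_of_nonneg_right ?_ hδ0)
      exact_mod_cast (by omega : q ≤ J)
    intro k k'
    rcases le_total (k : ℕ) k' with h | h
    · exact main k k' h
    · rw [← neg_sub, nrm_neg]; exact main k' k h
  have hinfo := info_jw hp h1 A hJ ν hν hν0 hε
  have hw := jw_nonneg hp hν0
  have hw1 := sum_jw_one h1 hJ hν
  have eP := Ent_jw_pair hp h1 hJ ν hν (fun i => A i / P)
  have eQ := Ent_jw_pair hp h1 hJ ν hν (fun i => A i / Q)
  have eA := pm_jw_pair p ν hν (fun _ => ()) A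
  set w := jw p ν with hwdef
  let X : (k : Fin J) × (ι × (ν k).coeff.support) → ℤ := fun ξ => A ξ.2.1 + (ξ.2.2 : ℤ)
  let a : (k : Fin J) × (ι × (ν k).coeff.support) → ℤ := fun ξ => A ξ.2.1
  let Y : (k : Fin J) × (ι × (ν k).coeff.support) → ℤ := fun ξ => c ξ.1
  let kk : (k : Fin J) × (ι × (ν k).coeff.support) → Fin J := fun ξ => ξ.1
  have hXY : ∀ ξ, 0 ≤ X ξ - a ξ - Y ξ ∧ X ξ - a ξ - Y ξ ≤ P - 1 := by
    intro ξ
    have := (hlaw ξ.1).supp ξ.2.2 (Finsupp.mem_support_iff.1 ξ.2.2.2)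
    simp only [X, a, Y]; omega
  have hdiv : ∀ x y : ℤ, x / P = y / P → x / Q = y / Q := by
    intro x y h
    rw [hQP, ← Int.ediv_ediv_of_nonneg hPpos.le, ← Int.ediv_ediv_of_nonneg hPpos.le, h]
  -- conditionally on `k`, the variables `X` and `A` agree up to a bounded number of cells
  have i1 : Ent w (fun ξ => (X ξ / P, kk ξ)) ≤ Ent w (fun ξ => (a ξ / P, kk ξ)) + Real.log 5 := by
    have := Ent_le_osc hw hw1 (fun ξ => X ξ / P) (fun ξ => a ξ / P) kk 2 (by
      intro i j h1 h2
      have hY : Y i = Y j := congrArg c h2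
      have h3 := abs_lt.1 (abs_sub_lt_of_div_eq hPpos h1)
      have h4 := hXY i; have h5 := hXY j
      refine abs_div_sub_div_le hPpos (abs_le.2 ?_)
      push_cast
      constructor <;> linarith)
    norm_num at this ⊢; exact this
  have i2 : Ent w (fun ξ => (a ξ / Q, kk ξ)) ≤ Ent w (fun ξ => (X ξ / Q, kk ξ)) + Real.log 5 := by
    have := Ent_le_osc hw hw1 (fun ξ => a ξ / Q) (fun ξ => X ξ / Q) kk 2 (by
      intro i j h1 h2
      have hY : Y i = Y j := congrArg c h2
      have h3 := abs_lt.1 (abs_sub_lt_of_div_eq hQpos h1)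
      have h4 := hXY i; have h5 := hXY j
      refine abs_div_sub_div_le hQpos (abs_le.2 ?_)
      push_cast
      constructor <;> linarith)
    norm_num at this ⊢; exact this
  -- conditionally on `A`, the variables `X` and `Y` agree up to a bounded number of cells
  have i3 : Ent w (fun ξ => (Y ξ / P, a ξ)) ≤ Ent w (fun ξ => (X ξ / P, a ξ)) + Real.log 5 := by
    have := Ent_le_osc hw hw1 (fun ξ => Y ξ / P) (fun ξ => X ξ / P) a 2 (by
      intro i j h1 h2
      have h3 := abs_lt.1 (abs_sub_lt_of_div_eq hPpos h1)
      have h4 := hXY i; have h5 := hXY j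
      refine abs_div_sub_div_le hPpos (abs_le.2 ?_)
      push_cast
      constructor <;> linarith)
    norm_num at this ⊢; exact this
  have i4 : Ent w (fun ξ => (X ξ / Q, a ξ)) ≤ Ent w (fun ξ => (Y ξ / Q, a ξ)) + Real.log 5 := by
    have := Ent_le_osc hw hw1 (fun ξ => X ξ / Q) (fun ξ => Y ξ / Q) a 2 (by
      intro i j h1 h2
      have h3 := abs_lt.1 (abs_sub_lt_of_div_eq hQpos h1)
      have h4 := hXY i; have h5 := hXY j
      refine abs_div_sub_div_le hQpos (abs_le.2 ?_)
      push_cast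
      constructor <;> linarith)
    norm_num at this ⊢; exact this
  have i5 : Ent w (fun ξ => (X ξ, kk ξ)) + Ent w (fun ξ => X ξ / P)
      ≤ Ent w X + Ent w (fun ξ => (X ξ / P, kk ξ)) := by
    have := Ent_submod hw X kk (fun ξ => X ξ / P)
    rw [Ent_congr (f := fun ξ => (X ξ, kk ξ, X ξ / P)) (g := fun ξ => (X ξ, kk ξ))
        (by intro i j; simp only [Prod.mk.injEq]; constructor
            · rintro ⟨a, b, _⟩; exact ⟨a, b⟩
            · rintro ⟨a, b⟩; exact ⟨a, b, by rw [a]⟩),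
      Ent_congr (f := fun ξ => (X ξ, X ξ / P)) (g := X)
        (by intro i j; simp only [Prod.mk.injEq]; constructor
            · exact fun h => h.1
            · intro h; exact ⟨h, by rw [h]⟩),
      Ent_congr (f := fun ξ => (kk ξ, X ξ / P)) (g := fun ξ => (X ξ / P, kk ξ))
        (by intro i j; simp only [Prod.mk.injEq]; exact and_comm)] at this
    exact this
  have i6 : Ent w (fun ξ => (X ξ / Q, kk ξ)) ≤ Ent w (fun ξ => X ξ / Q) + Real.log J := by
    have := Ent_card hw hw1 kk (fun ξ => X ξ / Q) (N := J) (by positivity)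
      (fun _ => Finset.univ) (by simp) (by simp)
    rw [Ent_congr (f := fun ξ => (X ξ / Q, kk ξ)) (g := fun ξ => (kk ξ, X ξ / Q))
        (by intro i j; simp only [Prod.mk.injEq]; exact and_comm)]
    exact this
  have i7 : Ent w (fun ξ => (X ξ / P, a ξ)) + Ent w (fun ξ => X ξ / Q)
      ≤ Ent w (fun ξ => X ξ / P) + Ent w (fun ξ => (X ξ / Q, a ξ)) := by
    have := Ent_submod hw (fun ξ => X ξ / P) a (fun ξ => X ξ / Q)
    rw [Ent_congr (f := fun ξ => (X ξ / P, a ξ, X ξ / Q)) (g := fun ξ => (X ξ / P, a ξ))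
        (by intro i j; simp only [Prod.mk.injEq]; constructor
            · rintro ⟨a, b, _⟩; exact ⟨a, b⟩
            · rintro ⟨a, b⟩; exact ⟨a, b, hdiv _ _ a⟩),
      Ent_congr (f := fun ξ => (X ξ / P, X ξ / Q)) (g := fun ξ => X ξ / P)
        (by intro i j; simp only [Prod.mk.injEq]; constructor
            · exact fun h => h.1
            · intro h; exact ⟨h, hdiv _ _ h⟩),
      Ent_congr (f := fun ξ => (a ξ, X ξ / Q)) (g := fun ξ => (X ξ / Q, a ξ))
        (by intro i j; simp only [Prod.mk.injEq]; exact and_comm)] at this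
    exact this
  have comm : ∀ R : ℤ, Ent w (fun ξ => (ξ.1, A ξ.2.1 / R)) = Ent w (fun ξ => (a ξ / R, kk ξ)) :=
    fun R => Ent_congr (by intro i j; simp only [Prod.mk.injEq, a, kk]; exact and_comm)
  rw [comm] at eP eQ
  have hdR : (0 : ℝ) < d := by exact_mod_cast hdpos
  have hJR : (0 : ℝ) < J := by exact_mod_cast hJ
  have hKR : (0 : ℝ) < K := by exact_mod_cast hK
  have hℓR : (0 : ℝ) < ℓ := by exact_mod_cast hℓ
  have hd2R : (d : ℝ) ≤ J * ℓ := by exact_mod_cast hd2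
  have hd1R : (K * ℓ : ℝ) ≤ d := by exact_mod_cast hd1
  -- the progression `c` visits each cell of length `P` at most `2P/d` times
  have hcount : ∀ y, ((Finset.univ.filter fun k => c k / P = y).card : ℝ) ≤ 2 * (J * ℓ) / d := by
    intro y
    have h2 : ((Finset.univ.filter fun k => c k / P = y).card : ℝ) ≤ (J * ℓ) / d + 1 := by
      have := ap_count (J := J) ((J - 1 : ℤ) * a₀) hdpos hPpos y
      have hPe : (P : ℝ) = J * ℓ := by rw [hP]; push_cast; ring
      rwa [hPe] at this
    have h3 : (1 : ℝ) ≤ (J * ℓ) / d := (one_le_div hdR).2 hd2R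
    have h4 : 2 * (J * ℓ) / (d : ℝ) = (J * ℓ) / d + (J * ℓ) / d := by ring
    linarith
  have i8 : Ent w a + Real.log (d / (2 * ℓ)) ≤ Ent w (fun ξ => (Y ξ / P, a ξ)) := by
    have : Real.log (d / (2 * ℓ)) = ∑ ξ, w ξ * Real.log (d / (2 * ℓ)) := by
      rw [← Finset.sum_mul, hw1, one_mul]
    rw [this, Ent, Ent, ← Finset.sum_add_distrib]
    refine Finset.sum_le_sum fun ξ _ => ?_
    rw [← mul_add]
    by_cases hξ : w ξ = 0
    · simp [hξ]
    refine mul_le_mul_of_nonneg_left ?_ (hw ξ)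
    have q1 := pm_pos hw a hξ
    have q2 := pm_pos hw (fun ξ => (Y ξ / P, a ξ)) hξ
    have e1 : pm w a (a ξ) = pm p A (a ξ) := by
      have := eA () (a ξ)
      rw [pm_congr w (f := a) (g := fun ξ => ((), A ξ.2.1)) (l := ((), a ξ)) (by simp [a]), this]
      have hJne : (J : ℝ) ≠ 0 := hJR.ne'
      simp [hJne]
    have e2 : pm w (fun ξ => (Y ξ / P, a ξ)) (Y ξ / P, a ξ) ≤ (2 * ℓ / d) * pm w a (a ξ) := by
      have := pm_jw_pair_le hp ν hν (fun k => c k / P) A (hcount (Y ξ / P)) (a ξ)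
      rw [e1]
      refine this.trans (le_of_eq ?_)
      have hJne : (J : ℝ) ≠ 0 := hJR.ne'
      field_simp
    have e3 := Real.log_le_log q2 e2
    rw [Real.log_mul (by positivity) q1.ne'] at e3
    have e4 : Real.log (2 * ℓ / d) = - Real.log (d / (2 * ℓ)) := by
      rw [← Real.log_inv, inv_div]
    linarith
  -- the progression `c` visits at most `3 d / (K ℓ)` cells of length `Q`
  have i9 : Ent w (fun ξ => (Y ξ / Q, a ξ)) ≤ Ent w a + Real.log (3 * d / (K * ℓ)) := by
    set c0 : ℤ := (J - 1 : ℤ) * a₀ with hc0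
    refine Ent_card hw hw1 (fun ξ => Y ξ / Q) a (by positivity)
      (fun _ => Finset.Icc (c0 / Q) ((c0 + (J - 1) * d) / Q)) ?_ ?_
    · intro ξ
      have h2 := ξ.1.2
      have h3 : ((ξ.1 : ℕ) : ℤ) ≤ J - 1 := by omega
      rw [Finset.mem_Icc]
      constructor
      · refine Int.ediv_le_ediv hQpos ?_
        simp only [Y, c, ← hc0]; nlinarith [show (0 : ℤ) ≤ ((ξ.1 : ℕ) : ℤ) by positivity]
      · refine Int.ediv_le_ediv hQpos ?_
        simp only [Y, c, ← hc0]; nlinarith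
    · intro _
      have hQR : (0 : ℝ) < Q := by exact_mod_cast hQpos
      have hQe : (Q : ℝ) = K * (J * ℓ) := by rw [hQ]; push_cast; ring
      have b5 := card_cells (c₀ := c0) (L := (J - 1) * d) (Q := Q)
        (mul_nonneg (by have : (1 : ℤ) ≤ J := by exact_mod_cast hJ
                        linarith) hdpos.le) hQpos
      have b4 : (((J - 1) * d : ℤ) : ℝ) / Q ≤ d / (K * ℓ) := by
        rw [hQe, div_le_div_iff₀ (by positivity) (by positivity)]
        push_cast
        nlinarith [mul_pos hdR (mul_pos hKR hℓR)]
      have b6 : (1 : ℝ) ≤ d / (K * ℓ) := (one_le_div (by positivity)).2 hd1R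
      have b7 : 3 * (d : ℝ) / (K * ℓ) = 3 * (d / (K * ℓ)) := by ring
      rw [b7]; linarith
  have elog : Real.log (d / (2 * ℓ)) - Real.log (3 * d / (K * ℓ)) = Real.log K - Real.log 6 := by
    rw [← Real.log_div (by positivity) (by positivity), ← Real.log_div (by positivity) (by positivity)]
    congr 1
    field_simp
    norm_num
  have hsq : (J : ℝ) * (J * δ) = J ^ 2 * δ := by ring
  rw [hsq] at hinfo
  have hinfo' : Ent w X + Real.log J ≤ Ent w (fun ξ => (X ξ, kk ξ)) + J ^ 2 * δ := hinfo
  linarith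

end CoreLemma
end CPE

namespace CPE

/-! ### Conditioning finite weights, and a linear form of Pinsker's inequality -/

section Cond

variable {κ κ' κ'' : Type*} {ι : Type*} [Fintype ι]

/-- The weights `p` conditioned on the event `s = k` (zero if the event has no mass). -/
def cnd (p : ι → ℝ) (s : ι → κ) (k : κ) (j : ι) : ℝ := if s j = k then p j / pm p s k else 0

lemma cnd_nonneg {p : ι → ℝ} (hp : ∀ i, 0 ≤ p i) (s : ι → κ) (k : κ) (j : ι) :
    0 ≤ cnd p s k j := by
  unfold cnd; split_ifs
  · exact div_nonneg (hp j) (pm_nonneg hp s k)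
  · exact le_rfl

lemma cnd_sum {p : ι → ℝ} {s : ι → κ} {k : κ} (hk : pm p s k ≠ 0) : ∑ j, cnd p s k j = 1 := by
  have : ∑ j, cnd p s k j = (∑ j, if s j = k then p j else 0) / pm p s k := by
    rw [Finset.sum_div]
    exact Finset.sum_congr rfl fun j _ => by unfold cnd; split_ifs <;> simp
  rw [this]; exact div_self hk

lemma cnd_ne {p : ι → ℝ} {s : ι → κ} {k : κ} {j : ι} (h : cnd p s k j ≠ 0) :
    s j = k ∧ p j ≠ 0 := by
  unfold cnd at h
  split_ifs at h with h1
  · exact ⟨h1, fun h2 => h (by simp [h2])⟩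
  · exact absurd rfl h

lemma sum_p_cnd {p : ι → ℝ} (hp : ∀ i, 0 ≤ p i) (s : ι → κ) (j : ι) :
    ∑ i, p i * cnd p s (s i) j = p j := by
  by_cases hj : p j = 0
  · simp [cnd, hj]
  have h := (pm_pos hp s hj).ne'
  calc ∑ i, p i * cnd p s (s i) j
      = ∑ i, (if s i = s j then p i else 0) * (p j / pm p s (s j)) := by
        refine Finset.sum_congr rfl fun i _ => ?_
        unfold cnd
        by_cases h : s i = s j
        · simp [h]
        · simp [h, Ne.symm h]
    _ = _ := by rw [← Finset.sum_mul]; change pm p s (s j) * _ = _; field_simp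

lemma sum_cnd {p : ι → ℝ} (hp : ∀ i, 0 ≤ p i) (s : ι → κ) (G : ι → ℝ) :
    ∑ i, p i * ∑ j, cnd p s (s i) j * G j = ∑ i, p i * G i := by
  simp only [Finset.mul_sum]
  rw [Finset.sum_comm]
  refine Finset.sum_congr rfl fun j _ => ?_
  rw [← sum_p_cnd hp s j, Finset.sum_mul]
  refine Finset.sum_congr rfl fun i _ => ?_
  ring

lemma pm_cnd (p : ι → ℝ) (s : ι → κ) (k : κ) (f : ι → κ') (l : κ') :
    pm (cnd p s k) f l = pm p (fun i => (f i, s i)) (l, k) / pm p s k := by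
  unfold pm
  rw [Finset.sum_div]
  refine Finset.sum_congr rfl fun j _ => ?_
  simp only [cnd, Prod.mk.injEq]
  by_cases h1 : f j = l <;> by_cases h2 : s j = k <;> simp [h1, h2, pm]

lemma Ent_cnd {p : ι → ℝ} (hp : ∀ i, 0 ≤ p i) (s : ι → κ) (f : ι → κ') :
    ∑ i, p i * Ent (cnd p s (s i)) f = Ent p (fun i => (f i, s i)) - Ent p s := by
  have e : ∀ k, Ent (cnd p s k) f
      = ∑ j, cnd p s k j * (-Real.log (pm p (fun i => (f i, s i)) (f j, s j) / pm p s (s j))) := by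
    intro k
    refine Finset.sum_congr rfl fun j _ => ?_
    by_cases hj : cnd p s k j = 0
    · simp [hj]
    · rw [pm_cnd, (cnd_ne hj).1]
  simp only [e]
  rw [sum_cnd hp s (fun j => -Real.log (pm p (fun i => (f i, s i)) (f j, s j) / pm p s (s j))),
    Ent, Ent, ← Finset.sum_sub_distrib]
  refine Finset.sum_congr rfl fun i _ => ?_
  by_cases hi : p i = 0
  · simp [hi]
  · rw [Real.log_div (pm_pos hp (fun i => (f i, s i)) hi).ne' (pm_pos hp s hi).ne']; ring

/-- Conditioning twice, the second time on finer information. -/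
lemma cnd_cnd {p : ι → ℝ} {s : ι → κ} {z : ι → κ'} (hz : ∀ i j, z i = z j → s i = s j) {k : κ}
    (hk : pm p s k ≠ 0) {l : ι} (hl : cnd p s k l ≠ 0) :
    cnd (cnd p s k) z (z l) = cnd p z (z l) := by
  funext j
  have hs := (cnd_ne hl).1
  have e : pm p (fun i => (z i, s i)) (z l, k) = pm p z (z l) :=
    pm_congr p fun i => by
      simp only [Prod.mk.injEq]
      exact ⟨fun h => h.1, fun h => ⟨h, by rw [← hs]; exact hz _ _ h⟩⟩
  have hjk : z j = z l → s j = k := fun h => by rw [← hs]; exact hz _ _ h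
  by_cases h : z j = z l
  · have := hjk h
    simp only [cnd, h, this, if_true]
    change p j / pm p s k / pm (cnd p s k) z (z l) = _
    rw [pm_cnd, e, div_div_div_cancel_right₀ hk]
  · simp [cnd, h]

/-- A linear form of **Pinsker's inequality**: the total variation distance of the law of `F`
to `q` is at most `2τ + D/(2τ)`, where `D` is the relative entropy. -/
lemma pinsker {p : ι → ℝ} (hp : ∀ i, 0 ≤ p i) (h1 : ∑ i, p i = 1) (F : ι → κ) (q : κ → ℝ)
    {s : Finset κ} (hs : ∀ i, F i ∈ s) (hq0 : ∀ k, 0 ≤ q k) (hq : ∑ k ∈ s, q k ≤ 1)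
    (hqp : ∀ i, p i ≠ 0 → 0 < q (F i)) {τ : ℝ} (hτ : 0 < τ) :
    ∑ k ∈ s, |pm p F k - q k|
      ≤ 2 * τ + (∑ i, p i * Real.log (pm p F (F i) / q (F i))) / (2 * τ) := by
  have hpm0 := pm_nonneg hp F
  have pt : ∀ k, (pm p F k ≠ 0 → 0 < q k) → |pm p F k - q k| ≤ τ * (pm p F k + q k)
      + (pm p F k * Real.log (pm p F k / q k) + q k - pm p F k) / (2 * τ) := by
    intro k hk
    set r := pm p F k
    have hr0 : 0 ≤ r := hpm0 k
    have hq0' := hq0 k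
    set x := √r
    set y := √(q k)
    have hx : x ^ 2 = r := Real.sq_sqrt hr0
    have hy : y ^ 2 = q k := Real.sq_sqrt hq0'
    have hx0 : 0 ≤ x := Real.sqrt_nonneg _
    have hy0 : 0 ≤ y := Real.sqrt_nonneg _
    have hlog : 2 * x ^ 2 - 2 * x * y ≤ r * Real.log (r / q k) := by
      rcases hr0.eq_or_lt with h | h
      · have : x = 0 := by simp only [x, ← h, Real.sqrt_zero]
        simp [this, ← h]
      · have hqk := hk h.ne'
        have hxp : 0 < x := Real.sqrt_pos.2 h
        have hyp : 0 < y := Real.sqrt_pos.2 hqk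
        have h3 := Real.log_le_sub_one_of_pos (div_pos hyp hxp)
        have h4 : Real.log (r / q k) = -2 * Real.log (y / x) := by
          rw [← hx, ← hy, ← div_pow, Real.log_pow, ← inv_div y x, Real.log_inv]; push_cast; ring
        rw [h4, ← hx]
        have h5 : x ^ 2 * (y / x - 1) = x * y - x ^ 2 := by field_simp
        nlinarith [mul_le_mul_of_nonneg_left h3 (sq_nonneg x)]
    have habs : |r - q k| = |x - y| * (x + y) := by
      rw [← hx, ← hy, ← abs_of_nonneg (add_nonneg hx0 hy0), ← abs_mul]; congr 1
      ring
    have ham : |x - y| * (x + y) ≤ τ / 2 * (x + y) ^ 2 + (x - y) ^ 2 / (2 * τ) := by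
      have e : τ / 2 * (x + y) ^ 2 + (x - y) ^ 2 / (2 * τ) - |x - y| * (x + y)
          = (τ * (x + y) - |x - y|) ^ 2 / (2 * τ) := by
        rw [← sq_abs (x - y)]; field_simp; ring
      have : 0 ≤ (τ * (x + y) - |x - y|) ^ 2 / (2 * τ) := by positivity
      linarith
    rw [habs]
    refine ham.trans (add_le_add ?_ ?_)
    · rw [← hx, ← hy]; nlinarith [sq_nonneg (x - y)]
    · refine div_le_div_of_nonneg_right ?_ (by positivity)
      have : (x - y) ^ 2 = x ^ 2 - 2 * x * y + y ^ 2 := by ring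
      linarith
  have hk : ∀ k, pm p F k ≠ 0 → 0 < q k := by
    intro k hk
    obtain ⟨i, _, hi⟩ := Finset.exists_ne_zero_of_sum_ne_zero hk
    have h2 : F i = k := by by_contra h; simp [h] at hi
    have h3 : p i ≠ 0 := by intro h; simp [h] at hi
    rw [← h2]; exact hqp i h3
  have e1 := sum_pm p F hs
  rw [h1] at e1
  rw [sum_fiber p F (fun k => Real.log (pm p F k / q k)) hs]
  calc _ ≤ ∑ k ∈ s, (τ * (pm p F k + q k)
      + (pm p F k * Real.log (pm p F k / q k) + q k - pm p F k) / (2 * τ)) :=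
        Finset.sum_le_sum fun k _ => pt k (hk k)
    _ = τ * (1 + ∑ k ∈ s, q k)
      + (∑ k ∈ s, pm p F k * Real.log (pm p F k / q k) + ∑ k ∈ s, q k - 1) / (2 * τ) := by
        rw [Finset.sum_add_distrib, ← Finset.mul_sum, Finset.sum_add_distrib, e1,
          ← Finset.sum_div, Finset.sum_sub_distrib, Finset.sum_add_distrib, e1]
    _ ≤ _ := by
        refine add_le_add (by nlinarith) (div_le_div_of_nonneg_right (by linarith) (by positivity))

end Cond
end CPE

namespace CPE

/-! ### Entropy of a summand against entropy growth of the sum -/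

section Static

variable {κ κ' κ'' : Type*} {ι : Type*} [Fintype ι]

/-- Probability that two points drawn independently given `w` have `c`-values at distance at
least `K`. -/
def farProb (p : ι → ℝ) (w c : ι → ℤ) (K : ℕ) : ℝ :=
  ∑ j, p j * ∑ i, cnd p w (w j) i * (if (K : ℤ) ≤ |c i - c j| then 1 else 0)

/-- If `c` refines `w` into `J` equal pieces, then the conditional entropy of `c` is small unless
`c` is spread at scale `K`. -/
lemma Ent_le_farProb {p : ι → ℝ} (hp : ∀ i, 0 ≤ p i) (h1 : ∑ i, p i = 1) (w c : ι → ℤ) {J K : ℕ}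
    (hJ : 0 < J) (hK : 0 < K) (hwc : ∀ i, w i = c i / J) :
    Ent p c - Ent p w ≤ Real.log (4 * K) + farProb p w c K * Real.log J := by
  have hJR : (1 : ℝ) ≤ J := by exact_mod_cast hJ
  have hKR : (1 : ℝ) ≤ K := by exact_mod_cast hK
  have hlogJ : 0 ≤ Real.log J := Real.log_nonneg hJR
  have e1 : Ent p c = Ent p (fun i => (c i, w i)) :=
    Ent_congr fun i j => by
      simp only [Prod.mk.injEq]
      exact ⟨fun h => ⟨h, by rw [hwc, hwc, h]⟩, fun h => h.1⟩
  rw [e1, ← Ent_cnd hp w c]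
  have e2 : Real.log (4 * K) = ∑ i, p i * Real.log (4 * K) := by
    rw [← Finset.sum_mul, h1, one_mul]
  rw [e2, farProb, Finset.sum_mul, ← Finset.sum_add_distrib]
  refine Finset.sum_le_sum fun j _ => ?_
  by_cases hj : p j = 0
  · simp [hj]
  rw [mul_assoc, ← mul_add]
  refine mul_le_mul_of_nonneg_left ?_ (hp j)
  have hw0 := (pm_pos hp w hj).ne'
  have hc1 := cnd_sum hw0
  have hc0 := cnd_nonneg hp w (w j)
  let t : ℤ → ℝ := fun x => if |x - c j| < K then 1 / (4 * K) else 1 / (2 * J)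
  have ht0 : ∀ x, 0 < t x := fun x => by simp only [t]; split_ifs <;> positivity
  have hsum : ∑ x ∈ Finset.Ico (J * w j) (J * w j + J), t x ≤ 1 := by
    calc ∑ x ∈ Finset.Ico (J * w j) (J * w j + J), t x
        ≤ ∑ x ∈ Finset.Ico (J * w j) (J * w j + J),
          ((if |x - c j| < K then 1 / (4 * K : ℝ) else 0) + 1 / (2 * J)) := by
          refine Finset.sum_le_sum fun x _ => ?_
          simp only [t]; split_ifs
          · linarith [show (0 : ℝ) ≤ 1 / (2 * J) by positivity]
          · simp
      _ ≤ 1 / 2 + 1 / 2 := by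
          rw [Finset.sum_add_distrib]
          refine add_le_add ?_ ?_
          · rw [← Finset.sum_filter, Finset.sum_const, nsmul_eq_mul]
            have hsub : (Finset.Ico (J * w j) (J * w j + J)).filter (fun x => |x - c j| < K)
                ⊆ Finset.Ioo (c j - K) (c j + K) := by
              intro x hx
              have := abs_lt.1 (Finset.mem_filter.1 hx).2
              rw [Finset.mem_Ioo]; constructor <;> linarith
            have hcard := Finset.card_le_card hsub
            rw [Int.card_Ioo] at hcard
            have hcard2 : ((Finset.Ico (J * w j) (J * w j + J)).filter
                (fun x => |x - c j| < K)).card ≤ 2 * K := by omega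
            have hcard3 : (((Finset.Ico (J * w j) (J * w j + J)).filter
                (fun x => |x - c j| < K)).card : ℝ) ≤ 2 * K := by exact_mod_cast hcard2
            rw [mul_one_div, div_le_iff₀ (by positivity)]
            linarith
          · rw [Finset.sum_const, nsmul_eq_mul, Int.card_Ico]
            simp only [add_sub_cancel_left, Int.toNat_natCast]
            rw [mul_one_div, div_le_iff₀ (by positivity)]; linarith
      _ = 1 := by norm_num
  have hg := gibbs hc0 c (fun _ => ()) (fun x _ => t x)
    (fun _ => Finset.Ico (J * w j) (J * w j + J)) (by
      intro i hi
      have h2 := (cnd_ne hi).1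
      rw [hwc i] at h2
      have b1 := Int.mul_ediv_add_emod (c i) J
      have hJz : (0 : ℤ) < J := by exact_mod_cast hJ
      have b2 := Int.emod_nonneg (c i) hJz.ne'
      have b3 := Int.emod_lt_of_pos (c i) hJz
      rw [h2] at b1
      rw [Finset.mem_Ico]; constructor <;> linarith)
    (fun x _ => (ht0 x).le) (fun i _ => ht0 _) (fun _ _ => hsum)
  rw [Ent_const hc1, sub_zero, Ent_congr (g := c) (by simp)] at hg
  refine hg.trans ?_
  have e3 : Real.log (4 * K) = ∑ i, cnd p w (w j) i * Real.log (4 * K) := by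
    rw [← Finset.sum_mul, hc1, one_mul]
  rw [e3, Finset.sum_mul, ← Finset.sum_add_distrib]
  refine Finset.sum_le_sum fun i _ => ?_
  rw [mul_assoc, ← mul_add]
  refine mul_le_mul_of_nonneg_left ?_ (hc0 i)
  simp only [t]
  by_cases h : |c i - c j| < K
  · simp only [h, not_le.2 h, if_true, if_false]
    rw [one_div, Real.log_inv]; simp
  · simp only [h, not_lt.1 h, if_true, if_false]
    rw [one_div, Real.log_inv, neg_neg, one_mul, ← Real.log_mul (by positivity) (by positivity)]
    exact Real.log_le_log (by positivity) (by nlinarith)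

lemma sum_log_pair {p : ι → ℝ} (hp : ∀ i, 0 ≤ p i) (f : ι → κ) (g : ι → κ') :
    ∑ i, p i * Real.log (pm p (fun i => (f i, g i)) (f i, g i) / (pm p f (f i) * pm p g (g i)))
      = Ent p f + Ent p g - Ent p (fun i => (f i, g i)) := by
  rw [Ent, Ent, Ent, ← Finset.sum_add_distrib, ← Finset.sum_sub_distrib]
  refine Finset.sum_congr rfl fun i _ => ?_
  by_cases hi : p i = 0
  · simp [hi]
  have a := (pm_pos hp f hi).ne'
  have b := (pm_pos hp g hi).ne'
  have c := (pm_pos hp (fun i => (f i, g i)) hi).ne'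
  rw [Real.log_div c (mul_ne_zero a b), Real.log_mul a b]; ring

lemma single_sum {ι₀ : Type*} (n : ℤ) (s : Finset ι₀) (f : ι₀ → ℝ) :
    (AddMonoidAlgebra.single n (∑ i ∈ s, f i) : ZAlg)
      = ∑ i ∈ s, AddMonoidAlgebra.single n (f i) := by
  induction s using Finset.induction_on with
  | empty => rw [Finset.sum_empty, Finset.sum_empty, AddMonoidAlgebra.single_zero]
  | insert a s ha ih =>
    rw [Finset.sum_insert ha, Finset.sum_insert ha, AddMonoidAlgebra.single_add, ih]

/-- Replacing the joint law of `(A, B)` by the product law inside the cells `{B / ℓ = c}`. -/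
lemma indep_error {p : ι → ℝ} (hp : ∀ i, 0 ≤ p i) (h1 : ∑ i, p i = 1) (A B : ι → ℤ) (φ : ℤ → ℤ)
    {τ : ℝ} (hτ : 0 < τ) :
    ∑ i, p i * nrm (lw p A * lw (cnd p (fun i => φ (B i)) (φ (B i))) B
        - lw (cnd p (fun i => φ (B i)) (φ (B i))) (fun i => A i + B i))
      ≤ 2 * τ + (Ent p A + Ent p B - Ent p (fun i => (A i, B i))) / (2 * τ) := by
  set c : ι → ℤ := fun i => φ (B i) with hc
  let SA := Finset.univ.image A
  let SB := Finset.univ.image B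
  let D : ℤ × ℤ → ℝ := fun z => |pm p (fun i => (A i, B i)) z - pm p A z.1 * pm p B z.2|
  have hpin := pinsker hp h1 (fun i => (A i, B i)) (fun z => pm p A z.1 * pm p B z.2)
    (s := SA ×ˢ SB) (by simp [SA, SB]) (fun z => mul_nonneg (pm_nonneg hp _ _) (pm_nonneg hp _ _))
    (by rw [Finset.sum_product, ← Finset.sum_mul_sum, sum_pm p A (by simp [SA]),
          sum_pm p B (by simp [SB]), h1, one_mul])
    (fun i hi => mul_pos (pm_pos hp _ hi) (pm_pos hp _ hi)) hτ
  rw [sum_log_pair hp] at hpin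
  refine le_trans ?_ hpin
  have pt : ∀ i, p i ≠ 0 → nrm (lw p A * lw (cnd p c (c i)) B
      - lw (cnd p c (c i)) (fun i => A i + B i))
      ≤ ∑ z ∈ SA ×ˢ SB, (if φ z.2 = c i then D z / pm p c (c i) else 0) := by
    intro i hi
    set k := c i with hk
    have hpk := pm_pos hp c hi
    -- both laws are images of weights on pairs `(a, b)`
    have e1 : lw p A * lw (cnd p c k) B = ∑ z ∈ SA ×ˢ SB,
        AddMonoidAlgebra.single (z.1 + z.2) (pm p A z.1 * pm (cnd p c k) B z.2) := by
      have g1 : ∀ (q : ι → ℝ) (f : ι → ℤ), lw q f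
          = ∑ n ∈ Finset.univ.image f, AddMonoidAlgebra.single n (pm q f n) := by
        intro q f
        simp only [pm, single_sum]
        rw [Finset.sum_comm, lw]
        refine Finset.sum_congr rfl fun i _ => ?_
        rw [Finset.sum_eq_single (f i)]
        · simp only [if_true]
        · intro b _ hb; rw [if_neg (Ne.symm hb), AddMonoidAlgebra.single_zero]
        · intro h; exact absurd (Finset.mem_image_of_mem f (Finset.mem_univ i)) h
      rw [g1 p A, g1 (cnd p c k) B, Finset.sum_mul_sum, Finset.sum_product]
      simp only [AddMonoidAlgebra.single_mul_single]
      rfl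
    have e2 : lw (cnd p c k) (fun i => A i + B i) = ∑ z ∈ SA ×ˢ SB,
        AddMonoidAlgebra.single (z.1 + z.2) (pm (cnd p c k) (fun i => (A i, B i)) z) := by
      simp only [pm, single_sum]
      rw [Finset.sum_comm, lw]
      refine Finset.sum_congr rfl fun i _ => ?_
      rw [Finset.sum_eq_single (A i, B i)]
      · simp only [if_true]
      · intro b _ hb; rw [if_neg (Ne.symm hb), AddMonoidAlgebra.single_zero]
      · intro h; exact absurd (by simp [SA, SB]) h
    rw [e1, e2, ← Finset.sum_sub_distrib]
    refine (nrm_sum _ _).trans (Finset.sum_le_sum fun z _ => ?_)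
    rw [← AddMonoidAlgebra.single_sub, nrm_single, pm_cnd, pm_cnd]
    by_cases hz : φ z.2 = k
    · rw [if_pos hz]
      have f1 : pm p (fun i => (B i, c i)) (z.2, k) = pm p B z.2 := pm_congr p fun j => by
        simp only [Prod.mk.injEq, hc]
        exact ⟨fun h => h.1, fun h => ⟨h, by rw [h, hz]⟩⟩
      have f2 : pm p (fun i => ((A i, B i), c i)) (z, k) = pm p (fun i => (A i, B i)) z :=
        pm_congr p fun j => by
          simp only [Prod.mk.injEq, hc]
          exact ⟨fun h => h.1, fun h => ⟨h, by rw [← hz, ← h]⟩⟩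
      rw [f1, f2]
      simp only [D]
      rw [← abs_of_pos hpk, ← abs_div, abs_of_pos hpk, abs_sub_comm]
      refine le_of_eq (congrArg _ ?_)
      ring
    · rw [if_neg hz]
      have f1 : pm p (fun i => (B i, c i)) (z.2, k) = 0 := Finset.sum_eq_zero fun j _ => by
        rw [if_neg]; simp only [Prod.mk.injEq, hc]; rintro ⟨h, h'⟩; exact hz (by rw [← h, h'])
      have f2 : pm p (fun i => ((A i, B i), c i)) (z, k) = 0 := Finset.sum_eq_zero fun j _ => by
        rw [if_neg]; simp only [Prod.mk.injEq, hc]; rintro ⟨h, h'⟩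
        exact hz (by rw [← h]; exact h')
      rw [f1, f2]; simp
  calc _ ≤ ∑ i, ∑ z ∈ SA ×ˢ SB, p i * (if φ z.2 = c i then D z / pm p c (c i) else 0) := by
        refine Finset.sum_le_sum fun i _ => ?_
        rw [← Finset.mul_sum]
        by_cases hi : p i = 0
        · simp [hi]
        · exact mul_le_mul_of_nonneg_left (pt i hi) (hp i)
    _ = ∑ z ∈ SA ×ˢ SB, pm p c (φ z.2) * (D z / pm p c (φ z.2)) := by
        rw [Finset.sum_comm]
        refine Finset.sum_congr rfl fun z _ => ?_
        have e : ∀ x, pm p c (φ z.2) * x = ∑ i, (if c i = φ z.2 then p i else 0) * x := by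
          intro x; rw [← Finset.sum_mul]
          exact congrArg (· * x) (Finset.sum_congr rfl fun i _ => by split_ifs <;> rfl)
        rw [e]
        refine Finset.sum_congr rfl fun i _ => ?_
        by_cases h : c i = φ z.2
        · simp [h]
        · simp [h, Ne.symm h]
    _ ≤ ∑ z ∈ SA ×ˢ SB, D z := by
        refine Finset.sum_le_sum fun z _ => ?_
        by_cases h : pm p c (φ z.2) = 0
        · rw [h, zero_mul]; exact abs_nonneg _
        · rw [mul_div_cancel₀ _ h]

/-- The law of `X` given `c` against the law of `X` given the coarser `w`. -/
lemma refine_error {p : ι → ℝ} (hp : ∀ i, 0 ≤ p i) (h1 : ∑ i, p i = 1) (X c w : ι → ℤ)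
    (φ : ℤ → ℤ) (hwc : ∀ i, w i = φ (c i)) {τ : ℝ} (hτ : 0 < τ) :
    ∑ i, p i * nrm (lw (cnd p c (c i)) X - lw (cnd p w (w i)) X)
      ≤ 2 * τ + (Ent p (fun i => (X i, w i)) - Ent p (fun i => (X i, c i)) + Ent p c - Ent p w)
        / (2 * τ) := by
  let SX := Finset.univ.image X
  let SC := Finset.univ.image c
  let q : ℤ × ℤ → ℝ := fun z =>
    pm p (fun i => (X i, w i)) (z.1, φ z.2) / pm p w (φ z.2) * pm p c z.2
  have hq0 : ∀ z, 0 ≤ q z := fun z =>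
    mul_nonneg (div_nonneg (pm_nonneg hp _ _) (pm_nonneg hp _ _)) (pm_nonneg hp _ _)
  have hmarg : ∀ v, ∑ x ∈ SX, pm p (fun i => (X i, w i)) (x, v) = pm p w v := by
    intro v
    unfold pm
    rw [Finset.sum_comm]
    refine Finset.sum_congr rfl fun i _ => ?_
    rw [Finset.sum_eq_single (X i)]
    · simp
    · intro b _ hb; rw [if_neg]; simp [Ne.symm hb]
    · intro h; exact absurd (Finset.mem_image_of_mem X (Finset.mem_univ i)) h
  have hpin := pinsker hp h1 (fun i => (X i, c i)) q
    (s := SX ×ˢ SC) (by simp [SX, SC]) hq0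
    (by
      rw [Finset.sum_product_right, ← h1, ← sum_pm p c (s := SC) (by simp [SC])]
      refine Finset.sum_le_sum fun v _ => ?_
      simp only [q]
      rw [← Finset.sum_mul, ← Finset.sum_div, hmarg]
      exact mul_le_of_le_one_left (pm_nonneg hp _ _) (div_self_le_one _))
    (fun i hi => by
      have a := pm_pos hp (fun i => (X i, w i)) hi
      have b := pm_pos hp w hi
      have d := pm_pos hp c hi
      simp only [q, ← hwc]
      positivity) hτ
  have hKL : ∑ i, p i * Real.log (pm p (fun i => (X i, c i)) (X i, c i) / q (X i, c i))
      = Ent p (fun i => (X i, w i)) - Ent p (fun i => (X i, c i)) + Ent p c - Ent p w := by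
    simp only [Ent]
    rw [← Finset.sum_sub_distrib, ← Finset.sum_add_distrib, ← Finset.sum_sub_distrib]
    refine Finset.sum_congr rfl fun i _ => ?_
    by_cases hi : p i = 0
    · simp [hi]
    have a := (pm_pos hp (fun i => (X i, w i)) hi).ne'
    have b := (pm_pos hp w hi).ne'
    have d := (pm_pos hp c hi).ne'
    have e := (pm_pos hp (fun i => (X i, c i)) hi).ne'
    simp only [q, ← hwc]
    rw [Real.log_div e (mul_ne_zero (div_ne_zero a b) d), Real.log_mul (div_ne_zero a b) d,
      Real.log_div a b]
    ring
  rw [hKL] at hpin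
  refine le_trans ?_ hpin
  have pt : ∀ i, p i ≠ 0 → nrm (lw (cnd p c (c i)) X - lw (cnd p w (w i)) X)
      ≤ ∑ x ∈ SX, |pm p (fun i => (X i, c i)) (x, c i) - q (x, c i)| / pm p c (c i) := by
    intro i hi
    have hsupp : ∀ r : ι → ℝ, (lw r X).coeff.support ⊆ SX := by
      intro r n hn
      have h := Finsupp.mem_support_iff.1 hn
      rw [lw_coeff] at h
      obtain ⟨j, _, hj⟩ := Finset.exists_ne_zero_of_sum_ne_zero h
      have h2 : X j = n := by by_contra h; simp [h] at hj
      rw [← h2]; simp [SX]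
    have hs2 : (lw (cnd p c (c i)) X - lw (cnd p w (w i)) X).coeff.support ⊆ SX := by
      refine (Finsupp.support_sub).trans (Finset.union_subset (hsupp _) (hsupp _))
    rw [nrm_eq _ hs2]
    refine Finset.sum_le_sum fun x _ => ?_
    have d := pm_pos hp c hi
    rw [show ((lw (cnd p c (c i)) X - lw (cnd p w (w i)) X).coeff x)
      = (lw (cnd p c (c i)) X).coeff x - (lw (cnd p w (w i)) X).coeff x from rfl,
      lw_coeff, lw_coeff, pm_cnd, pm_cnd, ← abs_of_pos d, ← abs_div, abs_of_pos d]
    refine le_of_eq (congrArg _ ?_)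
    simp only [q, ← hwc]
    field_simp
  calc _ ≤ ∑ i, p i * ∑ x ∈ SX,
        |pm p (fun i => (X i, c i)) (x, c i) - q (x, c i)| / pm p c (c i) := by
        refine Finset.sum_le_sum fun i _ => ?_
        by_cases hi : p i = 0
        · simp [hi]
        · exact mul_le_mul_of_nonneg_left (pt i hi) (hp i)
    _ = ∑ v ∈ SC, pm p c v * ∑ x ∈ SX,
        |pm p (fun i => (X i, c i)) (x, v) - q (x, v)| / pm p c v :=
        sum_fiber p c (fun v => ∑ x ∈ SX,
          |pm p (fun i => (X i, c i)) (x, v) - q (x, v)| / pm p c v) (by simp [SC])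
    _ ≤ ∑ v ∈ SC, ∑ x ∈ SX, |pm p (fun i => (X i, c i)) (x, v) - q (x, v)| := by
        refine Finset.sum_le_sum fun v _ => ?_
        rw [← Finset.sum_div]
        by_cases h : pm p c v = 0
        · rw [h, zero_mul]; exact Finset.sum_nonneg fun _ _ => abs_nonneg _
        · rw [mul_div_cancel₀ _ h]
    _ = _ := by rw [Finset.sum_product_right]

end Static
end CPE

namespace CPE

/-! ### The multiscale inequality -/

section Static2

variable {κ κ' κ'' : Type*} {ι : Type*} [Fintype ι]

/-- The universal constant lost in `core`. -/
def C0 : ℝ := Real.log 6 + 4 * Real.log 5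

lemma IsLaw_cnd {p : ι → ℝ} (hp : ∀ i, 0 ≤ p i) (B : ι → ℤ) {ℓ : ℕ} (hℓ : 0 < ℓ) {i : ι}
    (hi : p i ≠ 0) :
    IsLaw (lw (cnd p (fun i => B i / (ℓ : ℤ)) (B i / ℓ)) B) (B i / ℓ * ℓ)
      (B i / ℓ * ℓ + (ℓ - 1)) where
  nonneg n := by rw [lw_coeff]; exact pm_nonneg (cnd_nonneg hp _ _) _ _
  tot_one := by rw [tot_lw]; exact cnd_sum (pm_pos hp (fun i => B i / (ℓ : ℤ)) hi).ne'
  supp n hn := by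
    rw [lw_coeff] at hn
    obtain ⟨j, _, hj⟩ := Finset.exists_ne_zero_of_sum_ne_zero hn
    have h2 : B j = n := by by_contra h; simp [h] at hj
    rw [if_pos h2] at hj
    have h3 := (cnd_ne hj).1
    have hz : (0 : ℤ) < ℓ := by exact_mod_cast hℓ
    have b1 := Int.mul_ediv_add_emod (B j) ℓ
    have b2 := Int.emod_nonneg (B j) hz.ne'
    have b3 := Int.emod_lt_of_pos (B j) hz
    rw [h3] at b1
    constructor <;> linarith

/-- Two far cells of scale `ℓ` in the same cell of scale `J ℓ` carry two displaced pieces of `B`, to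
which `core` applies. Averaging over such pairs bounds the probability of finding them, with an error
controlled by `indep_error` and `refine_error`. -/
lemma farProb_le {p : ι → ℝ} (hp : ∀ i, 0 ≤ p i) (h1 : ∑ i, p i = 1) (A B : ι → ℤ) {J K ℓ : ℕ}
    (hJ : 0 < J) (hK : 0 < K) (hℓ : 0 < ℓ) {b₀ : ℝ} :
    (Real.log K - C0 - b₀) * farProb p (fun i => B i / ((J * ℓ : ℕ) : ℤ)) (fun i => B i / ℓ) K
      ≤ max 0 (Ent p (fun i => A i / ((J * ℓ : ℕ) : ℤ))
          - Ent p (fun i => A i / ((K * (J * ℓ) : ℕ) : ℤ)) - b₀) + 2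
        + 4 * J ^ 4 * ((Ent p A + Ent p B - Ent p (fun i => (A i, B i)))
          + (Ent p (fun i => (A i + B i, B i / ((J * ℓ : ℕ) : ℤ)))
            - Ent p (fun i => (A i + B i, B i / (ℓ : ℤ)))
            + Ent p (fun i => B i / (ℓ : ℤ)) - Ent p (fun i => B i / ((J * ℓ : ℕ) : ℤ)))) := by
  have hJz : (0 : ℤ) < J := by exact_mod_cast hJ
  have hℓz : (0 : ℤ) < ℓ := by exact_mod_cast hℓ
  set lam := Real.log K - C0 - b₀ with hlam
  set w : ι → ℤ := fun i => B i / ((J * ℓ : ℕ) : ℤ) with hw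
  set c : ι → ℤ := fun i => B i / (ℓ : ℤ) with hc
  set X : ι → ℤ := fun i => A i + B i with hX
  have hwc : ∀ i, w i = c i / J := by
    intro i
    simp only [hw, hc]
    rw [Int.ediv_ediv_of_nonneg hℓz.le]; congr 1; push_cast; ring
  set Mx := max 0 (Ent p (fun i => A i / ((J * ℓ : ℕ) : ℤ))
          - Ent p (fun i => A i / ((K * (J * ℓ) : ℕ) : ℤ)) - b₀) with hMx
  have hJR : (0 : ℝ) < J := by exact_mod_cast hJ
  let u : ι → ℝ := fun i => nrm (lw p A * lw (cnd p c (c i)) B - lw (cnd p c (c i)) X)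
  let v : ι → ℝ := fun i => nrm (lw (cnd p c (c i)) X - lw (cnd p w (w i)) X)
  have hu0 : ∀ i, 0 ≤ u i := fun i => Finset.sum_nonneg fun _ _ => abs_nonneg _
  have hv0 : ∀ i, 0 ≤ v i := fun i => Finset.sum_nonneg fun _ _ => abs_nonneg _
  have key : ∀ i j, p i ≠ 0 → p j ≠ 0 → w i = w j →
      lam * (if (K : ℤ) ≤ |c i - c j| then 1 else 0)
        ≤ Mx + J ^ 2 * (u i + v i + (u j + v j)) := by
    intro i j hi hj hij
    have hM0 : 0 ≤ Mx := le_max_left _ _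
    have hr0 : 0 ≤ (J : ℝ) ^ 2 * (u i + v i + (u j + v j)) :=
      mul_nonneg (by positivity)
        (add_nonneg (add_nonneg (hu0 i) (hv0 i)) (add_nonneg (hu0 j) (hv0 j)))
    split_ifs with hfar
    · set δ := nrm (lw p A * (lw (cnd p c (c i)) B - lw (cnd p c (c j)) B)) with hδ
      have hδle : δ ≤ u i + v i + (u j + v j) := by
        have e : lw p A * (lw (cnd p c (c i)) B - lw (cnd p c (c j)) B)
            = ((lw p A * lw (cnd p c (c i)) B - lw (cnd p c (c i)) X)
                + (lw (cnd p c (c i)) X - lw (cnd p w (w i)) X))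
              + -((lw p A * lw (cnd p c (c j)) B - lw (cnd p c (c j)) X)
                + (lw (cnd p c (c j)) X - lw (cnd p w (w j)) X)) := by
          rw [hij]; ring
        rw [hδ, e]
        refine (nrm_add _ _).trans (add_le_add (nrm_add _ _) ?_)
        rw [nrm_neg]; exact nrm_add _ _
      have hlt : |c i - c j| < J := by
        refine abs_sub_lt_of_div_eq hJz ?_
        rw [← hwc, ← hwc, hij]
      have li := IsLaw_cnd hp B hℓ hi
      have lj := IsLaw_cnd hp B hℓ hj
      have hcore : Real.log K - C0 - J ^ 2 * δ
          ≤ Ent p (fun i => A i / ((J * ℓ : ℕ) : ℤ))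
            - Ent p (fun i => A i / ((K * (J * ℓ) : ℕ) : ℤ)) := by
        rcases le_total (c i) (c j) with h | h
        · rw [abs_of_nonpos (by linarith)] at hfar hlt
          exact core hp h1 A hJ hK hℓ li lj
            (by change (K * ℓ : ℤ) ≤ c j * ℓ - c i * ℓ; nlinarith)
            (by change c j * ℓ - c i * ℓ ≤ (J * ℓ : ℤ); nlinarith)
        · rw [abs_of_nonneg (by linarith)] at hfar hlt
          have := core hp h1 A hJ hK hℓ lj li
            (by change (K * ℓ : ℤ) ≤ c i * ℓ - c j * ℓ; nlinarith)
            (by change c i * ℓ - c j * ℓ ≤ (J * ℓ : ℤ); nlinarith)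
          have e : δ = nrm (lw p A * (lw (cnd p c (c j)) B - lw (cnd p c (c i)) B)) := by
            rw [hδ, ← nrm_neg, ← mul_neg, neg_sub]
          rw [e]; exact this
      have hMl := le_max_right 0 (Ent p (fun i => A i / ((J * ℓ : ℕ) : ℤ))
          - Ent p (fun i => A i / ((K * (J * ℓ) : ℕ) : ℤ)) - b₀)
      rw [← hMx] at hMl
      have := mul_le_mul_of_nonneg_left hδle (sq_nonneg (J : ℝ))
      rw [hlam]; linarith
    · linarith
  -- averaging over pairs
  have havg : lam * farProb p w c K ≤ Mx + J ^ 2 * (2 * ∑ i, p i * u i + 2 * ∑ i, p i * v i) := by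
    have e0 : lam * farProb p w c K = ∑ j, p j * ∑ i, cnd p w (w j) i *
        (lam * (if (K : ℤ) ≤ |c i - c j| then 1 else 0)) := by
      rw [farProb, Finset.mul_sum]
      refine Finset.sum_congr rfl fun j _ => ?_
      rw [mul_left_comm, Finset.mul_sum]
      congr 1
      refine Finset.sum_congr rfl fun i _ => ?_
      ring
    have e1 : ∑ j, p j * ∑ i, cnd p w (w j) i * (Mx + J ^ 2 * (u i + v i + (u j + v j)))
        = Mx + J ^ 2 * (2 * ∑ i, p i * u i + 2 * ∑ i, p i * v i) := by
      have s1 := sum_cnd hp w (fun i => Mx + J ^ 2 * (u i + v i))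
      have s2 : ∑ j, p j * ∑ i, cnd p w (w j) i * (J ^ 2 * (u j + v j))
          = ∑ j, p j * (J ^ 2 * (u j + v j)) := by
        refine Finset.sum_congr rfl fun j _ => ?_
        by_cases hj : p j = 0
        · simp [hj]
        · rw [← Finset.sum_mul, cnd_sum (pm_pos hp w hj).ne', one_mul]
      calc _ = ∑ j, p j * ∑ i, cnd p w (w j) i * (Mx + J ^ 2 * (u i + v i))
            + ∑ j, p j * ∑ i, cnd p w (w j) i * (J ^ 2 * (u j + v j)) := by
            rw [← Finset.sum_add_distrib]
            refine Finset.sum_congr rfl fun j _ => ?_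
            rw [← mul_add, ← Finset.sum_add_distrib]
            congr 1
            exact Finset.sum_congr rfl fun i _ => by ring
        _ = ∑ j, p j * Mx + J ^ 2 * (2 * ∑ i, p i * u i + 2 * ∑ i, p i * v i) := by
            rw [s1, s2, Finset.mul_sum, Finset.mul_sum, ← Finset.sum_add_distrib,
              ← Finset.sum_add_distrib, Finset.mul_sum, ← Finset.sum_add_distrib]
            exact Finset.sum_congr rfl fun i _ => by ring
        _ = _ := by rw [← Finset.sum_mul, h1, one_mul]
    rw [e0, ← e1]
    refine Finset.sum_le_sum fun j _ => ?_
    by_cases hj : p j = 0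
    · simp [hj]
    refine mul_le_mul_of_nonneg_left (Finset.sum_le_sum fun i _ => ?_) (hp j)
    by_cases hi : cnd p w (w j) i = 0
    · simp [hi]
    · exact mul_le_mul_of_nonneg_left (key i j (cnd_ne hi).2 hj (cnd_ne hi).1)
        (cnd_nonneg hp _ _ _)
  have hτ : (0 : ℝ) < 1 / (4 * J ^ 2) := by positivity
  have hE1 := indep_error hp h1 A B (fun b => b / (ℓ : ℤ)) hτ
  have hE2 := refine_error hp h1 X c w (fun x => x / J) hwc hτ
  set I := Ent p A + Ent p B - Ent p (fun i => (A i, B i)) with hI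
  set g := Ent p (fun i => (X i, w i)) - Ent p (fun i => (X i, c i)) + Ent p c - Ent p w with hg
  have hE1' : ∑ i, p i * u i ≤ 2 * (1 / (4 * J ^ 2)) + I / (2 * (1 / (4 * J ^ 2))) := hE1
  have hE2' : ∑ i, p i * v i ≤ 2 * (1 / (4 * J ^ 2)) + g / (2 * (1 / (4 * J ^ 2))) := hE2
  refine havg.trans ?_
  have hfin : (J : ℝ) ^ 2 * (2 * ∑ i, p i * u i + 2 * ∑ i, p i * v i) ≤ 2 + 4 * J ^ 4 * (I + g) := by
    calc _ ≤ (J : ℝ) ^ 2 * (2 * (2 * (1 / (4 * J ^ 2)) + I / (2 * (1 / (4 * J ^ 2))))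
          + 2 * (2 * (1 / (4 * J ^ 2)) + g / (2 * (1 / (4 * J ^ 2))))) := by
          refine mul_le_mul_of_nonneg_left ?_ (by positivity)
          linarith
      _ = _ := by field_simp; ring
  linarith

/-- One scale of the multiscale argument. -/
lemma step {p : ι → ℝ} (hp : ∀ i, 0 ≤ p i) (h1 : ∑ i, p i = 1) (A B : ι → ℤ) {J K ℓ : ℕ}
    (hJ : 0 < J) (hK : 0 < K) (hℓ : 0 < ℓ) {b₀ : ℝ} (hb : 0 ≤ Real.log K - C0 - b₀) :
    (Real.log K - C0 - b₀) * (Ent p (fun i => B i / (ℓ : ℤ))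
        - Ent p (fun i => B i / ((J * ℓ : ℕ) : ℤ)) - Real.log (4 * K))
      ≤ Real.log J * (max 0 (Ent p (fun i => A i / ((J * ℓ : ℕ) : ℤ))
          - Ent p (fun i => A i / ((K * (J * ℓ) : ℕ) : ℤ)) - b₀) + 2
        + 4 * J ^ 4 * ((Ent p A + Ent p B - Ent p (fun i => (A i, B i)))
          + (Ent p (fun i => (A i + B i, B i / ((J * ℓ : ℕ) : ℤ)))
            - Ent p (fun i => (A i + B i, B i / (ℓ : ℤ)))
            + Ent p (fun i => B i / (ℓ : ℤ)) - Ent p (fun i => B i / ((J * ℓ : ℕ) : ℤ))))) := by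
  have hℓz : (0 : ℤ) < ℓ := by exact_mod_cast hℓ
  have h2 := farProb_le hp h1 A B hJ hK hℓ (b₀ := b₀)
  have h3 := Ent_le_farProb hp h1 (fun i => B i / ((J * ℓ : ℕ) : ℤ)) (fun i => B i / ℓ) hJ hK
    (by intro i; rw [Int.ediv_ediv_of_nonneg hℓz.le]; congr 1; push_cast; ring)
  have hlogJ : 0 ≤ Real.log J := Real.log_nonneg (by exact_mod_cast hJ)
  have h4 := mul_le_mul_of_nonneg_left h2 hlogJ
  refine le_trans ?_ h4
  have h5 := mul_le_mul_of_nonneg_left (sub_le_iff_le_add'.2 h3) hb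
  refine h5.trans (le_of_eq ?_)
  ring

/-- All scales: a summand `B` of large entropy forces entropy of `X = A + B` above that of `A`,
unless `A` has almost full entropy at many scales. -/
theorem multiscale {p : ι → ℝ} (hp : ∀ i, 0 ≤ p i) (h1 : ∑ i, p i = 1) (A B : ι → ℤ) {J K : ℕ}
    (hJ : 0 < J) (hK : 0 < K) {b₀ : ℝ} (hb : 0 ≤ Real.log K - C0 - b₀) (t : ℕ) :
    (Real.log K - C0 - b₀) * (Ent p B - Ent p (fun i => B i / ((J ^ t : ℕ) : ℤ))
        - t * Real.log (4 * K))
      ≤ Real.log J * (∑ k ∈ Finset.range t, max 0 (Ent p (fun i => A i / ((J ^ (k + 1) : ℕ) : ℤ))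
          - Ent p (fun i => A i / ((K * J ^ (k + 1) : ℕ) : ℤ)) - b₀) + 2 * t
        + 4 * J ^ 4 * ((t + 1) * (Ent p A + Ent p B - Ent p (fun i => (A i, B i)))
          + (Ent p (fun i => A i + B i) - Ent p A))) := by
  set I := Ent p A + Ent p B - Ent p (fun i => (A i, B i)) with hI
  set lam := Real.log K - C0 - b₀ with hlam
  have main : lam * (Ent p B - Ent p (fun i => B i / ((J ^ t : ℕ) : ℤ)) - t * Real.log (4 * K))
      ≤ Real.log J * (∑ k ∈ Finset.range t, max 0 (Ent p (fun i => A i / ((J ^ (k + 1) : ℕ) : ℤ))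
          - Ent p (fun i => A i / ((K * J ^ (k + 1) : ℕ) : ℤ)) - b₀) + 2 * t
        + 4 * J ^ 4 * (t * I + (Ent p (fun i => (A i + B i, B i / ((J ^ t : ℕ) : ℤ)))
            - Ent p (fun i => (A i + B i, B i))
            + Ent p B - Ent p (fun i => B i / ((J ^ t : ℕ) : ℤ))))) := by
    have hst := fun t => step hp h1 A B hJ hK (pow_pos hJ t) hb
    simp only [← pow_succ' J, ← hI, ← hlam] at hst
    clear_value I lam
    induction t with
    | zero => simp
    | succ t ih =>
      have hs := hst t
      rw [Finset.sum_range_succ]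
      push_cast at ih hs ⊢
      linarith
  refine main.trans (mul_le_mul_of_nonneg_left (add_le_add le_rfl ?_)
    (Real.log_nonneg (by exact_mod_cast hJ)))
  refine mul_le_mul_of_nonneg_left ?_ (by positivity)
  have e1 : Ent p (fun i => (A i + B i, B i)) = Ent p (fun i => (A i, B i)) :=
    Ent_congr fun i j => by
      simp only [Prod.mk.injEq]
      constructor
      · rintro ⟨a, b⟩; exact ⟨by linarith, b⟩
      · rintro ⟨a, b⟩; exact ⟨by linarith, b⟩
  have e2 := Ent_pair_le_add hp h1 (fun i => A i + B i) (fun i => B i / ((J ^ t : ℕ) : ℤ))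
  rw [e1]
  have : (t + 1 : ℝ) * I = t * I + I := by ring
  rw [this]
  linarith

end Static2
end CPE

namespace CPE

/-! ### The multiscale inequality conditioned on a coarse scale -/

section Static3

variable {κ κ' κ'' : Type*} {ι : Type*} [Fintype ι]

/-- Conditional entropy of `f` given `s`. -/
def CE (p : ι → ℝ) (f : ι → κ) (s : ι → κ') : ℝ := Ent p (fun i => (f i, s i)) - Ent p s

/-- Conditional mutual information of `f` and `g` given `s`. -/
def CI (p : ι → ℝ) (f : ι → κ) (g : ι → κ') (s : ι → κ'') : ℝ :=
  CE p f s + CE p g s - CE p (fun i => (f i, g i)) s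

/-- The expected excess over `b₀` of the entropy of `f` under the weights conditioned on `z`. -/
def exc (p : ι → ℝ) (f : ι → κ) (z : ι → κ') (b₀ : ℝ) : ℝ :=
  ∑ l, p l * max 0 (Ent (cnd p z (z l)) f - b₀)

lemma exc_cnd {p : ι → ℝ} (hp : ∀ i, 0 ≤ p i) (s : ι → κ'') (f : ι → κ) (z : ι → κ')
    (hzf : ∀ i j, f i = f j → z i = z j) (hsz : ∀ i j, z i = z j → s i = s j) (b₀ : ℝ) :
    ∑ i, p i * max 0 (Ent (cnd p s (s i)) f - Ent (cnd p s (s i)) z - b₀) ≤ exc p f z b₀ := by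
  rw [exc, ← sum_cnd hp s (fun l => max 0 (Ent (cnd p z (z l)) f - b₀))]
  refine Finset.sum_le_sum fun i _ => ?_
  by_cases hi : p i = 0
  · simp [hi]
  refine mul_le_mul_of_nonneg_left ?_ (hp i)
  have hk := (pm_pos hp s hi).ne'
  set q := cnd p s (s i) with hq
  have hq0 : ∀ j, 0 ≤ q j := cnd_nonneg hp s (s i)
  have hq1 : ∑ j, q j = 1 := cnd_sum hk
  have e1 : Ent q f - Ent q z = ∑ l, q l * Ent (cnd q z (z l)) f := by
    rw [Ent_cnd hq0 z f, Ent_congr (f := f) (g := fun i => (f i, z i))]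
    intro i j; simp only [Prod.mk.injEq]
    exact ⟨fun h => ⟨h, hzf i j h⟩, fun h => h.1⟩
  have e2 : b₀ = ∑ l, q l * b₀ := by rw [← Finset.sum_mul, hq1, one_mul]
  refine max_le (Finset.sum_nonneg fun l _ => mul_nonneg (hq0 l) (le_max_left _ _)) ?_
  rw [e1]
  conv_lhs => rw [e2]
  rw [← Finset.sum_sub_distrib]
  refine Finset.sum_le_sum fun l _ => ?_
  by_cases hl : q l = 0
  · simp [hl]
  rw [← mul_sub, cnd_cnd hsz hk hl]
  exact mul_le_mul_of_nonneg_left (le_max_right _ _) (hq0 l)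

/-- The multiscale inequality, conditioned on `s`. -/
theorem multiscale_cond {p : ι → ℝ} (hp : ∀ i, 0 ≤ p i) (h1 : ∑ i, p i = 1) (A B s : ι → ℤ)
    {J K : ℕ} (hJ : 0 < J) (hK : 0 < K) (hKJ : K ∣ J) {b₀ : ℝ} (hb : 0 ≤ Real.log K - C0 - b₀)
    (t : ℕ) (hs : ∀ i, s i = A i / ((J ^ (t + 1) : ℕ) : ℤ)) :
    (Real.log K - C0 - b₀) * (CE p B s - CE p (fun i => B i / ((J ^ t : ℕ) : ℤ)) s
        - t * Real.log (4 * K))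
      ≤ Real.log J * (∑ k ∈ Finset.range t, exc p (fun i => A i / ((J ^ (k + 1) : ℕ) : ℤ))
          (fun i => A i / ((K * J ^ (k + 1) : ℕ) : ℤ)) b₀ + 2 * t
        + 4 * J ^ 4 * ((t + 1) * CI p A B s
          + (CE p (fun i => A i + B i) s - CE p A s))) := by
  set lam := Real.log K - C0 - b₀ with hlam
  have hdvd : ∀ {m n : ℕ}, 0 < m → m ∣ n → ∀ i j, A i / (m : ℤ) = A j / (m : ℤ) →
      A i / (n : ℤ) = A j / (n : ℤ) := by
    rintro m n hm ⟨r, rfl⟩ i j h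
    have hm' : (0 : ℤ) ≤ m := by positivity
    push_cast
    rw [← Int.ediv_ediv_of_nonneg hm', ← Int.ediv_ediv_of_nonneg hm', h]
  have hexc : ∑ k ∈ Finset.range t, ∑ i, p i * max 0 (Ent (cnd p s (s i))
        (fun i => A i / ((J ^ (k + 1) : ℕ) : ℤ))
        - Ent (cnd p s (s i)) (fun i => A i / ((K * J ^ (k + 1) : ℕ) : ℤ)) - b₀)
      ≤ ∑ k ∈ Finset.range t, exc p (fun i => A i / ((J ^ (k + 1) : ℕ) : ℤ))
          (fun i => A i / ((K * J ^ (k + 1) : ℕ) : ℤ)) b₀ := by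
    refine Finset.sum_le_sum fun k hk => exc_cnd hp s _ _ ?_ ?_ b₀
    · exact hdvd (pow_pos hJ _) (Dvd.intro_left _ rfl)
    · intro i j h
      rw [hs, hs]
      refine hdvd (Nat.mul_pos hK (pow_pos hJ _)) ?_ i j h
      have : k + 2 ≤ t + 1 := by have := Finset.mem_range.1 hk; omega
      refine dvd_trans ?_ (pow_dvd_pow J this)
      rw [pow_succ' J (k + 1)]
      exact mul_dvd_mul_right hKJ _
  have hJl : 0 ≤ Real.log J := Real.log_nonneg (by exact_mod_cast hJ)
  have av : ∀ c : ℝ, ∑ i, p i * c = c := fun c => by rw [← Finset.sum_mul, h1, one_mul]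
  have hsum := Finset.sum_le_sum (s := Finset.univ) fun (i : ι) _ => show
      p i * (lam * (Ent (cnd p s (s i)) B
        - Ent (cnd p s (s i)) (fun i => B i / ((J ^ t : ℕ) : ℤ)) - t * Real.log (4 * K)))
      ≤ p i * (Real.log J * (∑ k ∈ Finset.range t, max 0
          (Ent (cnd p s (s i)) (fun i => A i / ((J ^ (k + 1) : ℕ) : ℤ))
          - Ent (cnd p s (s i)) (fun i => A i / ((K * J ^ (k + 1) : ℕ) : ℤ)) - b₀) + 2 * t
        + 4 * J ^ 4 * ((t + 1) * (Ent (cnd p s (s i)) A + Ent (cnd p s (s i)) B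
            - Ent (cnd p s (s i)) (fun i => (A i, B i)))
          + (Ent (cnd p s (s i)) (fun i => A i + B i) - Ent (cnd p s (s i)) A)))) by
    by_cases hi : p i = 0
    · simp [hi]
    exact mul_le_mul_of_nonneg_left (multiscale (cnd_nonneg hp s (s i))
      (cnd_sum (pm_pos hp s hi).ne') A B hJ hK hb t) (hp i)
  have cA := Ent_cnd hp s A
  have cB := Ent_cnd hp s B
  have cAB := Ent_cnd hp s (fun i => (A i, B i))
  have cX := Ent_cnd hp s (fun i => A i + B i)
  have cV := Ent_cnd hp s (fun i => B i / ((J ^ t : ℕ) : ℤ))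
  have L : ∑ i, p i * (lam * (Ent (cnd p s (s i)) B
        - Ent (cnd p s (s i)) (fun i => B i / ((J ^ t : ℕ) : ℤ)) - t * Real.log (4 * K)))
      = lam * (CE p B s - CE p (fun i => B i / ((J ^ t : ℕ) : ℤ)) s - t * Real.log (4 * K)) := by
    rw [CE, CE, ← cB, ← cV, ← av (t * Real.log (4 * K)), ← Finset.sum_sub_distrib,
      ← Finset.sum_sub_distrib, Finset.mul_sum]
    refine Finset.sum_congr rfl fun i _ => ?_
    rw [av]; ring
  rw [L] at hsum
  refine hsum.trans ?_
  calc _ = Real.log J * (∑ k ∈ Finset.range t, ∑ i, p i * max 0 (Ent (cnd p s (s i))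
        (fun i => A i / ((J ^ (k + 1) : ℕ) : ℤ))
        - Ent (cnd p s (s i)) (fun i => A i / ((K * J ^ (k + 1) : ℕ) : ℤ)) - b₀) + 2 * t
        + 4 * J ^ 4 * ((t + 1) * CI p A B s
          + (CE p (fun i => A i + B i) s - CE p A s))) := by
        have e2 : ∀ i, p i * (Real.log J * (∑ k ∈ Finset.range t, max 0
              (Ent (cnd p s (s i)) (fun i => A i / ((J ^ (k + 1) : ℕ) : ℤ))
              - Ent (cnd p s (s i)) (fun i => A i / ((K * J ^ (k + 1) : ℕ) : ℤ)) - b₀) + 2 * t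
            + 4 * J ^ 4 * ((t + 1) * (Ent (cnd p s (s i)) A + Ent (cnd p s (s i)) B
                - Ent (cnd p s (s i)) (fun i => (A i, B i)))
              + (Ent (cnd p s (s i)) (fun i => A i + B i) - Ent (cnd p s (s i)) A))))
            = Real.log J * (∑ k ∈ Finset.range t, p i * max 0
              (Ent (cnd p s (s i)) (fun i => A i / ((J ^ (k + 1) : ℕ) : ℤ))
              - Ent (cnd p s (s i)) (fun i => A i / ((K * J ^ (k + 1) : ℕ) : ℤ)) - b₀)
              + p i * (2 * t)
            + 4 * J ^ 4 * ((t + 1) * (p i * Ent (cnd p s (s i)) A + p i * Ent (cnd p s (s i)) B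
                - p i * Ent (cnd p s (s i)) (fun i => (A i, B i)))
              + (p i * Ent (cnd p s (s i)) (fun i => A i + B i)
                - p i * Ent (cnd p s (s i)) A))) := fun i => by
          rw [← Finset.mul_sum]; ring
        rw [Finset.sum_congr rfl fun i _ => e2 i]
        simp only [← Finset.mul_sum, Finset.sum_add_distrib, Finset.sum_sub_distrib, av, CI, CE]
        rw [Finset.sum_comm, cA, cB, cAB, cX]
        simp only [Finset.mul_sum]
    _ ≤ _ := by
        refine mul_le_mul_of_nonneg_left ?_ hJl
        linarith

/-- Probability that `Y` avoids the set `F (g)`. -/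
def bad (p : ι → ℝ) (Y : ι → κ) (g : ι → κ') (F : κ' → Finset κ) : ℝ :=
  ∑ i, p i * (if Y i ∈ F (g i) then 0 else 1)

/-- The entropy of `f` is at most about `log R` up to the information it shares with `g`, if `f` is
mostly determined by `g` and one of `R` values. -/
lemma Ent_le_bad {p : ι → ℝ} (hp : ∀ i, 0 ≤ p i) (h1 : ∑ i, p i = 1) (f Y : ι → ℤ) (g : ι → κ')
    (hf : ∀ i j, g i = g j → Y i = Y j → |f i - f j| ≤ 1) (F : κ' → Finset ℤ) {R N : ℝ}
    (hR1 : 1 ≤ R) (hN1 : 1 ≤ N) (hR : ∀ d, ((F d).card : ℝ) ≤ R) (S : Finset ℤ)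
    (hYS : ∀ i, Y i ∈ S) (hS : (S.card : ℝ) ≤ N) :
    Ent p f - Real.log (6 * R)
      ≤ Ent p f + Ent p g - Ent p (fun i => (f i, g i)) + bad p Y g F * Real.log (2 * N) := by
  let t : ℤ → κ' → ℝ := fun y d => if y ∈ F d then 1 / (2 * R) else 1 / (2 * N)
  have ht0 : ∀ y d, 0 < t y d := fun y d => by simp only [t]; split_ifs <;> positivity
  have hg := gibbs hp Y g t (fun _ => S) (fun i _ => hYS i) (fun y d => (ht0 y d).le)
    (fun i _ => ht0 _ _) (fun i _ => by
      calc ∑ y ∈ S, t y (g i)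
          ≤ ∑ y ∈ S, ((if y ∈ F (g i) then 1 / (2 * R) else 0) + 1 / (2 * N)) := by
            refine Finset.sum_le_sum fun x _ => ?_
            simp only [t]; split_ifs
            · linarith [show (0 : ℝ) ≤ 1 / (2 * N) by positivity]
            · simp
        _ ≤ 1 / 2 + 1 / 2 := by
            rw [Finset.sum_add_distrib]
            refine add_le_add ?_ ?_
            · rw [← Finset.sum_filter, Finset.sum_const, nsmul_eq_mul]
              have hsub : S.filter (fun x => x ∈ F (g i)) ⊆ F (g i) := by
                intro x hx; exact (Finset.mem_filter.1 hx).2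
              have hcard : ((S.filter (fun x => x ∈ F (g i))).card : ℝ) ≤ R :=
                le_trans (by exact_mod_cast Finset.card_le_card hsub) (hR (g i))
              rw [mul_one_div, div_le_iff₀ (by positivity)]
              linarith
            · rw [Finset.sum_const, nsmul_eq_mul, mul_one_div, div_le_iff₀ (by positivity)]
              linarith
        _ = 1 := by norm_num)
  have h2 : ∑ i, p i * (-Real.log (t (Y i) (g i)))
      ≤ Real.log (2 * R) + bad p Y g F * Real.log (2 * N) := by
    have e : Real.log (2 * R) = ∑ i, p i * Real.log (2 * R) := by
      rw [← Finset.sum_mul, h1, one_mul]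
    rw [e, bad, Finset.sum_mul, ← Finset.sum_add_distrib]
    refine Finset.sum_le_sum fun i _ => ?_
    rw [mul_assoc, ← mul_add]
    refine mul_le_mul_of_nonneg_left ?_ (hp i)
    have r1 : 0 ≤ Real.log (2 * R) := Real.log_nonneg (by linarith)
    simp only [t]
    split_ifs
    · rw [one_div, Real.log_inv]; simp
    · rw [one_div, Real.log_inv]; linarith
  have h3 := Ent_osc hp h1 f (fun i => (Y i, g i)) 1 (fun i j h => by
    simp only [Prod.mk.injEq] at h
    exact_mod_cast hf i j h.2 h.1)
  have h4 : Ent p (fun i => (f i, g i)) ≤ Ent p (fun i => (f i, (Y i, g i))) :=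
    Ent_mono hp fun i j h => by simp only [Prod.mk.injEq] at h ⊢; exact ⟨h.1, h.2.2⟩
  have h5 : Real.log (6 * R) = Real.log 3 + Real.log (2 * R) := by
    rw [← Real.log_mul (by norm_num) (by positivity)]; ring_nf
  norm_num at h3
  linarith

/-- The excess is small if, given `g`, the variable `f` is almost carried by few values, and `f`
is almost independent of `g` given `z`. -/
lemma exc_le {p : ι → ℝ} (hp : ∀ i, 0 ≤ p i) (z : ι → κ)
    (f Y : ι → ℤ) (g : ι → κ') (hf : ∀ i j, g i = g j → Y i = Y j → |f i - f j| ≤ 1)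
    (F : κ' → Finset ℤ) {R N : ℝ}
    (hR1 : 1 ≤ R) (hN1 : 1 ≤ N) (hR : ∀ d, ((F d).card : ℝ) ≤ R) (S : Finset ℤ)
    (hYS : ∀ i, Y i ∈ S) (hS : (S.card : ℝ) ≤ N) :
    exc p f z (Real.log (6 * R)) ≤ CI p f g z + bad p Y g F * Real.log (2 * N) := by
  have hN0 : 0 ≤ Real.log (2 * N) := Real.log_nonneg (by linarith)
  have hbad : ∑ l, p l * bad (cnd p z (z l)) Y g F = bad p Y g F := by
    simp only [bad]
    exact sum_cnd hp z _
  rw [CI, CE, CE, CE, ← Ent_cnd hp z f, ← Ent_cnd hp z g, ← Ent_cnd hp z (fun i => (f i, g i)),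
    ← hbad, exc, Finset.sum_mul, ← Finset.sum_add_distrib, ← Finset.sum_sub_distrib,
    ← Finset.sum_add_distrib]
  refine Finset.sum_le_sum fun l _ => ?_
  by_cases hl : p l = 0
  · simp [hl]
  have q0 := cnd_nonneg hp z (z l)
  have q1 := cnd_sum (pm_pos hp z hl).ne'
  have h2 := Ent_le_bad q0 q1 f Y g hf F hR1 hN1 hR S hYS hS
  have h3 := Ent_pair_le_add q0 q1 f g
  have h4 : 0 ≤ bad (cnd p z (z l)) Y g F :=
    Finset.sum_nonneg fun i _ => mul_nonneg (q0 i) (by split_ifs <;> norm_num)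
  have h5 := max_le (a := 0) (by nlinarith [mul_nonneg h4 hN0]) h2
  have := mul_le_mul_of_nonneg_left h5 (hp l)
  linarith

end Static3
end CPE

namespace CPE

/-! ### Entropy of finite-valued functions under a measure -/

section Omega

variable {Ω : Type} [MeasurableSpace Ω] {κ κ' κ'' τ : Type}

/-- A function with finite range all of whose fibres are measurable. -/
structure FR (f : Ω → κ) : Prop where
  meas : ∀ s : Set κ, MeasurableSet (f ⁻¹' s)
  fin : (range f).Finite

lemma FR.of_fibers {f : Ω → κ} (h : ∀ k, MeasurableSet (f ⁻¹' {k})) (hf : (range f).Finite) :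
    FR f := by
  refine ⟨fun s => ?_, hf⟩
  have : f ⁻¹' s = ⋃ k ∈ (s ∩ range f), f ⁻¹' {k} := by
    ext x; simp
  rw [this]
  exact (hf.subset inter_subset_right).measurableSet_biUnion fun k _ => h k

lemma FR.of_measurable [MeasurableSpace κ] [MeasurableSingletonClass κ] {f : Ω → κ}
    (h : Measurable f) (hf : (range f).Finite) : FR f :=
  FR.of_fibers (fun k => h (measurableSet_singleton k)) hf

lemma FR.comp {f : Ω → κ} (hf : FR f) (φ : κ → κ') : FR (fun x => φ (f x)) :=
  ⟨fun s => hf.meas (φ ⁻¹' s), by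
    have : range (fun x => φ (f x)) = φ '' range f := by rw [← range_comp]; rfl
    rw [this]; exact hf.fin.image φ⟩

lemma FR.pair {f : Ω → κ} {g : Ω → κ'} (hf : FR f) (hg : FR g) : FR (fun x => (f x, g x)) := by
  refine FR.of_fibers (fun k => ?_) ((hf.fin.prod hg.fin).subset ?_)
  · have : (fun x => (f x, g x)) ⁻¹' {k} = f ⁻¹' {k.1} ∩ g ⁻¹' {k.2} := by
      ext x; simp [Prod.ext_iff]
    rw [this]; exact (hf.meas _).inter (hg.meas _)
  · rintro _ ⟨x, rfl⟩; exact ⟨⟨x, rfl⟩, ⟨x, rfl⟩⟩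

lemma FR.pi {n : ℕ} {f : Fin n → Ω → κ} (hf : ∀ i, FR (f i)) : FR (fun x i => f i x) := by
  refine FR.of_fibers (fun k => ?_) ((Set.Finite.pi' fun i => (hf i).fin).subset ?_)
  · have : (fun x i => f i x) ⁻¹' {k} = ⋂ i, f i ⁻¹' {k i} := by
      ext x; simp [funext_iff]
    rw [this]; exact MeasurableSet.iInter fun i => (hf i).meas _
  · rintro _ ⟨x, rfl⟩ i; exact ⟨x, rfl⟩

lemma FR.precomp {f : Ω → κ} (hf : FR f) {S : Ω → Ω} (hS : Measurable S) :
    FR (fun x => f (S x)) :=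
  ⟨fun s => hS (hf.meas s), hf.fin.subset (by rintro _ ⟨x, rfl⟩; exact ⟨S x, rfl⟩)⟩

/-- The sum of `τ` over the masses of the fibres of `f`. -/
def Ht (τ : ℝ → ℝ) (μ : Measure Ω) (f : Ω → κ) : ℝ := ∑ᶠ k, τ (μ.real (f ⁻¹' {k}))

lemma preimage_empty' {Ω : Type} {f : Ω → κ} {k : κ} (h : k ∉ range f) : f ⁻¹' {k} = ∅ := by
  ext x; simp only [mem_preimage, mem_singleton_iff, mem_empty_iff_false, iff_false]
  exact fun e => h ⟨x, e⟩

/-- Shannon entropy of `f` under the measure `μ`. -/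
def Hm (μ : Measure Ω) (f : Ω → κ) : ℝ := Ht Real.negMulLog μ f

lemma Ht_eq {τ : ℝ → ℝ} (h0 : τ 0 = 0) (μ : Measure Ω) (f : Ω → κ) {s : Finset κ}
    (hs : ∀ x, f x ∈ s) : Ht τ μ f = ∑ k ∈ s, τ (μ.real (f ⁻¹' {k})) := by
  refine finsum_eq_sum_of_support_subset _ fun k hk => ?_
  by_contra hks
  refine hk ?_
  simp only
  rw [preimage_empty', measureReal_empty, h0]
  rintro ⟨x, rfl⟩; exact hks (hs x)

lemma FR.mem {f : Ω → κ} (hf : FR f) (x : Ω) : f x ∈ hf.fin.toFinset := by simp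

/-- A finite-valued map `Φ` on a probability space is modelled by a finite weighted set on which
all functions of `Φ` have the same laws. -/
lemma transport (μ : Measure Ω) [IsProbabilityMeasure μ] {Φ : Ω → τ} (hΦ : FR Φ) :
    ∃ (ι : Type) (_ : Fintype ι) (p : ι → ℝ) (e : ι → τ), (∀ i, 0 ≤ p i) ∧ (∑ i, p i = 1) ∧
      (∀ i, ∃ x, Φ x = e i) ∧
      (∀ {κ : Type} (φ : τ → κ) (k : κ),
        pm p (fun i => φ (e i)) k = μ.real ((fun x => φ (Φ x)) ⁻¹' {k})) ∧
      (∀ {κ : Type} (φ : τ → κ), Ent p (fun i => φ (e i)) = Hm μ (fun x => φ (Φ x))) := by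
  have hpm : ∀ {κ : Type} (φ : τ → κ) (k : κ), (pm (ι := hΦ.fin.toFinset)
      (fun i => μ.real (Φ ⁻¹' {i.1})) (fun i => φ i.1) k)
        = μ.real ((fun x => φ (Φ x)) ⁻¹' {k}) := by
    intro κ φ k
    have e1 : (fun x => φ (Φ x)) ⁻¹' {k}
        = ⋃ i ∈ hΦ.fin.toFinset.filter (fun i => φ i = k), Φ ⁻¹' {i} := by
      ext x; simp
    rw [e1, measureReal_biUnion_finset, Finset.sum_filter, pm,
      ← Finset.sum_coe_sort hΦ.fin.toFinset
        (fun i => if φ i = k then μ.real (Φ ⁻¹' {i}) else 0)]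
    · intro i _ j _ hij
      exact Disjoint.preimage _ (by simpa using hij)
    · exact fun i _ => hΦ.meas _
  have h1 : ∑ i : hΦ.fin.toFinset, μ.real (Φ ⁻¹' {i.1}) = 1 := by
    have := hpm (fun _ => ()) ()
    simp only [pm, if_true] at this
    rw [this]; simp
  refine ⟨hΦ.fin.toFinset, inferInstance, fun i => μ.real (Φ ⁻¹' {i.1}), fun i => i.1,
    fun i => measureReal_nonneg, h1, fun i => ?_, hpm, fun {κ} φ => ?_⟩
  · exact hΦ.fin.mem_toFinset.1 i.2
  · rw [Hm, Ht_eq Real.negMulLog_zero μ _ (s := hΦ.fin.toFinset.image φ), Ent_eq]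
    · exact Finset.sum_congr rfl fun k _ => by rw [hpm]
    · intro i; exact Finset.mem_image_of_mem _ i.2
    · intro x; exact Finset.mem_image_of_mem _ (hΦ.mem x)

variable (μ : Measure Ω) [IsProbabilityMeasure μ]

lemma Hm_mono {f : Ω → κ} {g : Ω → κ'} (hf : FR f) (hg : FR g)
    (h : ∀ x y, f x = f y → g x = g y) : Hm μ g ≤ Hm μ f := by
  obtain ⟨ι, _, p, e, hp, h1, hx, -, hE⟩ := transport μ (hf.pair hg)
  rw [← hE Prod.fst, ← hE Prod.snd]
  refine Ent_mono hp fun i j hij => ?_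
  obtain ⟨x, hxi⟩ := hx i
  obtain ⟨y, hyj⟩ := hx j
  rw [← hxi, ← hyj] at hij
  rw [← hxi, ← hyj]
  exact h x y hij

lemma Hm_nonneg {f : Ω → κ} (hf : FR f) : 0 ≤ Hm μ f := by
  obtain ⟨ι, _, p, e, hp, h1, hx, -, hE⟩ := transport μ hf
  change _ ≤ Hm μ (fun x => id (f x))
  rw [← hE id]
  exact Ent_nonneg hp h1.le _

lemma Hm_submod {f : Ω → κ} {g : Ω → κ'} {c : Ω → κ''} (hf : FR f) (hg : FR g) (hc : FR c) :
    Hm μ (fun x => (f x, g x, c x)) + Hm μ c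
      ≤ Hm μ (fun x => (f x, c x)) + Hm μ (fun x => (g x, c x)) := by
  obtain ⟨ι, _, p, e, hp, h1, hx, -, hE⟩ := transport μ (hf.pair (hg.pair hc))
  have := Ent_submod hp (fun i => (e i).1) (fun i => (e i).2.1) (fun i => (e i).2.2)
  have e1 := hE (fun q => (q.1, q.2.1, q.2.2))
  have e2 := hE (fun q => q.2.2)
  have e3 := hE (fun q => (q.1, q.2.2))
  have e4 := hE (fun q => (q.2.1, q.2.2))
  simp only at e1 e2 e3 e4
  rwa [e1, e2, e3, e4] at this

lemma Hm_osc {f : Ω → ℤ} {g : Ω → κ} {c : Ω → κ'} (hf : FR f) (hg : FR g) (hc : FR c) (r : ℕ)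
    (h : ∀ x y, g x = g y → c x = c y → |f x - f y| ≤ r) :
    Hm μ (fun x => (f x, c x)) ≤ Hm μ (fun x => (g x, c x)) + Real.log (2 * r + 1) := by
  obtain ⟨ι, _, p, e, hp, h1, hx, -, hE⟩ := transport μ (hf.pair (hg.pair hc))
  have := Ent_le_osc hp h1 (fun i => (e i).1) (fun i => (e i).2.1) (fun i => (e i).2.2) r (by
    intro i j h1 h2
    obtain ⟨x, hxi⟩ := hx i
    obtain ⟨y, hyj⟩ := hx j
    rw [← hxi, ← hyj] at h1 h2
    rw [← hxi, ← hyj]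
    exact h x y h1 h2)
  have e3 := hE (fun q => (q.1, q.2.2))
  have e4 := hE (fun q => (q.2.1, q.2.2))
  simp only at e3 e4
  rwa [e3, e4] at this

lemma Hm_card {f : Ω → κ} (hf : FR f) {N : ℝ} (hN : 0 < N) (S : Finset κ) (hS : ∀ x, f x ∈ S)
    (hc : (S.card : ℝ) ≤ N) : Hm μ f ≤ Real.log N := by
  obtain ⟨ι, _, p, e, hp, h1, hx, -, hE⟩ := transport μ hf
  have := Ent_card hp h1 e (fun _ => ()) hN (fun _ => S) (by
    intro i
    obtain ⟨x, hxi⟩ := hx i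
    rw [← hxi]; exact hS x) (fun _ => hc)
  rw [Ent_const h1, zero_add] at this
  refine le_trans ?_ this
  change Hm μ (fun x => id (f x)) ≤ _
  rw [← hE id]
  exact Ent_le_pair_left hp e _

lemma Hm_const (c : κ) : Hm μ (fun _ => c) = 0 := by
  rw [Hm, Ht_eq Real.negMulLog_zero μ _ (s := {c}) (by simp)]
  simp

end Omega
end CPE

namespace CPE

/-! ### Dyadic digits and discretised projections in the plane -/

/-- Points outside the unit square are moved to the origin, so that all the discretisations
below have finite range on the whole plane. -/
def clip (x : Fin 2 → ℝ) : Fin 2 → ℝ := if x ∈ unitCube 2 then x else 0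

/-- The index of the dyadic cell of generation `k`. -/
def Dk (k : ℕ) (x : Fin 2 → ℝ) : ℤ × ℤ := (⌊(2 : ℝ) ^ k * clip x 0⌋, ⌊(2 : ℝ) ^ k * clip x 1⌋)

/-- The position inside the dyadic cell of generation `k`, rescaled to the unit square. -/
def Sk (k : ℕ) (x : Fin 2 → ℝ) : Fin 2 → ℝ := fun i => Int.fract ((2 : ℝ) ^ k * clip x i)

/-- The projection in direction `θ`, discretised at scale `2 ^ (-m)`. -/
def U (θ : ℝ) (m : ℕ) (x : Fin 2 → ℝ) : ℤ := ⌊(2 : ℝ) ^ m * projDir θ (clip x)⌋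

/-- A lattice point of the plane as a real vector. -/
def zv (d : ℤ × ℤ) : Fin 2 → ℝ := ![(d.1 : ℝ), (d.2 : ℝ)]

lemma zero_mem_cube : (0 : Fin 2 → ℝ) ∈ unitCube 2 := fun i => by simp

lemma clip_mem (x : Fin 2 → ℝ) : clip x ∈ unitCube 2 := by
  unfold clip; split_ifs with h
  exacts [h, zero_mem_cube]

lemma clip_of_mem {x : Fin 2 → ℝ} (h : x ∈ unitCube 2) : clip x = x := if_pos h

lemma Sk_mem (k : ℕ) (x : Fin 2 → ℝ) : Sk k x ∈ unitCube 2 :=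
  fun _ => ⟨Int.fract_nonneg _, Int.fract_lt_one _⟩

lemma abs_proj_le {x : Fin 2 → ℝ} (hx : x ∈ unitCube 2) (θ : ℝ) : |projDir θ x| ≤ 2 := by
  have h0 := hx 0
  have h1 := hx 1
  have c := Real.abs_cos_le_one θ
  have s := Real.abs_sin_le_one θ
  calc |projDir θ x| ≤ |x 0 * Real.cos θ| + |x 1 * Real.sin θ| := abs_add_le _ _
    _ ≤ 1 * 1 + 1 * 1 := by
        rw [abs_mul, abs_mul]
        gcongr
        · exact abs_le.2 ⟨by linarith, h0.2.le⟩
        · exact abs_le.2 ⟨by linarith, h1.2.le⟩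
    _ = 2 := by norm_num

/-- Self-similarity of projections: the projection splits into that of the cell index and that
of the relative position. -/
lemma proj_scale (θ : ℝ) (k : ℕ) (x : Fin 2 → ℝ) :
    (2 : ℝ) ^ k * projDir θ (clip x) = projDir θ (zv (Dk k x)) + projDir θ (Sk k x) := by
  have h0 := Int.floor_add_fract ((2 : ℝ) ^ k * clip x 0)
  have h1 := Int.floor_add_fract ((2 : ℝ) ^ k * clip x 1)
  simp only [projDir, zv, Dk, Sk, Matrix.cons_val_zero, Matrix.cons_val_one]
  linear_combination (-Real.cos θ) * h0 - Real.sin θ * h1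

lemma floor_diff {a b r : ℝ} (n : ℕ) (h : |a - b| ≤ r) (hr : r < n) : |⌊a⌋ - ⌊b⌋| ≤ (n : ℤ) := by
  have h1 := Int.floor_le a
  have h2 := Int.lt_floor_add_one a
  have h3 := Int.floor_le b
  have h4 := Int.lt_floor_add_one b
  obtain ⟨h5, h6⟩ := abs_le.1 h
  rw [abs_le]
  constructor
  · have : ((-(n : ℤ) - 1 : ℤ) : ℝ) < ((⌊a⌋ - ⌊b⌋ : ℤ) : ℝ) := by push_cast; linarith
    have := Int.cast_lt.1 this; omega
  · have : ((⌊a⌋ - ⌊b⌋ : ℤ) : ℝ) < (((n : ℤ) + 1 : ℤ) : ℝ) := by push_cast; linarith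
    have := Int.cast_lt.1 this; omega

lemma floor_eq_lt {a b : ℝ} (h : ⌊a⌋ = ⌊b⌋) : |a - b| < 1 := Int.abs_sub_lt_one_of_floor_eq_floor h

lemma floor_bound {a : ℝ} {n : ℕ} (h : |a| ≤ n) : |⌊a⌋| ≤ (n : ℤ) := by
  obtain ⟨h5, h6⟩ := abs_le.1 h
  rw [abs_le]
  exact ⟨Int.le_floor.2 (by push_cast; exact h5), by
    have := Int.floor_le_floor h6; simpa using this⟩

lemma U_div (θ : ℝ) (m n : ℕ) (x : Fin 2 → ℝ) : U θ m x = U θ (m + n) x / ((2 ^ n : ℕ) : ℤ) := by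
  have : (2 : ℝ) ^ m * projDir θ (clip x)
      = (2 : ℝ) ^ (m + n) * projDir θ (clip x) / ((2 ^ n : ℕ) : ℝ) := by
    push_cast; rw [pow_add]; field_simp
  rw [U, this, U, Int.floor_div_natCast]

lemma U_mono (θ : ℝ) {m n : ℕ} (h : m ≤ n) {x y : Fin 2 → ℝ} (hxy : U θ n x = U θ n y) :
    U θ m x = U θ m y := by
  obtain ⟨k, rfl⟩ := Nat.exists_eq_add_of_le h
  rw [U_div θ m k, U_div θ m k, hxy]

lemma U_shift (θ : ℝ) (m k : ℕ) {x y : Fin 2 → ℝ} (hD : Dk k x = Dk k y) :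
    (U θ m (Sk k x) = U θ m (Sk k y) → |U θ (m + k) x - U θ (m + k) y| ≤ (1 : ℕ)) ∧
    (U θ (m + k) x = U θ (m + k) y → |U θ m (Sk k x) - U θ m (Sk k y)| ≤ (1 : ℕ)) := by
  have e : (2 : ℝ) ^ (m + k) * projDir θ (clip x) - (2 : ℝ) ^ (m + k) * projDir θ (clip y)
      = (2 : ℝ) ^ m * projDir θ (Sk k x) - (2 : ℝ) ^ m * projDir θ (Sk k y) := by
    have h1 := proj_scale θ k x
    have h2 := proj_scale θ k y
    rw [hD] at h1
    rw [pow_add]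
    linear_combination (2 : ℝ) ^ m * (h1 - h2)
  simp only [U, clip_of_mem (Sk_mem k _)]
  constructor
  · intro h
    have := floor_eq_lt h
    rw [← e] at this
    exact floor_diff 1 le_rfl (by exact_mod_cast this)
  · intro h
    have := floor_eq_lt h
    rw [e] at this
    exact floor_diff 1 le_rfl (by exact_mod_cast this)

lemma U_bound (θ : ℝ) (m : ℕ) (x : Fin 2 → ℝ) : |U θ m x| ≤ ((2 * 2 ^ m : ℕ) : ℤ) := by
  refine floor_bound ?_
  rw [abs_mul, abs_of_pos (by positivity)]
  push_cast
  nlinarith [abs_proj_le (clip_mem x) θ, show (0 : ℝ) < 2 ^ m by positivity]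

lemma Dk_bound (k : ℕ) (x : Fin 2 → ℝ) : |(Dk k x).1| ≤ ((2 ^ k : ℕ) : ℤ) ∧
    |(Dk k x).2| ≤ ((2 ^ k : ℕ) : ℤ) := by
  have : ∀ i, |(2 : ℝ) ^ k * clip x i| ≤ ((2 ^ k : ℕ) : ℝ) := fun i => by
    have := clip_mem x i
    rw [abs_mul, abs_of_pos (by positivity), abs_of_nonneg this.1]
    push_cast
    exact mul_le_of_le_one_right (by positivity) this.2.le
  exact ⟨floor_bound (this 0), floor_bound (this 1)⟩

lemma measurableSet_cube : MeasurableSet (unitCube 2) := by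
  have : unitCube 2 = ⋂ i, {y : Fin 2 → ℝ | 0 ≤ y i ∧ y i < 1} := by ext; simp [unitCube]
  rw [this]
  refine MeasurableSet.iInter fun i => MeasurableSet.inter ?_ ?_
  · exact measurableSet_le measurable_const (measurable_pi_apply i)
  · exact measurableSet_lt (measurable_pi_apply i) measurable_const

lemma measurable_clip : Measurable clip :=
  Measurable.ite measurableSet_cube measurable_id measurable_const

lemma measurable_clip_apply (i : Fin 2) : Measurable fun x => clip x i :=
  (measurable_pi_apply i).comp measurable_clip

lemma measurable_projDir (θ : ℝ) : Measurable (projDir θ) := by unfold projDir; fun_prop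

lemma measurable_Sk (k : ℕ) : Measurable (Sk k) :=
  measurable_pi_lambda _ fun i => measurable_fract.comp ((measurable_clip_apply i).const_mul _)

lemma measurable_U (θ : ℝ) (m : ℕ) : Measurable (U θ m) :=
  Int.measurable_floor.comp (((measurable_projDir θ).comp measurable_clip).const_mul _)

lemma measurable_Dk (k : ℕ) : Measurable (Dk k) :=
  (Int.measurable_floor.comp ((measurable_clip_apply 0).const_mul _)).prodMk
    (Int.measurable_floor.comp ((measurable_clip_apply 1).const_mul _))

lemma finite_of_bound {X : Type*} {f : X → ℤ} {n : ℤ} (h : ∀ x, |f x| ≤ n) : (range f).Finite :=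
  (Set.finite_Icc (-n) n).subset (by rintro _ ⟨x, rfl⟩; exact abs_le.1 (h x))

lemma FR_U (θ : ℝ) (m : ℕ) : FR (U θ m) :=
  FR.of_measurable (measurable_U θ m) (finite_of_bound (U_bound θ m))

lemma FR_Dk (k : ℕ) : FR (Dk k) :=
  FR.of_measurable (measurable_Dk k)
    (((Set.finite_Icc (-((2 ^ k : ℕ) : ℤ)) ((2 ^ k : ℕ) : ℤ)).prod
      (Set.finite_Icc (-((2 ^ k : ℕ) : ℤ)) ((2 ^ k : ℕ) : ℤ))).subset (by
        rintro _ ⟨x, rfl⟩; exact ⟨abs_le.1 (Dk_bound k x).1, abs_le.1 (Dk_bound k x).2⟩))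

end CPE

namespace CPE

/-! ### Components of a measure, and invariance under magnification -/

lemma mem_dcell_iff {k : ℕ} {x y : Fin 2 → ℝ} (hx : x ∈ unitCube 2) (hy : y ∈ unitCube 2) :
    y ∈ dcell k x ↔ Dk k y = Dk k x := by
  simp only [dcell, Dk, clip_of_mem hx, clip_of_mem hy, mem_ofPred_eq, Fin.forall_fin_two,
    Prod.mk.injEq]

lemma dscale_eq {k : ℕ} {x y : Fin 2 → ℝ} (hx : x ∈ unitCube 2) (hy : y ∈ unitCube 2)
    (h : Dk k y = Dk k x) : dscale k x y = Sk k y := by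
  have h' := (mem_dcell_iff hx hy).2 h
  funext i
  simp only [dscale, Sk, clip_of_mem hy, ← h' i, Int.self_sub_floor]

lemma measurable_dscale (k : ℕ) (x : Fin 2 → ℝ) : Measurable (dscale k x) := by
  unfold dscale; fun_prop

lemma measurableSet_dcell (k : ℕ) (x : Fin 2 → ℝ) : MeasurableSet (dcell k x) := by
  have : dcell k x = ⋂ i, (fun y : Fin 2 → ℝ => ⌊(2 : ℝ) ^ k * y i⌋) ⁻¹' {⌊(2 : ℝ) ^ k * x i⌋} := by
    ext; simp [dcell]
  rw [this]
  refine MeasurableSet.iInter fun i => ?_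
  exact (Int.measurable_floor.comp ((measurable_pi_apply i).const_mul _)) (measurableSet_singleton _)

lemma measure_eq_of_cube {μ : Measure (Fin 2 → ℝ)} (hμ : ∀ᵐ x ∂μ, x ∈ unitCube 2)
    {s t : Set (Fin 2 → ℝ)} (h : ∀ x ∈ unitCube 2, x ∈ s ↔ x ∈ t) : μ s = μ t := by
  refine measure_congr ?_
  filter_upwards [hμ] with x hx
  exact propext (h x hx)

lemma dcell_measure {μ : Measure (Fin 2 → ℝ)} (hμ : ∀ᵐ x ∂μ, x ∈ unitCube 2) (k : ℕ)
    {x : Fin 2 → ℝ} (hx : x ∈ unitCube 2) : μ (dcell k x) = μ (Dk k ⁻¹' {Dk k x}) :=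
  measure_eq_of_cube hμ fun y hy => by rw [mem_dcell_iff hx hy]; rfl

lemma component_raw (μ : Measure (Fin 2 → ℝ)) (k : ℕ) (x : Fin 2 → ℝ) {E : Set (Fin 2 → ℝ)}
    (hE : MeasurableSet E) :
    component μ k x E = (μ (dcell k x))⁻¹ * μ (dscale k x ⁻¹' E ∩ dcell k x) := by
  rw [component, Measure.smul_apply, Measure.map_apply (measurable_dscale k x) hE,
    Measure.restrict_apply (measurable_dscale k x hE), smul_eq_mul]

lemma component_apply {μ : Measure (Fin 2 → ℝ)} (hμ : ∀ᵐ x ∂μ, x ∈ unitCube 2) (k : ℕ)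
    {x : Fin 2 → ℝ} (hx : x ∈ unitCube 2) {E : Set (Fin 2 → ℝ)} (hE : MeasurableSet E) :
    component μ k x E
      = (μ (Dk k ⁻¹' {Dk k x}))⁻¹ * μ (Sk k ⁻¹' E ∩ Dk k ⁻¹' {Dk k x}) := by
  rw [component_raw μ k x hE, dcell_measure hμ k hx]
  congr 1
  refine measure_eq_of_cube hμ fun y hy => ?_
  simp only [mem_inter_iff, mem_preimage, mem_singleton_iff, mem_dcell_iff hx hy]
  constructor
  · rintro ⟨h1, h2⟩; exact ⟨by rwa [dscale_eq hx hy h2] at h1, h2⟩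
  · rintro ⟨h1, h2⟩; exact ⟨by rwa [dscale_eq hx hy h2], h2⟩

lemma component_prob {μ : Measure (Fin 2 → ℝ)} [IsProbabilityMeasure μ]
    (hμ : ∀ᵐ x ∂μ, x ∈ unitCube 2) (k : ℕ) {x : Fin 2 → ℝ} (hx : x ∈ unitCube 2)
    (h0 : μ (Dk k ⁻¹' {Dk k x}) ≠ 0) : IsProbabilityMeasure (component μ k x) := by
  refine ⟨?_⟩
  rw [component_apply hμ k hx MeasurableSet.univ, preimage_univ, univ_inter]
  exact ENNReal.inv_mul_cancel h0 (measure_ne_top _ _)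

lemma component_cube {μ : Measure (Fin 2 → ℝ)}
    (hμ : ∀ᵐ x ∂μ, x ∈ unitCube 2) (k : ℕ) {x : Fin 2 → ℝ} (hx : x ∈ unitCube 2) :
    ∀ᵐ y ∂(component μ k x), y ∈ unitCube 2 := by
  rw [ae_iff]
  change component μ k x (unitCube 2)ᶜ = 0
  rw [component_apply hμ k hx measurableSet_cube.compl]
  have : Sk k ⁻¹' (unitCube 2)ᶜ = ∅ := by
    ext y; simp [Sk_mem k y]
  rw [this]; simp

lemma componentP_coe {μ : Measure (Fin 2 → ℝ)} {k : ℕ} {x : Fin 2 → ℝ}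
    (h : IsProbabilityMeasure (component μ k x)) :
    (componentP μ k x : Measure (Fin 2 → ℝ)) = component μ k x := by
  have : componentP μ k x = ⟨component μ k x, h⟩ := dif_pos h
  rw [this]; rfl

lemma Dk_div (k : ℕ) (x : Fin 2 → ℝ) :
    Dk k x = ((Dk (k + 1) x).1 / 2, (Dk (k + 1) x).2 / 2) := by
  have : ∀ i, ⌊(2 : ℝ) ^ k * clip x i⌋ = ⌊(2 : ℝ) ^ (k + 1) * clip x i⌋ / 2 := fun i => by
    have : (2 : ℝ) ^ k * clip x i = (2 : ℝ) ^ (k + 1) * clip x i / (2 : ℕ) := by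
      push_cast; rw [pow_succ]; field_simp
    rw [this, Int.floor_div_natCast]; rfl
  simp only [Dk, this]

lemma Sk_succ (k : ℕ) (x : Fin 2 → ℝ) : Sk 1 (Sk k x) = Sk (k + 1) x := by
  funext i
  have : (2 : ℝ) ^ 1 * Sk k x i = (2 : ℝ) ^ (k + 1) * clip x i
      - ((2 * ⌊(2 : ℝ) ^ k * clip x i⌋ : ℤ) : ℝ) := by
    simp only [Sk, Int.fract]; push_cast; ring
  change Int.fract ((2 : ℝ) ^ 1 * clip (Sk k x) i) = _
  rw [clip_of_mem (Sk_mem k x), this, Int.fract_sub_intCast]; rfl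

lemma Dk_succ (k : ℕ) (x : Fin 2 → ℝ) :
    Dk 1 (Sk k x) = ((Dk (k + 1) x).1 - 2 * (Dk k x).1, (Dk (k + 1) x).2 - 2 * (Dk k x).2) := by
  have : ∀ i, (2 : ℝ) ^ 1 * Sk k x i = (2 : ℝ) ^ (k + 1) * clip x i
      - ((2 * ⌊(2 : ℝ) ^ k * clip x i⌋ : ℤ) : ℝ) := fun i => by
    simp only [Sk, Int.fract]; push_cast; ring
  simp only [Dk, clip_of_mem (Sk_mem k x), this, Int.floor_sub_intCast]

lemma Dk_succ_iff (k : ℕ) (x y : Fin 2 → ℝ) :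
    Dk (k + 1) y = Dk (k + 1) x ↔ Dk 1 (Sk k y) = Dk 1 (Sk k x) ∧ Dk k y = Dk k x := by
  constructor
  · intro h
    have h2 : Dk k y = Dk k x := by rw [Dk_div, Dk_div k x, h]
    exact ⟨by rw [Dk_succ, Dk_succ, h, h2], h2⟩
  · rintro ⟨h1, h2⟩
    rw [Dk_succ, Dk_succ, h2, Prod.mk.injEq] at h1
    exact Prod.ext (by linarith [h1.1]) (by linarith [h1.2])

lemma Dk_zero (x : Fin 2 → ℝ) : Dk 0 x = (0, 0) := by
  have : ∀ i, ⌊clip x i⌋ = 0 := fun i => Int.floor_eq_zero_iff.2 (clip_mem x i)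
  simp [Dk, this]

lemma Sk_zero {x : Fin 2 → ℝ} (hx : x ∈ unitCube 2) : Sk 0 x = x := by
  funext i
  simp only [Sk, pow_zero, one_mul, clip_of_mem hx]
  exact Int.fract_eq_self.2 (hx i)

/-- Components of components are components. -/
lemma component_succ {μ : Measure (Fin 2 → ℝ)} [IsProbabilityMeasure μ]
    (hμ : ∀ᵐ x ∂μ, x ∈ unitCube 2) (k : ℕ) {x : Fin 2 → ℝ} (hx : x ∈ unitCube 2)
    (h0 : μ (Dk k ⁻¹' {Dk k x}) ≠ 0) :
    component (component μ k x) 1 (Sk k x) = component μ (k + 1) x := by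
  ext E hE
  rw [component_apply (component_cube hμ k hx) 1 (Sk_mem k x) hE,
    component_apply hμ k hx ((FR_Dk 1).meas _),
    component_apply hμ k hx ((measurable_Sk 1 hE).inter ((FR_Dk 1).meas _)),
    component_apply hμ (k + 1) hx hE]
  have e1 : Sk k ⁻¹' (Dk 1 ⁻¹' {Dk 1 (Sk k x)}) ∩ Dk k ⁻¹' {Dk k x}
      = Dk (k + 1) ⁻¹' {Dk (k + 1) x} := by
    ext y; exact (Dk_succ_iff k x y).symm
  have e2 : Sk k ⁻¹' (Sk 1 ⁻¹' E ∩ Dk 1 ⁻¹' {Dk 1 (Sk k x)}) ∩ Dk k ⁻¹' {Dk k x}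
      = Sk (k + 1) ⁻¹' E ∩ Dk (k + 1) ⁻¹' {Dk (k + 1) x} := by
    rw [preimage_inter, inter_assoc, e1]
    congr 1
    ext y; simp only [mem_preimage, Sk_succ]
  rw [e1, e2]
  set c := μ (Dk k ⁻¹' {Dk k x})
  have hc : c ≠ ∞ := measure_ne_top _ _
  rw [ENNReal.mul_inv (Or.inr (measure_ne_top _ _)) (Or.inl (ENNReal.inv_ne_top.2 h0)), inv_inv,
    mul_comm c, mul_assoc, ← mul_assoc c, ENNReal.mul_inv_cancel h0 hc, one_mul]

lemma iterate_CPmag (ν : ProbabilityMeasure (Fin 2 → ℝ))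
    (hν : ∀ᵐ x ∂(ν : Measure (Fin 2 → ℝ)), x ∈ unitCube 2) {x : Fin 2 → ℝ}
    (hx : x ∈ unitCube 2) (k : ℕ) (h0 : (ν : Measure (Fin 2 → ℝ)) (Dk k ⁻¹' {Dk k x}) ≠ 0) :
    CPmag^[k] (ν, x) = (componentP (ν : Measure (Fin 2 → ℝ)) k x, Sk k x) := by
  induction k with
  | zero =>
    have hp := component_prob hν 0 hx h0
    refine Prod.ext (Subtype.ext ?_) (Sk_zero hx).symm
    refine Eq.trans ?_ (componentP_coe hp).symm
    ext E hE
    rw [component_apply hν 0 hx hE]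
    have e1 : Dk 0 ⁻¹' {Dk 0 x} = univ := by ext y; simp [Dk_zero]
    rw [e1, measure_univ, inv_one, one_mul, inter_univ]
    exact measure_eq_of_cube hν fun y hy => by rw [mem_preimage, Sk_zero hy]
  | succ k ih =>
    have hsub : Dk (k + 1) ⁻¹' {Dk (k + 1) x} ⊆ Dk k ⁻¹' {Dk k x} := by
      intro y hy; exact ((Dk_succ_iff k x y).1 hy).2
    have h0' : (ν : Measure (Fin 2 → ℝ)) (Dk k ⁻¹' {Dk k x}) ≠ 0 := fun h =>
      h0 (measure_mono_null hsub h)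
    have hp := component_prob hν k hx h0'
    rw [Function.iterate_succ_apply', ih h0']
    refine Prod.ext ?_ ?_
    · change componentP (componentP (ν : Measure (Fin 2 → ℝ)) k x : Measure _) 1 (Sk k x) = _
      have hc := component_succ hν k hx h0'
      have hp' := component_prob hν (k + 1) hx h0
      rw [componentP_coe hp]
      refine Subtype.ext ?_
      refine (componentP_coe (by rw [hc]; exact hp')).trans (hc.trans (componentP_coe hp').symm)
    · change dscale 1 (Sk k x) (Sk k x) = _
      rw [dscale_eq (Sk_mem k x) (Sk_mem k x) rfl, Sk_succ]

end CPE

namespace CPE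

/-! ### Stationarity of a CP-distribution -/

lemma measurable_coeP {Ω : Type*} [MeasurableSpace Ω] :
    Measurable (fun ν : ProbabilityMeasure Ω => (ν : Measure Ω)) := measurable_subtype_coe

lemma measurable_evalP {Ω : Type*} [MeasurableSpace Ω] {s : Set Ω} (hs : MeasurableSet s) :
    Measurable (fun ν : ProbabilityMeasure Ω => (ν : Measure Ω) s) :=
  (Measure.measurable_coe hs).comp measurable_coeP

lemma measurable_realP {Ω : Type*} [MeasurableSpace Ω] {s : Set Ω} (hs : MeasurableSet s) :
    Measurable (fun ν : ProbabilityMeasure Ω => (ν : Measure Ω).real s) :=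
  (measurable_evalP hs).ennreal_toReal

lemma componentP_coe_ite (μ : Measure (Fin 2 → ℝ)) (k : ℕ) (x : Fin 2 → ℝ) :
    (componentP μ k x : Measure (Fin 2 → ℝ))
      = if component μ k x univ = 1 then component μ k x else Measure.dirac 0 := by
  by_cases h : IsProbabilityMeasure (component μ k x)
  · rw [if_pos h.measure_univ, componentP_coe h]
  · rw [if_neg fun h' => h ⟨h'⟩]
    have : componentP μ k x = ⟨Measure.dirac 0, by infer_instance⟩ := dif_neg h
    rw [this]; rfl

lemma componentP_congr (μ : Measure (Fin 2 → ℝ)) (k : ℕ) {x y : Fin 2 → ℝ}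
    (h : ∀ i, ⌊(2 : ℝ) ^ k * x i⌋ = ⌊(2 : ℝ) ^ k * y i⌋) :
    componentP μ k x = componentP μ k y := by
  have hc : component μ k x = component μ k y := by
    have h2 : dscale k x = dscale k y := by funext z i; simp only [dscale, h]
    simp only [component, dcell, h2, h]
  refine Subtype.ext ?_
  refine (componentP_coe_ite μ k x).trans (Eq.trans ?_ (componentP_coe_ite μ k y).symm)
  rw [hc]

lemma measurable_componentP_left (k : ℕ) (x : Fin 2 → ℝ) :
    Measurable (fun ν : ProbabilityMeasure (Fin 2 → ℝ) =>
      componentP (ν : Measure (Fin 2 → ℝ)) k x) := by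
  have hm : Measurable (fun ν : ProbabilityMeasure (Fin 2 → ℝ) =>
      component (ν : Measure (Fin 2 → ℝ)) k x) := by
    refine Measure.measurable_of_measurable_coe _ fun s hs => ?_
    simp only [component_raw _ k x hs]
    exact (measurable_evalP (measurableSet_dcell k x)).inv.mul
      (measurable_evalP ((measurable_dscale k x hs).inter (measurableSet_dcell k x)))
  refine Measurable.subtype_mk (p := fun μ : Measure (Fin 2 → ℝ) => IsProbabilityMeasure μ)
    (f := fun ν : ProbabilityMeasure (Fin 2 → ℝ) =>
      (componentP (ν : Measure (Fin 2 → ℝ)) k x : Measure (Fin 2 → ℝ)))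
    (h := fun ν => (componentP (ν : Measure (Fin 2 → ℝ)) k x).2) ?_
  simp only [componentP_coe_ite]
  exact Measurable.ite ((Measure.measurable_coe MeasurableSet.univ).comp hm
    (measurableSet_singleton 1)) hm measurable_const

lemma measurable_componentP (k : ℕ) :
    Measurable (fun p : ProbabilityMeasure (Fin 2 → ℝ) × (Fin 2 → ℝ) =>
      componentP (p.1 : Measure (Fin 2 → ℝ)) k p.2) := by
  let r : ℤ × ℤ → Fin 2 → ℝ := fun d => ![(d.1 : ℝ) / 2 ^ k, (d.2 : ℝ) / 2 ^ k]
  have hg : Measurable (fun q : ProbabilityMeasure (Fin 2 → ℝ) × (ℤ × ℤ) =>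
      componentP (q.1 : Measure (Fin 2 → ℝ)) k (r q.2)) :=
    measurable_from_prod_countable_left fun d => measurable_componentP_left k (r d)
  have he : Measurable (fun x : Fin 2 → ℝ => (⌊(2 : ℝ) ^ k * x 0⌋, ⌊(2 : ℝ) ^ k * x 1⌋)) :=
    (Int.measurable_floor.comp ((measurable_pi_apply 0).const_mul _)).prodMk
      (Int.measurable_floor.comp ((measurable_pi_apply 1).const_mul _))
  have h2 : (2 : ℝ) ^ k ≠ 0 := by positivity
  convert hg.comp (measurable_fst.prodMk (he.comp measurable_snd)) using 1
  funext p
  refine componentP_congr _ k ?_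
  rw [Fin.forall_fin_two]
  constructor
  · simp [r, mul_div_cancel₀ _ h2]
  · simp [r, mul_div_cancel₀ _ h2]

lemma measurable_CPmag : Measurable (CPmag (d := 2)) := by
  refine (measurable_componentP 1).prodMk ?_
  refine measurable_pi_lambda _ fun i => ?_
  simp only [dscale]
  have : Measurable fun a : ProbabilityMeasure (Fin 2 → ℝ) × (Fin 2 → ℝ) => a.2 i :=
    (measurable_pi_apply i).comp measurable_snd
  exact (this.const_mul _).sub
    ((measurable_of_countable (fun z : ℤ => (z : ℝ))).comp
      (Int.measurable_floor.comp (this.const_mul _)))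

section Stat

variable {Q : Measure (ProbabilityMeasure (Fin 2 → ℝ) × (Fin 2 → ℝ))}

lemma adapted_lintegral (hQ : IsCPDist Q)
    {G : ProbabilityMeasure (Fin 2 → ℝ) × (Fin 2 → ℝ) → ℝ≥0∞} (hG : Measurable G) :
    ∫⁻ p, G p ∂Q = ∫⁻ p, ∫⁻ x, G (p.1, x) ∂(p.1 : Measure (Fin 2 → ℝ)) ∂Q := by
  obtain ⟨hprob, -, -, hbind⟩ := hQ
  set κ : ProbabilityMeasure (Fin 2 → ℝ) → Measure (ProbabilityMeasure (Fin 2 → ℝ) × (Fin 2 → ℝ)) :=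
    fun ν => (ν : Measure (Fin 2 → ℝ)).map fun x => (ν, x) with hκ
  have hae : AEMeasurable κ (Q.map Prod.fst) := by
    by_contra h
    have : Q = 0 := by
      rw [hbind, Measure.bind, Measure.map_of_not_aemeasurable h, Measure.join_zero]
    exact (IsProbabilityMeasure.ne_zero Q) this
  have e : ∀ ν : ProbabilityMeasure (Fin 2 → ℝ),
      ∫⁻ q, G q ∂(κ ν) = ∫⁻ x, G (ν, x) ∂(ν : Measure (Fin 2 → ℝ)) := fun ν => by
    rw [hκ]; exact lintegral_map hG measurable_prodMk_left
  have hm : AEMeasurable (fun ν => ∫⁻ q, G q ∂(κ ν)) (Q.map Prod.fst) :=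
    (Measure.measurable_lintegral hG).comp_aemeasurable hae
  calc ∫⁻ p, G p ∂Q = ∫⁻ p, G p ∂((Q.map Prod.fst).bind κ) := by rw [← hbind]
    _ = ∫⁻ ν, ∫⁻ q, G q ∂(κ ν) ∂(Q.map Prod.fst) :=
        Measure.lintegral_bind hae hG.aemeasurable
    _ = ∫⁻ p, ∫⁻ q, G q ∂(κ p.1) ∂Q := by
        rw [lintegral_map' hm measurable_fst.aemeasurable]
    _ = _ := by simp only [e]

lemma ae_cube (hQ : IsCPDist Q) :
    ∀ᵐ p ∂Q, (∀ᵐ x ∂(p.1 : Measure (Fin 2 → ℝ)), x ∈ unitCube 2) ∧ p.2 ∈ unitCube 2 := by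
  filter_upwards [hQ.2.1] with p hp
  refine ⟨?_, hp.2⟩
  rw [ae_iff]
  exact (prob_compl_eq_zero_iff measurableSet_cube).2 hp.1

lemma null_cells {ν : Measure (Fin 2 → ℝ)} (k : ℕ) : ∀ᵐ x ∂ν, ν (Dk k ⁻¹' {Dk k x}) ≠ 0 := by
  rw [ae_iff]
  have : {x | ¬ν (Dk k ⁻¹' {Dk k x}) ≠ 0}
      = ⋃ d ∈ {d : ℤ × ℤ | ν (Dk k ⁻¹' {d}) = 0}, Dk k ⁻¹' {d} := by
    ext x; simp
  rw [this, measure_biUnion_null_iff (Set.to_countable _)]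
  exact fun d hd => hd

lemma ae_pos (hQ : IsCPDist Q) (k : ℕ) :
    ∀ᵐ p ∂Q, (p.1 : Measure (Fin 2 → ℝ)) (Dk k ⁻¹' {Dk k p.2}) ≠ 0 := by
  have hm : Measurable (fun p : ProbabilityMeasure (Fin 2 → ℝ) × (Fin 2 → ℝ) =>
      (p.1 : Measure (Fin 2 → ℝ)) (Dk k ⁻¹' {Dk k p.2})) := by
    have : Measurable (fun q : ProbabilityMeasure (Fin 2 → ℝ) × (ℤ × ℤ) =>
        (q.1 : Measure (Fin 2 → ℝ)) (Dk k ⁻¹' {q.2})) :=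
      measurable_from_prod_countable_left fun d => measurable_evalP ((FR_Dk k).meas {d})
    exact this.comp (measurable_fst.prodMk ((measurable_Dk k).comp measurable_snd))
  have hs : MeasurableSet {p : ProbabilityMeasure (Fin 2 → ℝ) × (Fin 2 → ℝ) |
      (p.1 : Measure (Fin 2 → ℝ)) (Dk k ⁻¹' {Dk k p.2}) = 0} := hm (measurableSet_singleton 0)
  rw [ae_iff]
  simp only [not_not]
  rw [← lintegral_indicator_one hs, adapted_lintegral hQ (measurable_one.indicator hs)]
  refine (lintegral_congr fun p => ?_).trans lintegral_zero
  refine (lintegral_eq_zero_iff ((measurable_one.indicator hs).comp measurable_prodMk_left)).2 ?_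
  filter_upwards [null_cells (ν := (p.1 : Measure (Fin 2 → ℝ))) k] with x hx
  exact indicator_of_notMem (show (p.1, x) ∉ _ from hx) _

/-- The law of a component of generation `k` at a random point is the law of the measure. -/
lemma stat_lintegral (hQ : IsCPDist Q) (k : ℕ) {F : ProbabilityMeasure (Fin 2 → ℝ) → ℝ≥0∞}
    (hF : Measurable F) :
    ∫⁻ p, F p.1 ∂Q = ∫⁻ p, ∫⁻ x, F (componentP (p.1 : Measure (Fin 2 → ℝ)) k x)
      ∂(p.1 : Measure (Fin 2 → ℝ)) ∂Q := by
  have hmp : MeasurePreserving (CPmag (d := 2)) Q Q := ⟨measurable_CPmag, hQ.2.2.1⟩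
  have h1 := (hmp.iterate k).lintegral_comp (f := fun p => F p.1) (hF.comp measurable_fst)
  rw [← h1, ← adapted_lintegral hQ (G := fun p => F (componentP (p.1 : Measure (Fin 2 → ℝ)) k p.2))
    (hF.comp (measurable_componentP k))]
  refine lintegral_congr_ae ?_
  filter_upwards [ae_cube hQ, ae_pos hQ k] with p hp h0
  have := iterate_CPmag p.1 hp.1 hp.2 k h0
  simp only [Prod.mk.eta] at this
  simp only [this]

end Stat
end CPE

namespace CPE

/-! ### Averaged entropies -/

variable {κ'' κ' κ : Type}

/-- The admissible gauges for `Ht`. -/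
structure Gauge (τ : ℝ → ℝ) : Prop where
  zero : τ 0 = 0
  meas : Measurable τ
  nonneg : ∀ v, 0 ≤ v → v ≤ 1 → 0 ≤ τ v
  le_one : ∀ v, 0 ≤ v → v ≤ 1 → τ v ≤ 1

lemma gauge_negMulLog : Gauge Real.negMulLog := by
  refine ⟨Real.negMulLog_zero, Real.continuous_negMulLog.measurable,
    fun v h0 h1 => Real.negMulLog_nonneg h0 h1, fun v h0 h1 => ?_⟩
  rcases h0.eq_or_lt with rfl | h
  · simp
  · have := Real.one_sub_inv_le_log_of_pos h
    have h2 := mul_le_mul_of_nonneg_left this h0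
    rw [mul_sub, mul_inv_cancel₀ h.ne'] at h2
    rw [Real.negMulLog]; linarith

section Ht

variable {Ω : Type} [MeasurableSpace Ω] {τ : ℝ → ℝ}

lemma measurable_Ht (hτ : Gauge τ) {f : Ω → κ} (hf : FR f) :
    Measurable (fun ν : ProbabilityMeasure Ω => Ht τ (ν : Measure Ω) f) := by
  simp only [Ht_eq hτ.zero _ f hf.mem]
  exact Finset.measurable_sum _ fun k _ => hτ.meas.comp (measurable_realP (hf.meas _))

lemma Ht_nonneg (hτ : Gauge τ) {f : Ω → κ} (hf : FR f) (μ : Measure Ω) [IsProbabilityMeasure μ] :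
    0 ≤ Ht τ μ f := by
  rw [Ht_eq hτ.zero _ f hf.mem]
  exact Finset.sum_nonneg fun k _ => hτ.nonneg _ measureReal_nonneg measureReal_le_one

lemma Ht_le (hτ : Gauge τ) {f : Ω → κ} (hf : FR f) (μ : Measure Ω) [IsProbabilityMeasure μ] :
    Ht τ μ f ≤ hf.fin.toFinset.card := by
  rw [Ht_eq hτ.zero _ f hf.mem]
  refine (Finset.sum_le_sum fun k _ => hτ.le_one _ measureReal_nonneg measureReal_le_one).trans ?_
  simp

end Ht

variable {Q : Measure (ProbabilityMeasure (Fin 2 → ℝ) × (Fin 2 → ℝ))}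

lemma integrable_Ht (hQ : IsCPDist Q) {τ : ℝ → ℝ} (hτ : Gauge τ) {f : (Fin 2 → ℝ) → κ}
    (hf : FR f) : Integrable (fun p => Ht τ (p.1 : Measure (Fin 2 → ℝ)) f) Q := by
  have := hQ.1
  refine Integrable.of_bound ((measurable_Ht hτ hf).comp measurable_fst).aestronglyMeasurable
    hf.fin.toFinset.card (ae_of_all _ fun p => ?_)
  rw [Real.norm_eq_abs]
  have h : (0 : ℝ) ≤ (hf.fin.toFinset.card : ℝ) := Nat.cast_nonneg _
  exact abs_le.2 ⟨by linarith [Ht_nonneg hτ hf (p.1 : Measure (Fin 2 → ℝ))], Ht_le hτ hf _⟩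

/-- The mean of `Ht τ · f` over the components of generation `k`. -/
def condHt (τ : ℝ → ℝ) (ν : Measure (Fin 2 → ℝ)) (f : (Fin 2 → ℝ) → κ) (k : ℕ) : ℝ :=
  ∑ d ∈ (FR_Dk k).fin.toFinset, ν.real (Dk k ⁻¹' {d}) *
    Ht (fun v => τ (v / ν.real (Dk k ⁻¹' {d}))) (ν.restrict (Dk k ⁻¹' {d})) (fun x => f (Sk k x))

lemma Ht_component {τ : ℝ → ℝ} (ν : ProbabilityMeasure (Fin 2 → ℝ))
    (hν : ∀ᵐ x ∂(ν : Measure (Fin 2 → ℝ)), x ∈ unitCube 2) {f : (Fin 2 → ℝ) → κ} (hf : FR f)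
    (k : ℕ) {x : Fin 2 → ℝ} (hx : x ∈ unitCube 2)
    (h0 : (ν : Measure (Fin 2 → ℝ)) (Dk k ⁻¹' {Dk k x}) ≠ 0) :
    Ht τ (componentP (ν : Measure (Fin 2 → ℝ)) k x : Measure (Fin 2 → ℝ)) f
      = Ht (fun v => τ (v / (ν : Measure (Fin 2 → ℝ)).real (Dk k ⁻¹' {Dk k x})))
        ((ν : Measure (Fin 2 → ℝ)).restrict (Dk k ⁻¹' {Dk k x})) (fun x => f (Sk k x)) := by
  have hp := component_prob hν k hx h0
  rw [componentP_coe hp]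
  refine finsum_congr fun j => ?_
  congr 1
  have hS : MeasurableSet ((fun x => f (Sk k x)) ⁻¹' {j}) := (hf.precomp (measurable_Sk k)).meas _
  rw [Measure.real, component_apply hν k hx (hf.meas _), ENNReal.toReal_mul, ENNReal.toReal_inv,
    measureReal_restrict_apply hS, div_eq_inv_mul]
  rfl

lemma condHt_lintegral {τ : ℝ → ℝ} (hτ : Gauge τ) (ν : ProbabilityMeasure (Fin 2 → ℝ))
    (hν : ∀ᵐ x ∂(ν : Measure (Fin 2 → ℝ)), x ∈ unitCube 2) {f : (Fin 2 → ℝ) → κ} (hf : FR f)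
    (k : ℕ) :
    ∫⁻ x, ENNReal.ofReal (Ht τ (componentP (ν : Measure (Fin 2 → ℝ)) k x : Measure (Fin 2 → ℝ)) f)
        ∂(ν : Measure (Fin 2 → ℝ))
      = ENNReal.ofReal (condHt τ (ν : Measure (Fin 2 → ℝ)) f k)
      ∧ 0 ≤ condHt τ (ν : Measure (Fin 2 → ℝ)) f k := by
  set h : ℤ × ℤ → ℝ := fun d => Ht (fun v => τ (v / (ν : Measure (Fin 2 → ℝ)).real (Dk k ⁻¹' {d})))
    ((ν : Measure (Fin 2 → ℝ)).restrict (Dk k ⁻¹' {d})) (fun x => f (Sk k x)) with hh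
  have hfS := hf.precomp (measurable_Sk k)
  have hnn : ∀ d, 0 ≤ h d := fun d => by
    rw [hh]; simp only
    rw [Ht_eq (by simp [hτ.zero]) _ _ hfS.mem]
    refine Finset.sum_nonneg fun j _ => hτ.nonneg _ (by positivity) ?_
    refine div_le_one_of_le₀ ?_ measureReal_nonneg
    rw [measureReal_restrict_apply (hfS.meas _)]
    exact measureReal_mono inter_subset_right
  refine ⟨?_, Finset.sum_nonneg fun d _ => mul_nonneg measureReal_nonneg (hnn d)⟩
  have e1 : ∀ᵐ x ∂(ν : Measure (Fin 2 → ℝ)),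
      ENNReal.ofReal (Ht τ (componentP (ν : Measure (Fin 2 → ℝ)) k x : Measure (Fin 2 → ℝ)) f)
      = ∑ d ∈ (FR_Dk k).fin.toFinset,
        (Dk k ⁻¹' {d}).indicator (fun _ => ENNReal.ofReal (h d)) x := by
    filter_upwards [hν, null_cells (ν := (ν : Measure (Fin 2 → ℝ))) k] with x hx h0
    rw [Ht_component ν hν hf k hx h0, Finset.sum_eq_single (Dk k x)]
    · rw [indicator_of_mem (by simp)]
    · intro d _ hd
      exact indicator_of_notMem (by simpa using hd.symm) _
    · intro h; exact absurd ((FR_Dk k).mem x) h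
  rw [lintegral_congr_ae e1, lintegral_finsetSum _ fun d _ =>
    measurable_const.indicator ((FR_Dk k).meas _), condHt,
    ENNReal.ofReal_sum_of_nonneg fun d _ => mul_nonneg measureReal_nonneg (hnn d)]
  refine Finset.sum_congr rfl fun d _ => ?_
  rw [lintegral_indicator_const ((FR_Dk k).meas _), ENNReal.ofReal_mul measureReal_nonneg,
    ofReal_measureReal, mul_comm]

/-- By stationarity, passing to components of generation `k` does not change averages. -/
lemma stat_Ht (hQ : IsCPDist Q) {τ : ℝ → ℝ} (hτ : Gauge τ) {f : (Fin 2 → ℝ) → κ} (hf : FR f)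
    (k : ℕ) : Integrable (fun p => condHt τ (p.1 : Measure (Fin 2 → ℝ)) f k) Q ∧
    ∫ p, Ht τ (p.1 : Measure (Fin 2 → ℝ)) f ∂Q
      = ∫ p, condHt τ (p.1 : Measure (Fin 2 → ℝ)) f k ∂Q := by
  have hprob := hQ.1
  have h1 := stat_lintegral hQ k (F := fun ν => ENNReal.ofReal (Ht τ (ν : Measure (Fin 2 → ℝ)) f))
    (measurable_Ht hτ hf).ennreal_ofReal
  have h2 : ∫⁻ p, ∫⁻ x, ENNReal.ofReal (Ht τ (componentP (p.1 : Measure (Fin 2 → ℝ)) k x :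
      Measure (Fin 2 → ℝ)) f) ∂(p.1 : Measure (Fin 2 → ℝ)) ∂Q
      = ∫⁻ p, ENNReal.ofReal (condHt τ (p.1 : Measure (Fin 2 → ℝ)) f k) ∂Q := by
    refine lintegral_congr_ae ?_
    filter_upwards [ae_cube hQ] with p hp
    exact (condHt_lintegral hτ p.1 hp.1 hf k).1
  have hnn : ∀ᵐ p ∂Q, 0 ≤ condHt τ (p.1 : Measure (Fin 2 → ℝ)) f k := by
    filter_upwards [ae_cube hQ] with p hp
    exact (condHt_lintegral hτ p.1 hp.1 hf k).2
  have hm : Measurable (fun ν : ProbabilityMeasure (Fin 2 → ℝ) =>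
      condHt τ (ν : Measure (Fin 2 → ℝ)) f k) := by
    have hfS := hf.precomp (measurable_Sk k)
    unfold condHt
    refine Finset.measurable_sum _ fun d _ => (measurable_realP ((FR_Dk k).meas _)).mul ?_
    have e : ∀ ν : ProbabilityMeasure (Fin 2 → ℝ), Ht (fun v =>
        τ (v / (ν : Measure (Fin 2 → ℝ)).real (Dk k ⁻¹' {d})))
        ((ν : Measure (Fin 2 → ℝ)).restrict (Dk k ⁻¹' {d})) (fun x => f (Sk k x))
        = ∑ j ∈ hfS.fin.toFinset, τ ((ν : Measure (Fin 2 → ℝ)).real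
          ((fun x => f (Sk k x)) ⁻¹' {j} ∩ Dk k ⁻¹' {d}) /
          (ν : Measure (Fin 2 → ℝ)).real (Dk k ⁻¹' {d})) := fun ν => by
      rw [Ht_eq (by simp [hτ.zero]) _ _ hfS.mem]
      exact Finset.sum_congr rfl fun j _ => by rw [measureReal_restrict_apply (hfS.meas _)]
    simp only [e]
    exact Finset.measurable_sum _ fun j _ => hτ.meas.comp
      ((measurable_realP ((hfS.meas _).inter ((FR_Dk k).meas _))).div
        (measurable_realP ((FR_Dk k).meas _)))
  have hm' : AEStronglyMeasurable (fun p : ProbabilityMeasure (Fin 2 → ℝ) × (Fin 2 → ℝ) =>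
      condHt τ (p.1 : Measure (Fin 2 → ℝ)) f k) Q := (hm.comp measurable_fst).aestronglyMeasurable
  have hI := integrable_Ht hQ hτ hf
  have hlt : ∫⁻ p, ENNReal.ofReal (condHt τ (p.1 : Measure (Fin 2 → ℝ)) f k) ∂Q < ∞ := by
    rw [← h2, ← h1]
    exact hI.lintegral_lt_top
  refine ⟨⟨hm', (hasFiniteIntegral_iff_ofReal hnn).2 hlt⟩, ?_⟩
  rw [integral_eq_lintegral_of_nonneg_ae (ae_of_all _ fun p => Ht_nonneg hτ hf _)
    hI.aestronglyMeasurable, integral_eq_lintegral_of_nonneg_ae hnn hm', ← h2, h1]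

end CPE

namespace CPE

/-! ### Stationarity of averaged entropy -/

variable {κ'' κ' κ : Type}

lemma condHt_eq {τ : ℝ → ℝ} (h0 : τ 0 = 0) (ν : Measure (Fin 2 → ℝ))
    {f : (Fin 2 → ℝ) → κ} (hf : FR f) (k : ℕ) :
    condHt τ ν f k = ∑ d ∈ (FR_Dk k).fin.toFinset, ∑ j ∈ (hf.precomp (measurable_Sk k)).fin.toFinset,
      ν.real (Dk k ⁻¹' {d}) *
        τ (ν.real ((fun x => (f (Sk k x), Dk k x)) ⁻¹' {(j, d)}) / ν.real (Dk k ⁻¹' {d})) := by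
  have hfS := hf.precomp (measurable_Sk k)
  refine Finset.sum_congr rfl fun d _ => ?_
  rw [Ht_eq (by simp [h0]) _ _ hfS.mem, Finset.mul_sum]
  refine Finset.sum_congr rfl fun j _ => ?_
  rw [measureReal_restrict_apply (hfS.meas _)]
  congr 4
  ext x; simp [Prod.ext_iff]

lemma condHt_negMulLog (ν : Measure (Fin 2 → ℝ)) [IsProbabilityMeasure ν]
    {f : (Fin 2 → ℝ) → κ} (hf : FR f) (k : ℕ) :
    condHt Real.negMulLog ν f k = Hm ν (fun x => (f (Sk k x), Dk k x)) - Hm ν (Dk k) := by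
  have hfS := hf.precomp (measurable_Sk k)
  have hD := FR_Dk k
  rw [condHt_eq Real.negMulLog_zero ν hf, Hm, Ht_eq Real.negMulLog_zero ν _
    (s := hfS.fin.toFinset ×ˢ hD.fin.toFinset) (fun x => Finset.mem_product.2 ⟨hfS.mem x, hD.mem x⟩),
    Hm, Ht_eq Real.negMulLog_zero ν _ hD.mem, Finset.sum_product_right, ← Finset.sum_sub_distrib]
  refine Finset.sum_congr rfl fun d _ => ?_
  have hle : ∀ j, ν.real ((fun x => (f (Sk k x), Dk k x)) ⁻¹' {(j, d)}) ≤ ν.real (Dk k ⁻¹' {d}) :=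
    fun j => measureReal_mono fun x hx => by
      simp only [mem_preimage, mem_singleton_iff, Prod.mk.injEq] at hx ⊢; exact hx.2
  have hsum : ∑ j ∈ hfS.fin.toFinset, ν.real ((fun x => (f (Sk k x), Dk k x)) ⁻¹' {(j, d)})
      = ν.real (Dk k ⁻¹' {d}) := by
    have h := sum_measureReal_preimage_singleton (μ := ν.restrict (Dk k ⁻¹' {d}))
      hfS.fin.toFinset (f := fun x => f (Sk k x)) (fun y _ => hfS.meas _)
    have e : (fun x => f (Sk k x)) ⁻¹' (hfS.fin.toFinset : Set κ) = univ := by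
      ext x; simp
    rw [e, measureReal_restrict_apply MeasurableSet.univ, univ_inter] at h
    rw [← h]
    refine Finset.sum_congr rfl fun j _ => ?_
    rw [measureReal_restrict_apply (hfS.meas _)]
    congr 1
    ext x; simp [Prod.ext_iff]
  by_cases h0 : ν.real (Dk k ⁻¹' {d}) = 0
  · have : ∀ j, ν.real ((fun x => (f (Sk k x), Dk k x)) ⁻¹' {(j, d)}) = 0 := fun j =>
      le_antisymm (h0 ▸ hle j) measureReal_nonneg
    simp [h0, this]
  · have e : ∀ j, ν.real (Dk k ⁻¹' {d}) * Real.negMulLog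
        (ν.real ((fun x => (f (Sk k x), Dk k x)) ⁻¹' {(j, d)}) / ν.real (Dk k ⁻¹' {d}))
        = Real.negMulLog (ν.real ((fun x => (f (Sk k x), Dk k x)) ⁻¹' {(j, d)}))
          + ν.real ((fun x => (f (Sk k x), Dk k x)) ⁻¹' {(j, d)}) * Real.log (ν.real (Dk k ⁻¹' {d})) := by
      intro j
      generalize ν.real ((fun x => (f (Sk k x), Dk k x)) ⁻¹' {(j, d)}) = v
      by_cases hv : v = 0
      · simp [hv]
      rw [Real.negMulLog, Real.negMulLog, Real.log_div hv h0]
      field_simp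
      ring
    simp only [e, Finset.sum_add_distrib, ← Finset.sum_mul, hsum]
    rw [Real.negMulLog]; ring

variable {Q : Measure (ProbabilityMeasure (Fin 2 → ℝ) × (Fin 2 → ℝ))}

/-- The `Q`-average of the entropy of `f`. -/
def hh (Q : Measure (ProbabilityMeasure (Fin 2 → ℝ) × (Fin 2 → ℝ))) (f : (Fin 2 → ℝ) → κ) : ℝ :=
  ∫ p, Hm (p.1 : Measure (Fin 2 → ℝ)) f ∂Q

lemma hh_int (hQ : IsCPDist Q) {f : (Fin 2 → ℝ) → κ} (hf : FR f) :
    Integrable (fun p => Hm (p.1 : Measure (Fin 2 → ℝ)) f) Q := integrable_Ht hQ gauge_negMulLog hf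

lemma hh_mono (hQ : IsCPDist Q) {f : (Fin 2 → ℝ) → κ} {g : (Fin 2 → ℝ) → κ'} (hf : FR f) (hg : FR g)
    (h : ∀ x y, f x = f y → g x = g y) : hh Q g ≤ hh Q f :=
  integral_mono (hh_int hQ hg) (hh_int hQ hf) fun _ => Hm_mono _ hf hg h

lemma hh_congr (hQ : IsCPDist Q) {f : (Fin 2 → ℝ) → κ} {g : (Fin 2 → ℝ) → κ'} (hf : FR f) (hg : FR g)
    (h : ∀ x y, f x = f y ↔ g x = g y) : hh Q g = hh Q f :=
  le_antisymm (hh_mono hQ hf hg fun x y => (h x y).1) (hh_mono hQ hg hf fun x y => (h x y).2)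

lemma hh_nonneg {f : (Fin 2 → ℝ) → κ} (hf : FR f) : 0 ≤ hh Q f :=
  integral_nonneg fun _ => Hm_nonneg _ hf

lemma hh_submod (hQ : IsCPDist Q) {f : (Fin 2 → ℝ) → κ} {g : (Fin 2 → ℝ) → κ'}
    {c : (Fin 2 → ℝ) → κ''} (hf : FR f) (hg : FR g) (hc : FR c) :
    hh Q (fun x => (f x, g x, c x)) + hh Q c
      ≤ hh Q (fun x => (f x, c x)) + hh Q (fun x => (g x, c x)) := by
  unfold hh
  rw [← integral_add (hh_int hQ (hf.pair (hg.pair hc))) (hh_int hQ hc),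
    ← integral_add (hh_int hQ (hf.pair hc)) (hh_int hQ (hg.pair hc))]
  exact integral_mono ((hh_int hQ (hf.pair (hg.pair hc))).add (hh_int hQ hc))
    ((hh_int hQ (hf.pair hc)).add (hh_int hQ (hg.pair hc))) fun _ => Hm_submod _ hf hg hc

lemma hh_osc (hQ : IsCPDist Q) {f : (Fin 2 → ℝ) → ℤ} {g : (Fin 2 → ℝ) → κ}
    {c : (Fin 2 → ℝ) → κ'} (hf : FR f) (hg : FR g) (hc : FR c) (r : ℕ)
    (h : ∀ x y, g x = g y → c x = c y → |f x - f y| ≤ r) :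
    hh Q (fun x => (f x, c x)) ≤ hh Q (fun x => (g x, c x)) + Real.log (2 * r + 1) := by
  have := hQ.1
  have e : hh Q (fun x => (g x, c x)) + Real.log (2 * r + 1)
      = ∫ p, (Hm (p.1 : Measure (Fin 2 → ℝ)) (fun x => (g x, c x)) + Real.log (2 * r + 1)) ∂Q := by
    rw [integral_add (hh_int hQ (hg.pair hc)) (integrable_const _)]
    simp [hh]
  rw [e]
  exact integral_mono (hh_int hQ (hf.pair hc)) ((hh_int hQ (hg.pair hc)).add (integrable_const _))
    fun _ => Hm_osc _ hf hg hc r h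

lemma hh_card (hQ : IsCPDist Q) {f : (Fin 2 → ℝ) → κ} (hf : FR f) {N : ℝ} (hN : 0 < N)
    (S : Finset κ) (hS : ∀ x, f x ∈ S) (hc : (S.card : ℝ) ≤ N) : hh Q f ≤ Real.log N := by
  have := hQ.1
  have e : Real.log N = ∫ _p, Real.log N ∂Q := by simp
  rw [e]
  exact integral_mono (hh_int hQ hf) (integrable_const _) fun _ => Hm_card _ hf hN S hS hc

/-- Chain rule for a stationary system: the entropy of the pair (cell of generation `k`, observable
of the rescaled point) splits. -/
lemma hh_stat (hQ : IsCPDist Q) {f : (Fin 2 → ℝ) → κ} (hf : FR f) (k : ℕ) :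
    hh Q (fun x => (f (Sk k x), Dk k x)) = hh Q (Dk k) + hh Q f := by
  have h := (stat_Ht hQ gauge_negMulLog hf k).2
  simp only [condHt_negMulLog _ hf k] at h
  rw [integral_sub (hh_int hQ ((hf.precomp (measurable_Sk k)).pair (FR_Dk k)))
    (hh_int hQ (FR_Dk k))] at h
  simp only [hh]
  simp only [Hm] at h ⊢
  linarith

/-- The part of `v` carried by atoms smaller than `1 / R`. -/
def tau (R : ℝ) (v : ℝ) : ℝ := if R * v < 1 then v else 0

lemma gauge_tau (R : ℝ) : Gauge (tau R) := by
  refine ⟨by simp [tau], Measurable.ite (measurableSet_lt (measurable_const.mul measurable_id)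
    measurable_const) measurable_id measurable_const, fun v h0 h1 => ?_, fun v h0 h1 => ?_⟩
  all_goals unfold tau; split_ifs <;> linarith

/-- Conditional entropy of `f` given `s`. -/
def mCE (μ : Measure (Fin 2 → ℝ)) (f : (Fin 2 → ℝ) → κ) (s : (Fin 2 → ℝ) → κ') : ℝ :=
  Hm μ (fun x => (f x, s x)) - Hm μ s

/-- Conditional mutual information of `f` and `g` given `s`. -/
def mCI (μ : Measure (Fin 2 → ℝ)) (f : (Fin 2 → ℝ) → κ) (g : (Fin 2 → ℝ) → κ')
    (s : (Fin 2 → ℝ) → κ'') : ℝ := mCE μ f s + mCE μ g s - mCE μ (fun x => (f x, g x)) s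

/-- In a finite model, the mass of the pairs whose conditional probability is below `1 / R`. -/
lemma bad_le {ι : Type} [Fintype ι] {p : ι → ℝ} (hp : ∀ i, 0 ≤ p i) (Y : ι → ℤ) (g : ι → ℤ × ℤ)
    {R : ℝ} (hR : 1 ≤ R) (S : Finset ℤ) (hY : ∀ i, Y i ∈ S) (S' : Finset (ℤ × ℤ)) (hg : ∀ i, g i ∈ S') :
    ∃ F : ℤ × ℤ → Finset ℤ, (∀ d, ((F d).card : ℝ) ≤ R) ∧
      bad p Y g F ≤ ∑ d ∈ S', ∑ j ∈ S, pm p g d * tau R (pm p (fun i => (Y i, g i)) (j, d) / pm p g d) := by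
  refine ⟨fun d => if pm p g d = 0 then ∅ else
    S.filter fun j => pm p g d ≤ R * pm p (fun i => (Y i, g i)) (j, d), fun d => ?_, ?_⟩
  · dsimp only
    split_ifs with h
    · simp; linarith
    have hpos : 0 < pm p g d := lt_of_le_of_ne (pm_nonneg hp g d) (Ne.symm h)
    set T := S.filter fun j => pm p g d ≤ R * pm p (fun i => (Y i, g i)) (j, d) with hT
    have h1 : ∑ j ∈ T, pm p g d ≤ ∑ j ∈ T, R * pm p (fun i => (Y i, g i)) (j, d) :=
      Finset.sum_le_sum fun j hj => (Finset.mem_filter.1 hj).2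
    have h2 : ∑ j ∈ T, pm p (fun i => (Y i, g i)) (j, d) ≤ pm p g d := by
      simp only [pm]
      rw [Finset.sum_comm]
      refine Finset.sum_le_sum fun i _ => ?_
      by_cases hi : g i = d
      · simp only [Prod.mk.injEq, hi, and_true, if_true, Finset.sum_ite_eq]
        split_ifs
        · exact le_rfl
        · exact hp i
      · simp [hi]
    rw [Finset.sum_const, nsmul_eq_mul, ← Finset.mul_sum] at h1
    have h3 : R * ∑ j ∈ T, pm p (fun i => (Y i, g i)) (j, d) ≤ R * pm p g d :=
      mul_le_mul_of_nonneg_left h2 (by linarith)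
    exact le_of_mul_le_mul_right (h1.trans h3) hpos
  · have e := sum_fiber p (fun i => (Y i, g i)) (fun q => if q.1 ∈ (if pm p g q.2 = 0 then ∅ else
      S.filter fun j => pm p g q.2 ≤ R * pm p (fun i => (Y i, g i)) (j, q.2)) then (0 : ℝ) else 1)
      (s := S ×ˢ S') (fun i => Finset.mem_product.2 ⟨hY i, hg i⟩)
    rw [Finset.sum_product_right] at e
    refine le_trans (le_of_eq (Eq.trans (Finset.sum_congr rfl fun i _ => ?_) e)) ?_
    · congr
    refine Finset.sum_le_sum fun d _ => Finset.sum_le_sum fun j hj => ?_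
    have hle : pm p (fun i => (Y i, g i)) (j, d) ≤ pm p g d := pm_mono hp fun i hi => by
      simp only [Prod.mk.injEq] at hi; exact hi.2
    have h0 := pm_nonneg hp (fun i => (Y i, g i)) (j, d)
    obtain ⟨v, hv⟩ : ∃ v, v = pm p (fun i => (Y i, g i)) (j, d) := ⟨_, rfl⟩
    by_cases h : pm p g d = 0
    · have : pm p (fun i => (Y i, g i)) (j, d) = 0 := le_antisymm (h ▸ hle) h0
      simp [h, this]
    have hpos : 0 < pm p g d := lt_of_le_of_ne (pm_nonneg hp g d) (Ne.symm h)
    simp only [h, if_false, Finset.mem_filter, hj, true_and, tau]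
    rw [← hv] at hle h0 ⊢
    by_cases h2 : pm p g d ≤ R * v
    · simp only [h2, if_true, mul_zero]
      split_ifs <;> positivity
    · rw [if_neg h2, mul_one, if_pos, mul_div_cancel₀ _ h]
      rw [← mul_div_assoc, div_lt_one hpos]; exact not_le.1 h2

end CPE

namespace CPE

/-! ### The multiscale inequality for projected measures -/

variable {κ'' κ' κ : Type}

lemma U_card (θ : ℝ) (m : ℕ) : ∃ S : Finset ℤ, (∀ x, U θ m x ∈ S) ∧ (S.card : ℝ) ≤ 5 * 2 ^ m := by
  refine ⟨Finset.Icc (-((2 * 2 ^ m : ℕ) : ℤ)) ((2 * 2 ^ m : ℕ) : ℤ),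
    fun x => Finset.mem_Icc.2 (abs_le.1 (U_bound θ m x)), ?_⟩
  have h1 : (1 : ℕ) ≤ 2 ^ m := Nat.one_le_two_pow
  have : (Finset.Icc (-((2 * 2 ^ m : ℕ) : ℤ)) ((2 * 2 ^ m : ℕ) : ℤ)).card ≤ 5 * 2 ^ m := by
    rw [Int.card_Icc]; omega
  exact_mod_cast this

/-- The multiscale inequality for a single measure, for `A = U θ (m + (t + 1) W)` and an arbitrary summand
`B`, conditioned on `U θ m`. The lack of uniformity of `A` is expressed by the light cells of the
projections of the components of the measure. -/
theorem point_multiscale (ν : Measure (Fin 2 → ℝ)) [IsProbabilityMeasure ν] (θ : ℝ) {W W1 : ℕ}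
    (hW : W1 ≤ W) (t m : ℕ) {R : ℝ} (hR : 1 ≤ R)
    (hb : 0 ≤ Real.log ((2 ^ W1 : ℕ) : ℝ) - C0 - Real.log (6 * R))
    {B : (Fin 2 → ℝ) → ℤ} (hB : FR B) :
    (Real.log ((2 ^ W1 : ℕ) : ℝ) - C0 - Real.log (6 * R)) * (mCE ν B (U θ m)
        - mCE ν (fun x => B x / (((2 ^ W) ^ t : ℕ) : ℤ)) (U θ m) - t * Real.log (4 * ((2 ^ W1 : ℕ) : ℝ)))
      ≤ Real.log ((2 ^ W : ℕ) : ℝ) * (∑ k ∈ Finset.range t,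
          (mCI ν (U θ (m + (t - k) * W)) (Dk (m + (t - k) * W - W1)) (U θ (m + (t - k) * W - W1))
            + condHt (tau R) ν (U θ W1) (m + (t - k) * W - W1) * Real.log (2 * (5 * 2 ^ W1))) + 2 * t
        + 4 * ((2 ^ W : ℕ) : ℝ) ^ 4 * ((t + 1) * mCI ν (U θ (m + (t + 1) * W)) B (U θ m)
          + (mCE ν (fun x => U θ (m + (t + 1) * W) x + B x) (U θ m)
            - mCE ν (U θ (m + (t + 1) * W)) (U θ m)))) := by
  set M : ℕ → ℕ := fun k => m + (t - k) * W - W1 with hM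
  have hMk : ∀ k, k < t → M k + W1 = m + (t - k) * W := fun k hk => by
    have : 1 * W ≤ (t - k) * W := Nat.mul_le_mul_right _ (by omega)
    simp only [hM]; omega
  have hA : ∀ k, k < t → ∀ x, U θ (m + (t - k) * W) x
      = U θ (m + (t + 1) * W) x / (((2 ^ W) ^ (k + 1) : ℕ) : ℤ) := fun k hk x => by
    rw [U_div θ _ (W * (k + 1)) x, pow_mul]
    congr 2
    have : t + 1 = (t - k) + (k + 1) := by omega
    rw [this]; ring
  have hz : ∀ k, k < t → ∀ x, U θ (M k) x
      = U θ (m + (t + 1) * W) x / ((2 ^ W1 * (2 ^ W) ^ (k + 1) : ℕ) : ℤ) := fun k hk x => by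
    rw [U_div θ _ (W1 + W * (k + 1)) x, pow_add, pow_mul]
    congr 2
    have : t + 1 = (t - k) + (k + 1) := by omega
    rw [← add_assoc, hMk k hk, this]; ring
  have hs : ∀ x, U θ m x = U θ (m + (t + 1) * W) x / (((2 ^ W) ^ (t + 1) : ℕ) : ℤ) := fun x => by
    rw [U_div θ m (W * (t + 1)) x, pow_mul, mul_comm W]
  have hΦ := (FR_U θ (m + (t + 1) * W)).pair (hB.pair (FR.pi (n := t) fun i =>
    (FR_Dk (M i)).pair ((FR_U θ W1).precomp (measurable_Sk (M i)))))
  obtain ⟨ι, _, p, e, hp, h1, hx, hpm, hE⟩ := transport ν hΦ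
  obtain ⟨S, hS, hSc⟩ := U_card θ W1
  have main := multiscale_cond hp h1 (fun i => (e i).1) (fun i => (e i).2.1)
    (fun i => (e i).1 / (((2 ^ W) ^ (t + 1) : ℕ) : ℤ)) (J := 2 ^ W) (K := 2 ^ W1)
    (by positivity) (by positivity) (pow_dvd_pow 2 hW) hb t (fun i => rfl)
  have hexc : ∀ k ∈ Finset.range t, exc p (fun i => (e i).1 / (((2 ^ W) ^ (k + 1) : ℕ) : ℤ))
      (fun i => (e i).1 / ((2 ^ W1 * (2 ^ W) ^ (k + 1) : ℕ) : ℤ)) (Real.log (6 * R))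
      ≤ mCI ν (U θ (m + (t - k) * W)) (Dk (M k)) (U θ (M k))
            + condHt (tau R) ν (U θ W1) (M k) * Real.log (2 * (5 * 2 ^ W1)) := by
    intro k hk
    have hk' := Finset.mem_range.1 hk
    let j : Fin t := ⟨k, hk'⟩
    have hYS : ∀ i, ((e i).2.2 j).2 ∈ ((FR_U θ W1).precomp (measurable_Sk (M k))).fin.toFinset := by
      intro i
      obtain ⟨x, hxi⟩ := hx i
      rw [← hxi]; exact ((FR_U θ W1).precomp (measurable_Sk (M k))).mem x
    have hYS' : ∀ i, ((e i).2.2 j).2 ∈ S := by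
      intro i
      obtain ⟨x, hxi⟩ := hx i
      rw [← hxi]; exact hS _
    have hgS : ∀ i, ((e i).2.2 j).1 ∈ (FR_Dk (M k)).fin.toFinset := by
      intro i
      obtain ⟨x, hxi⟩ := hx i
      rw [← hxi]; exact (FR_Dk (M k)).mem x
    obtain ⟨F, hF, hbad⟩ := bad_le hp (fun i => ((e i).2.2 j).2) (fun i => ((e i).2.2 j).1) hR _ hYS _ hgS
    have hosc : ∀ a b : ι, ((e a).2.2 j).1 = ((e b).2.2 j).1 → ((e a).2.2 j).2 = ((e b).2.2 j).2 →
        |(e a).1 / (((2 ^ W) ^ (k + 1) : ℕ) : ℤ) - (e b).1 / (((2 ^ W) ^ (k + 1) : ℕ) : ℤ)| ≤ 1 := by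
      intro a b
      obtain ⟨x, hxa⟩ := hx a
      obtain ⟨y, hyb⟩ := hx b
      rw [← hxa, ← hyb]
      intro h1 h2
      have h := (U_shift θ W1 (M k) h1).1 h2
      rw [add_comm W1, hMk k hk', hA k hk', hA k hk'] at h
      exact_mod_cast h
    have h5 : (1 : ℝ) ≤ 5 * 2 ^ W1 := by
      have : (1 : ℝ) ≤ 2 ^ W1 := one_le_pow₀ (by norm_num)
      linarith
    have h := exc_le hp (fun i => (e i).1 / ((2 ^ W1 * (2 ^ W) ^ (k + 1) : ℕ) : ℤ)) _ _ _ hosc F hR h5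
      hF S hYS' hSc
    refine h.trans (add_le_add (le_of_eq ?_) (mul_le_mul_of_nonneg_right ?_
      (Real.log_nonneg (by linarith))))
    · have e1 := hE (fun q => (q.1 / (((2 ^ W) ^ (k + 1) : ℕ) : ℤ),
        q.1 / ((2 ^ W1 * (2 ^ W) ^ (k + 1) : ℕ) : ℤ)))
      have e2 := hE (fun q => q.1 / ((2 ^ W1 * (2 ^ W) ^ (k + 1) : ℕ) : ℤ))
      have e3 := hE (fun q => ((q.2.2 j).1, q.1 / ((2 ^ W1 * (2 ^ W) ^ (k + 1) : ℕ) : ℤ)))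
      have e4 := hE (fun q => ((q.1 / (((2 ^ W) ^ (k + 1) : ℕ) : ℤ), (q.2.2 j).1),
        q.1 / ((2 ^ W1 * (2 ^ W) ^ (k + 1) : ℕ) : ℤ)))
      simp only [CI, CE, mCI, mCE, e1, e2, e3, e4]
      simp only [← hA k hk', ← hz k hk']
      rfl
    · refine hbad.trans (le_of_eq ?_)
      rw [condHt_eq (gauge_tau R).zero ν (FR_U θ W1)]
      refine Finset.sum_congr rfl fun d _ => Finset.sum_congr rfl fun l _ => ?_
      have e1 := hpm (fun q => (q.2.2 j).1) d
      have e2 := hpm (fun q => ((q.2.2 j).2, (q.2.2 j).1)) (l, d)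
      rw [e1, e2]
  have hsum := Finset.sum_le_sum hexc
  have f1 := hE (fun q => (q.2.1, q.1 / (((2 ^ W) ^ (t + 1) : ℕ) : ℤ)))
  have f2 := hE (fun q => q.1 / (((2 ^ W) ^ (t + 1) : ℕ) : ℤ))
  have f3 := hE (fun q => (q.2.1 / (((2 ^ W) ^ t : ℕ) : ℤ), q.1 / (((2 ^ W) ^ (t + 1) : ℕ) : ℤ)))
  have f4 := hE (fun q => (q.1, q.1 / (((2 ^ W) ^ (t + 1) : ℕ) : ℤ)))
  have f5 := hE (fun q => ((q.1, q.2.1), q.1 / (((2 ^ W) ^ (t + 1) : ℕ) : ℤ)))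
  have f6 := hE (fun q => (q.1 + q.2.1, q.1 / (((2 ^ W) ^ (t + 1) : ℕ) : ℤ)))
  simp only [CI, CE] at main
  rw [f1, f2, f3, f4, f5, f6] at main
  simp only [← hs] at main
  simp only [mCI, mCE] at hsum ⊢
  refine main.trans (mul_le_mul_of_nonneg_left ?_ (Real.log_natCast_nonneg _))
  gcongr

end CPE

namespace CPE

/-! ### Averaging the multiscale inequality -/

variable {κ κ' κ'' : Type} {Q : Measure (ProbabilityMeasure (Fin 2 → ℝ) × (Fin 2 → ℝ))}

/-- Averaged conditional entropy of `f` given `s`. -/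
def aCE (Q : Measure (ProbabilityMeasure (Fin 2 → ℝ) × (Fin 2 → ℝ))) (f : (Fin 2 → ℝ) → κ)
    (s : (Fin 2 → ℝ) → κ') : ℝ := hh Q (fun x => (f x, s x)) - hh Q s

/-- Averaged conditional mutual information of `f` and `g` given `s`. -/
def aCI (Q : Measure (ProbabilityMeasure (Fin 2 → ℝ) × (Fin 2 → ℝ))) (f : (Fin 2 → ℝ) → κ)
    (g : (Fin 2 → ℝ) → κ') (s : (Fin 2 → ℝ) → κ'') : ℝ :=
  aCE Q f s + aCE Q g s - aCE Q (fun x => (f x, g x)) s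

/-- Averaged mass carried by the cells of `U θ n` of mass less than `1 / R`. -/
def light (Q : Measure (ProbabilityMeasure (Fin 2 → ℝ) × (Fin 2 → ℝ))) (R θ : ℝ) (n : ℕ) : ℝ :=
  ∫ p, Ht (tau R) (p.1 : Measure (Fin 2 → ℝ)) (U θ n) ∂Q

/-- `f` is integrable with integral `v`. -/
def HasI {Ω : Type*} [MeasurableSpace Ω] (μ : Measure Ω) (f : Ω → ℝ) (v : ℝ) : Prop :=
  Integrable f μ ∧ ∫ x, f x ∂μ = v

section HasI

variable {Ω : Type*} [MeasurableSpace Ω] {μ : Measure Ω} {f g : Ω → ℝ} {v w : ℝ}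

lemma HasI.add (hf : HasI μ f v) (hg : HasI μ g w) : HasI μ (fun x => f x + g x) (v + w) :=
  ⟨hf.1.add hg.1, by rw [integral_add hf.1 hg.1, hf.2, hg.2]⟩

lemma HasI.sub (hf : HasI μ f v) (hg : HasI μ g w) : HasI μ (fun x => f x - g x) (v - w) :=
  ⟨hf.1.sub hg.1, by rw [integral_sub hf.1 hg.1, hf.2, hg.2]⟩

lemma HasI.const_mul (c : ℝ) (hf : HasI μ f v) : HasI μ (fun x => c * f x) (c * v) :=
  ⟨hf.1.const_mul c, by rw [integral_const_mul, hf.2]⟩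

lemma HasI.mul_const (hf : HasI μ f v) (c : ℝ) : HasI μ (fun x => f x * c) (v * c) :=
  ⟨hf.1.mul_const c, by rw [integral_mul_const, hf.2]⟩

lemma HasI.const [IsProbabilityMeasure μ] (c : ℝ) : HasI μ (fun _ => c) c :=
  ⟨integrable_const c, by simp⟩

lemma HasI.sum {s : Finset ℕ} {f : ℕ → Ω → ℝ} {v : ℕ → ℝ} (h : ∀ k ∈ s, HasI μ (f k) (v k)) :
    HasI μ (fun x => ∑ k ∈ s, f k x) (∑ k ∈ s, v k) :=
  ⟨integrable_finsetSum _ fun k hk => (h k hk).1, by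
    rw [integral_finsetSum _ fun k hk => (h k hk).1]
    exact Finset.sum_congr rfl fun k hk => (h k hk).2⟩

lemma HasI.mono (hf : HasI μ f v) (hg : HasI μ g w) (h : ∀ x, f x ≤ g x) : v ≤ w := by
  rw [← hf.2, ← hg.2]; exact integral_mono hf.1 hg.1 h

end HasI

lemma hh_I (hQ : IsCPDist Q) {f : (Fin 2 → ℝ) → κ} (hf : FR f) :
    HasI Q (fun p => Hm (p.1 : Measure (Fin 2 → ℝ)) f) (hh Q f) := ⟨hh_int hQ hf, rfl⟩

lemma mCE_I (hQ : IsCPDist Q) {f : (Fin 2 → ℝ) → κ} {s : (Fin 2 → ℝ) → κ'} (hf : FR f) (hs : FR s) :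
    HasI Q (fun p => mCE (p.1 : Measure (Fin 2 → ℝ)) f s) (aCE Q f s) :=
  (hh_I hQ (hf.pair hs)).sub (hh_I hQ hs)

lemma mCI_I (hQ : IsCPDist Q) {f : (Fin 2 → ℝ) → κ} {g : (Fin 2 → ℝ) → κ'}
    {s : (Fin 2 → ℝ) → κ''} (hf : FR f) (hg : FR g) (hs : FR s) :
    HasI Q (fun p => mCI (p.1 : Measure (Fin 2 → ℝ)) f g s) (aCI Q f g s) :=
  ((mCE_I hQ hf hs).add (mCE_I hQ hg hs)).sub (mCE_I hQ (hf.pair hg) hs)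

/-- The multiscale inequality, averaged over `Q`. -/
theorem avg_multiscale (hQ : IsCPDist Q) (θ : ℝ) {W W1 : ℕ}
    (hW : W1 ≤ W) (t m : ℕ) {R : ℝ} (hR : 1 ≤ R)
    (hb : 0 ≤ Real.log ((2 ^ W1 : ℕ) : ℝ) - C0 - Real.log (6 * R))
    {B : (Fin 2 → ℝ) → ℤ} (hB : FR B) :
    (Real.log ((2 ^ W1 : ℕ) : ℝ) - C0 - Real.log (6 * R)) * (aCE Q B (U θ m)
        - aCE Q (fun x => B x / (((2 ^ W) ^ t : ℕ) : ℤ)) (U θ m) - t * Real.log (4 * ((2 ^ W1 : ℕ) : ℝ)))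
      ≤ Real.log ((2 ^ W : ℕ) : ℝ) * (∑ k ∈ Finset.range t,
          (aCI Q (U θ (m + (t - k) * W)) (Dk (m + (t - k) * W - W1)) (U θ (m + (t - k) * W - W1))
            + light Q R θ W1 * Real.log (2 * (5 * 2 ^ W1))) + 2 * t
        + 4 * ((2 ^ W : ℕ) : ℝ) ^ 4 * ((t + 1) * aCI Q (U θ (m + (t + 1) * W)) B (U θ m)
          + (aCE Q (fun x => U θ (m + (t + 1) * W) x + B x) (U θ m)
            - aCE Q (U θ (m + (t + 1) * W)) (U θ m)))) := by
  have := hQ.1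
  have hs := FR_U θ m
  have hA := FR_U θ (m + (t + 1) * W)
  have hBt := hB.comp (fun b => b / (((2 ^ W) ^ t : ℕ) : ℤ))
  have hAB := (hA.pair hB).comp (fun q => q.1 + q.2)
  have i6 : ∀ k, HasI Q (fun p : ProbabilityMeasure (Fin 2 → ℝ) × (Fin 2 → ℝ) =>
      condHt (tau R) (p.1 : Measure (Fin 2 → ℝ)) (U θ W1) k) (light Q R θ W1) := fun k =>
    have s := stat_Ht hQ (gauge_tau R) (FR_U θ W1) k
    ⟨s.1, s.2.symm⟩
  exact HasI.mono ((((mCE_I hQ hB hs).sub (mCE_I hQ hBt hs)).sub (HasI.const _)).const_mul _)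
    ((((HasI.sum fun k _ => (mCI_I hQ (FR_U _ _) (FR_Dk _) (FR_U _ _)).add
      ((i6 _).mul_const _)).add (HasI.const _)).add ((((mCI_I hQ hA hB hs).const_mul _).add
        ((mCE_I hQ hAB hs).sub (mCE_I hQ hA hs))).const_mul _)).const_mul _)
    (fun p => point_multiscale (p.1 : Measure (Fin 2 → ℝ)) θ hW t m hR hb hB)

end CPE

namespace CPE

/-! ### Exact dimension and entropy -/

variable {κ : Type} {Q : Measure (ProbabilityMeasure (Fin 2 → ℝ) × (Fin 2 → ℝ))}

lemma null_fibers {Ω : Type} [MeasurableSpace Ω] {ν : Measure Ω} {f : Ω → κ} (hf : FR f) :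
    ∀ᵐ x ∂ν, ν (f ⁻¹' {f x}) ≠ 0 := by
  rw [ae_iff]
  have : {x | ¬ν (f ⁻¹' {f x}) ≠ 0} = ⋃ d ∈ {d : κ | ν (f ⁻¹' {d}) = 0} ∩ range f, f ⁻¹' {d} := by
    ext x; simp
  rw [this, measure_biUnion_null_iff (hf.fin.subset inter_subset_right).countable]
  exact fun d hd => hd.1

lemma lintegral_FR {Ω : Type} [MeasurableSpace Ω] (μ : Measure Ω) {f : Ω → κ} (hf : FR f)
    (F : κ → ℝ≥0∞) : ∫⁻ x, F (f x) ∂μ = ∑ k ∈ hf.fin.toFinset, F k * μ (f ⁻¹' {k}) := by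
  have e : ∀ x, F (f x) = ∑ k ∈ hf.fin.toFinset, (f ⁻¹' {k}).indicator (fun _ => F k) x := by
    intro x
    rw [Finset.sum_eq_single (f x)]
    · rw [indicator_of_mem (by simp)]
    · intro d _ hd
      exact indicator_of_notMem (by simpa using hd.symm) _
    · intro h; exact absurd (hf.mem x) h
  simp only [e]
  rw [lintegral_finsetSum _ fun d _ => measurable_const.indicator (hf.meas _)]
  exact Finset.sum_congr rfl fun d _ => lintegral_indicator_const (hf.meas _) _

lemma measurable_FR {Ω γ : Type} [MeasurableSpace Ω] [MeasurableSpace γ] {f : Ω → κ} (hf : FR f)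
    (F : κ → γ) : Measurable (fun x => F (f x)) := fun s _ => hf.meas (F ⁻¹' s)

lemma Hm_lintegral {Ω : Type} [MeasurableSpace Ω] (μ : Measure Ω) [IsProbabilityMeasure μ]
    {f : Ω → κ} (hf : FR f) {c : ℝ} (hc : 0 ≤ c) :
    ∫⁻ x, ENNReal.ofReal (c * -Real.log (μ.real (f ⁻¹' {f x}))) ∂μ = ENNReal.ofReal (c * Hm μ f) := by
  rw [lintegral_FR μ hf (fun k => ENNReal.ofReal (c * -Real.log (μ.real (f ⁻¹' {k})))), Hm,
    Ht_eq Real.negMulLog_zero μ f hf.mem, Finset.mul_sum, ENNReal.ofReal_sum_of_nonneg]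
  · refine Finset.sum_congr rfl fun k _ => ?_
    rw [← ofReal_measureReal (μ := μ), ← ENNReal.ofReal_mul']
    · congr 1; rw [Real.negMulLog]; ring
    · exact measureReal_nonneg
  · exact fun k _ => mul_nonneg hc (Real.negMulLog_nonneg measureReal_nonneg measureReal_le_one)

section Dim

variable {X : Type} [PseudoMetricSpace X] [MeasurableSpace X] [OpensMeasurableSpace X]

lemma ExactDim.seq {μ : Measure (Fin 2 → ℝ)} {q : (Fin 2 → ℝ) → X} (hq : Measurable q) {d : ℝ}
    (h : ExactDim (μ.map q) d) : ∀ᵐ x ∂μ, Tendsto (fun n : ℕ =>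
      -Real.log (μ.real (q ⁻¹' Metric.ball (q x) ((1 / 2) ^ n))) / (n * Real.log 2)) atTop (nhds d) := by
  have h1 : Tendsto (fun n : ℕ => ((1 : ℝ) / 2) ^ n) atTop (nhdsWithin 0 (Ioi 0)) :=
    tendsto_nhdsWithin_iff.2 ⟨tendsto_pow_atTop_nhds_zero_of_lt_one (by norm_num) (by norm_num),
      Eventually.of_forall fun n => by simp⟩
  filter_upwards [ae_of_ae_map hq.aemeasurable h] with x hx
  refine (hx.comp h1).congr fun n => ?_
  simp only [Function.comp]
  rw [Measure.map_apply hq Metric.isOpen_ball.measurableSet, Real.log_pow, one_div, Real.log_inv,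
    mul_neg, div_neg, neg_div]
  rfl

lemma ExactDim.nonneg {μ : Measure (Fin 2 → ℝ)} [IsProbabilityMeasure μ] {q : (Fin 2 → ℝ) → X}
    (hq : Measurable q) {d : ℝ} (h : ExactDim (μ.map q) d) : 0 ≤ d := by
  obtain ⟨x, hx⟩ := (ExactDim.seq hq h).exists
  refine ge_of_tendsto' hx fun n => ?_
  refine div_nonneg ?_ (by positivity)
  have := Real.log_nonpos measureReal_nonneg
    (measureReal_le_one (μ := μ) (s := q ⁻¹' Metric.ball (q x) ((1 / 2) ^ n)))
  linarith

/-- Fatou's lemma gives the lower bound for the entropy of partitions of small diameter. -/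
lemma ent_lower_point {μ : Measure (Fin 2 → ℝ)} [IsProbabilityMeasure μ]
    (hμ : ∀ᵐ x ∂μ, x ∈ unitCube 2) {q : (Fin 2 → ℝ) → X} (hq : Measurable q) {d : ℝ}
    (h : ExactDim (μ.map q) d) {f : ℕ → (Fin 2 → ℝ) → κ} (hf : ∀ n, FR (f n))
    (hd : ∀ n, ∀ x ∈ unitCube 2, ∀ y ∈ unitCube 2, f n x = f n y → dist (q y) (q x) < (1 / 2) ^ n) :
    ENNReal.ofReal d ≤ liminf (fun n : ℕ => ENNReal.ofReal ((n * Real.log 2)⁻¹ * Hm μ (f n))) atTop := by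
  have hc : ∀ n : ℕ, 0 ≤ ((n : ℝ) * Real.log 2)⁻¹ := fun n => by positivity
  have e : ∀ n : ℕ, ENNReal.ofReal ((n * Real.log 2)⁻¹ * Hm μ (f n))
      = ∫⁻ x, ENNReal.ofReal ((n * Real.log 2)⁻¹ * -Real.log (μ.real (f n ⁻¹' {f n x}))) ∂μ := fun n =>
    (Hm_lintegral μ (hf n) (hc n)).symm
  simp only [e]
  refine le_trans ?_ (lintegral_liminf_le fun n => measurable_FR (hf n)
    (fun k => ENNReal.ofReal ((n * Real.log 2)⁻¹ * -Real.log (μ.real (f n ⁻¹' {k})))))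
  have : ENNReal.ofReal d = ∫⁻ _x, ENNReal.ofReal d ∂μ := by simp
  rw [this]
  refine lintegral_mono_ae ?_
  filter_upwards [ExactDim.seq hq h, hμ, ae_all_iff.2 fun n => null_fibers (ν := μ) (hf n)]
    with x hx hxc hpos
  have h1 := (ENNReal.continuous_ofReal.tendsto d).comp hx
  rw [← h1.liminf_eq]
  refine liminf_le_liminf (Eventually.of_forall fun n => ENNReal.ofReal_le_ofReal ?_)
  refine le_trans (le_of_eq (div_eq_inv_mul _ _)) ?_
  refine mul_le_mul_of_nonneg_left (neg_le_neg (Real.log_le_log ?_ ?_)) (hc n)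
  · exact ENNReal.toReal_pos (hpos n) (measure_ne_top _ _)
  · refine ENNReal.toReal_mono (measure_ne_top _ _) (measure_mono_ae ?_)
    filter_upwards [hμ] with y hy hyf
    exact hd n x hxc y hy hyf.symm

/-- The averaged entropy of partitions of small diameter is at least about `n d log 2`. -/
lemma ent_lower (hQ : IsCPDist Q) {q : (Fin 2 → ℝ) → X} (hq : Measurable q) {d : ℝ}
    (h : ∀ᵐ p ∂Q, ExactDim ((p.1 : Measure (Fin 2 → ℝ)).map q) d)
    {f : ℕ → (Fin 2 → ℝ) → κ} (hf : ∀ n, FR (f n))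
    (hd : ∀ n, ∀ x ∈ unitCube 2, ∀ y ∈ unitCube 2, f n x = f n y → dist (q y) (q x) < (1 / 2) ^ n)
    {ε : ℝ} (hε : 0 < ε) : ∀ᶠ n : ℕ in atTop, n * (d - ε) * Real.log 2 ≤ hh Q (f n) := by
  have := hQ.1
  have hc : ∀ n : ℕ, 0 ≤ ((n : ℝ) * Real.log 2)⁻¹ := fun n => by positivity
  have hL : 0 < Real.log 2 := Real.log_pos (by norm_num)
  by_cases hdε : d - ε ≤ 0
  · refine Eventually.of_forall fun n => ?_
    refine le_trans ?_ (hh_nonneg (hf n))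
    exact mul_nonpos_of_nonpos_of_nonneg (mul_nonpos_of_nonneg_of_nonpos (by positivity) hdε) hL.le
  have h1 : ENNReal.ofReal d ≤ ∫⁻ p, liminf (fun n : ℕ => ENNReal.ofReal ((n * Real.log 2)⁻¹ *
      Hm (p.1 : Measure (Fin 2 → ℝ)) (f n))) atTop ∂Q := by
    have : ENNReal.ofReal d = ∫⁻ _x, ENNReal.ofReal d ∂Q := by simp
    rw [this]
    refine lintegral_mono_ae ?_
    filter_upwards [h, ae_cube hQ] with p hp hpc
    exact ent_lower_point hpc.1 hq hp hf hd
  have h2 := h1.trans (lintegral_liminf_le' fun n =>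
    ((hh_int hQ (hf n)).aestronglyMeasurable.aemeasurable.const_mul _).ennreal_ofReal)
  have e : ∀ n : ℕ, ∫⁻ p, ENNReal.ofReal ((n * Real.log 2)⁻¹ *
      Hm (p.1 : Measure (Fin 2 → ℝ)) (f n)) ∂Q = ENNReal.ofReal ((n * Real.log 2)⁻¹ * hh Q (f n)) := by
    intro n
    rw [← ofReal_integral_eq_lintegral_ofReal ((hh_int hQ (hf n)).const_mul _)
      (ae_of_all _ fun p => mul_nonneg (hc n) (Hm_nonneg _ (hf n))), integral_const_mul, hh]
  simp only [e] at h2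
  have h3 : ENNReal.ofReal (d - ε) < liminf (fun n : ℕ => ENNReal.ofReal ((n * Real.log 2)⁻¹ *
      hh Q (f n))) atTop :=
    lt_of_lt_of_le ((ENNReal.ofReal_lt_ofReal_iff (by linarith)).2 (by linarith)) h2
  filter_upwards [eventually_lt_of_lt_liminf h3, eventually_gt_atTop 0] with n hn hn0
  have h4 := (ENNReal.ofReal_lt_ofReal_iff_of_nonneg (by linarith)).1 hn
  have hn1 : (0 : ℝ) < n := by exact_mod_cast hn0
  have h5 : 0 < (n : ℝ) * Real.log 2 := by positivity
  rw [inv_mul_eq_div, lt_div_iff₀ h5] at h4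
  nlinarith

end Dim

lemma floor_dist (n : ℕ) {a b : ℝ} (h : ⌊(2 : ℝ) ^ n * a⌋ = ⌊(2 : ℝ) ^ n * b⌋) :
    dist b a < (1 / 2) ^ n := by
  have := floor_eq_lt h.symm
  rw [← mul_sub, abs_mul, abs_of_pos (by positivity)] at this
  rw [Real.dist_eq, one_div, inv_pow, ← one_div, lt_div_iff₀ (by positivity)]
  linarith

lemma U_dist (θ : ℝ) (n : ℕ) : ∀ x ∈ unitCube 2, ∀ y ∈ unitCube 2, U θ n x = U θ n y →
    dist (projDir θ y) (projDir θ x) < (1 / 2) ^ n := by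
  intro x hx y hy h
  rw [U, U, clip_of_mem hx, clip_of_mem hy] at h
  exact floor_dist n h

lemma D_dist (n : ℕ) : ∀ x ∈ unitCube 2, ∀ y ∈ unitCube 2, Dk n x = Dk n y →
    dist (id y) (id x) < (1 / 2) ^ n := by
  intro x hx y hy h
  simp only [Dk, Prod.mk.injEq, clip_of_mem hx, clip_of_mem hy] at h
  rw [id, id, dist_pi_lt_iff (by positivity)]
  intro i
  fin_cases i
  exacts [floor_dist n h.1, floor_dist n h.2]

end CPE

namespace CPE

/-! ### Light cells and the upper entropy bound -/

variable {Q : Measure (ProbabilityMeasure (Fin 2 → ℝ) × (Fin 2 → ℝ))}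

lemma sum_fibers_le {μ : Measure (Fin 2 → ℝ)} [IsProbabilityMeasure μ] {f : (Fin 2 → ℝ) → ℤ}
    (hf : FR f) (S : Finset ℤ) : ∑ c ∈ S, μ.real (f ⁻¹' {c}) ≤ 1 := by
  rw [sum_measureReal_preimage_singleton S fun c _ => hf.meas _]
  exact measureReal_le_one

lemma Ht_tau_le_one {μ : Measure (Fin 2 → ℝ)} [IsProbabilityMeasure μ] {f : (Fin 2 → ℝ) → ℤ}
    (hf : FR f) (R : ℝ) : Ht (tau R) μ f ≤ 1 := by
  rw [Ht_eq (gauge_tau R).zero _ _ hf.mem]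
  refine (Finset.sum_le_sum fun c _ => ?_).trans (sum_fibers_le (μ := μ) hf hf.fin.toFinset)
  unfold tau; split_ifs
  · exact le_rfl
  · exact measureReal_nonneg

/-- The mass in cells lighter than `1 / R` is at most the mass of the cells whose neighbourhood is
lighter than `b`, up to an error `3 / (R b)` that bounds the number of remaining cells. -/
lemma Ht_tau_le {μ : Measure (Fin 2 → ℝ)} [IsProbabilityMeasure μ] {f : (Fin 2 → ℝ) → ℤ}
    (hf : FR f) {R b : ℝ} (hR : 0 < R) (hb : 0 < b) :
    Ht (tau R) μ f ≤ μ.real {x | μ.real (f ⁻¹' {f x - 1}) + μ.real (f ⁻¹' {f x})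
      + μ.real (f ⁻¹' {f x + 1}) < b} + 3 / (R * b) := by
  set v : ℤ → ℝ := fun c => μ.real (f ⁻¹' {c}) with hv
  have hv0 : ∀ c, 0 ≤ v c := fun c => measureReal_nonneg
  set w : ℤ → ℝ := fun c => v (c - 1) + v c + v (c + 1) with hw
  set S := hf.fin.toFinset with hS
  have h1 : ∀ c ∈ S, tau R (v c) ≤ (if w c < b then v c else 0) + w c / (R * b) := by
    intro c _
    have hw0 : 0 ≤ w c := by simp only [hw]; linarith [hv0 (c - 1), hv0 c, hv0 (c + 1)]
    have h3 : 0 ≤ w c / (R * b) := by positivity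
    unfold tau
    by_cases h : w c < b
    · rw [if_pos h]
      split_ifs <;> linarith [hv0 c]
    · rw [if_neg h, zero_add]
      split_ifs with h2
      · rw [le_div_iff₀ (by positivity)]
        nlinarith
      · exact h3
  have h2 : ∑ c ∈ S, (if w c < b then v c else 0) ≤ μ.real {x | w (f x) < b} := by
    rw [← Finset.sum_filter, sum_measureReal_preimage_singleton _ fun c _ => hf.meas _]
    exact measureReal_mono fun x hx => by simpa using (Finset.mem_filter.1 hx).2
  have h3 : ∑ c ∈ S, w c ≤ 3 := by
    have a1 : ∑ c ∈ S, v (c - 1) ≤ 1 := by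
      have := sum_fibers_le (μ := μ) hf (S.image fun c => c - 1)
      rwa [Finset.sum_image (by intro a _ b _ h; simpa using h)] at this
    have a2 : ∑ c ∈ S, v (c + 1) ≤ 1 := by
      have := sum_fibers_le (μ := μ) hf (S.image fun c => c + 1)
      rwa [Finset.sum_image (by intro a _ b _ h; simpa using h)] at this
    have a3 : ∑ c ∈ S, v c ≤ 1 := sum_fibers_le (μ := μ) hf S
    simp only [hw, Finset.sum_add_distrib]
    linarith
  rw [Ht_eq (gauge_tau R).zero _ _ hf.mem]
  refine (Finset.sum_le_sum h1).trans ?_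
  rw [Finset.sum_add_distrib, ← Finset.sum_div]
  exact add_le_add h2 (div_le_div_of_nonneg_right h3 (by positivity))

lemma light_point {μ : Measure (Fin 2 → ℝ)} [IsProbabilityMeasure μ]
    (hμ : ∀ᵐ x ∂μ, x ∈ unitCube 2) {θ β : ℝ} (h : ExactDim (μ.map (projDir θ)) β) {ε : ℝ}
    (hε : 0 < ε) :
    Tendsto (fun n : ℕ => Ht (tau (Real.exp (n * (β + ε) * Real.log 2))) μ (U θ n)) atTop (nhds 0) := by
  have hL : 0 < Real.log 2 := Real.log_pos (by norm_num)
  set b : ℕ → ℝ := fun n => Real.exp (-(n * (β + ε / 2) * Real.log 2)) with hb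
  set E : ℕ → Set (Fin 2 → ℝ) := fun n => {x | μ.real (U θ n ⁻¹' {U θ n x - 1})
    + μ.real (U θ n ⁻¹' {U θ n x}) + μ.real (U θ n ⁻¹' {U θ n x + 1}) < b n} with hE
  have hEm : ∀ n, MeasurableSet (E n) := fun n => (FR_U θ n).meas {c | μ.real (U θ n ⁻¹' {c - 1})
    + μ.real (U θ n ⁻¹' {c}) + μ.real (U θ n ⁻¹' {c + 1}) < b n}
  have hlim : ∀ᵐ x ∂μ, ∀ᶠ n in atTop, x ∈ E n ↔ x ∈ (∅ : Set (Fin 2 → ℝ)) := by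
    filter_upwards [ExactDim.seq (measurable_projDir θ) h, hμ,
      ae_all_iff.2 fun n => null_fibers (ν := μ) (FR_U θ n)] with x hx hxc hpos
    filter_upwards [hx.eventually (gt_mem_nhds (show β < β + ε / 2 by linarith)),
      eventually_gt_atTop 0] with n hn hn0
    simp only [mem_empty_iff_false, iff_false, hE, mem_ofPred_eq, not_lt]
    have hn1 : (0 : ℝ) < n := by exact_mod_cast hn0
    have hball : μ.real (projDir θ ⁻¹' Metric.ball (projDir θ x) ((1 / 2) ^ n))
        ≤ μ.real (U θ n ⁻¹' {U θ n x - 1}) + μ.real (U θ n ⁻¹' {U θ n x})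
          + μ.real (U θ n ⁻¹' {U θ n x + 1}) := by
      refine le_trans ?_ ((measureReal_union_le _ _).trans (add_le_add_left (measureReal_union_le _ _) _))
      refine ENNReal.toReal_mono (measure_ne_top _ _) (measure_mono_ae ?_)
      filter_upwards [hμ] with y hy hyb
      have hyb' : |projDir θ y - projDir θ x| < (1 / 2) ^ n := by
        rw [← Real.dist_eq]; exact hyb
      have h1 : |(2 : ℝ) ^ n * projDir θ y - (2 : ℝ) ^ n * projDir θ x| < ((1 : ℕ) : ℝ) := by
        rw [← mul_sub, abs_mul, abs_of_pos (by positivity)]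
        calc _ < (2 : ℝ) ^ n * (1 / 2) ^ n := by gcongr
          _ = 1 := by rw [← mul_pow]; norm_num
          _ = _ := by simp
      have h2 := abs_le.1 (floor_diff 1 le_rfl h1)
      have h3 : U θ n y - U θ n x = ⌊(2 : ℝ) ^ n * projDir θ y⌋ - ⌊(2 : ℝ) ^ n * projDir θ x⌋ := by
        rw [U, U, clip_of_mem hxc, clip_of_mem hy]
      rw [← h3] at h2
      change (U θ n y = U θ n x - 1 ∨ U θ n y = U θ n x) ∨ U θ n y = U θ n x + 1
      push_cast at h2
      omega
    have hpos' : 0 < μ.real (projDir θ ⁻¹' Metric.ball (projDir θ x) ((1 / 2) ^ n)) := by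
      refine lt_of_lt_of_le (ENNReal.toReal_pos (hpos n) (measure_ne_top _ _))
        (ENNReal.toReal_mono (measure_ne_top _ _) (measure_mono_ae ?_))
      filter_upwards [hμ] with y hy hyf
      exact U_dist θ n x hxc y hy hyf.symm
    refine le_trans ?_ hball
    rw [div_lt_iff₀ (by positivity)] at hn
    rw [hb, ← Real.le_log_iff_exp_le hpos']
    linarith
  have hE0 := tendsto_measure_of_ae_tendsto_indicator_of_isFiniteMeasure atTop MeasurableSet.empty hEm hlim
  have hE1 : Tendsto (fun n => μ.real (E n)) atTop (nhds 0) := by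
    have := (ENNReal.tendsto_toReal (by simp)).comp hE0
    simpa [Function.comp_def, Measure.real] using this
  have hr : Tendsto (fun n : ℕ => 3 * Real.exp (-(ε / 2 * Real.log 2)) ^ n) atTop (nhds 0) := by
    have := (tendsto_pow_atTop_nhds_zero_of_lt_one (Real.exp_pos (-(ε / 2 * Real.log 2))).le
      (Real.exp_lt_one_iff.2 (by have := Real.log_pos one_lt_two; nlinarith))).const_mul 3
    simpa using this
  refine squeeze_zero (fun n => Ht_nonneg (gauge_tau _) (FR_U θ n) μ) (fun n => ?_)
    (by simpa using hE1.add hr)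
  refine (Ht_tau_le (FR_U θ n) (Real.exp_pos _) (Real.exp_pos (-(n * (β + ε / 2) * Real.log 2)))).trans
    (le_of_eq ?_)
  congr 1
  rw [← Real.exp_add, ← Real.exp_nat_mul, div_eq_mul_inv, ← Real.exp_neg]
  congr 2; ring

/-- For projections of dimension `β`, most of the mass is carried by at most `2 ^ (n (β + ε))` cells. -/
lemma light_tendsto (hQ : IsCPDist Q) {θ β : ℝ}
    (h : ∀ᵐ p ∂Q, ExactDim ((p.1 : Measure (Fin 2 → ℝ)).map (projDir θ)) β) {ε : ℝ} (hε : 0 < ε) :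
    Tendsto (fun n : ℕ => light Q (Real.exp (n * (β + ε) * Real.log 2)) θ n) atTop (nhds 0) := by
  have := hQ.1
  have e : (0 : ℝ) = ∫ _p, (0 : ℝ) ∂Q := by simp
  rw [e]
  refine tendsto_integral_of_dominated_convergence (fun _ => 1)
    (fun n => (integrable_Ht hQ (gauge_tau _) (FR_U θ n)).aestronglyMeasurable) (integrable_const _)
    (fun n => ae_of_all _ fun p => ?_) ?_
  · rw [Real.norm_eq_abs, abs_of_nonneg (Ht_nonneg (gauge_tau _) (FR_U θ n) _)]
    exact Ht_tau_le_one (FR_U θ n) _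
  · filter_upwards [h, ae_cube hQ] with p hp hpc
    exact light_point hpc.1 hp hε

/-- Entropy is controlled by the number of heavy cells. -/
lemma Hm_le_light (μ : Measure (Fin 2 → ℝ)) [IsProbabilityMeasure μ] (θ : ℝ) (n : ℕ) {R : ℝ}
    (hR : 1 ≤ R) :
    Hm μ (U θ n) ≤ Real.log (6 * R) + Ht (tau R) μ (U θ n) * Real.log (2 * (5 * 2 ^ n)) := by
  obtain ⟨ι, _, p, e, hp, h1, hx, hpm, hE⟩ := transport μ (FR_U θ n)
  obtain ⟨S, hS, hSc⟩ := U_card θ n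
  have heS : ∀ i, e i ∈ S := fun i => by
    obtain ⟨x, hxi⟩ := hx i
    rw [← hxi]; exact hS x
  have heS' : ∀ i, e i ∈ (FR_U θ n).fin.toFinset := fun i => by
    obtain ⟨x, hxi⟩ := hx i
    rw [← hxi]; exact (FR_U θ n).mem x
  obtain ⟨F, hF, hbad⟩ := bad_le hp e (fun _ => ((0, 0) : ℤ × ℤ)) hR _ heS' {(0, 0)} (by simp)
  have h5 : (1 : ℝ) ≤ 5 * 2 ^ n := by
    have : (1 : ℝ) ≤ 2 ^ n := one_le_pow₀ (by norm_num)
    linarith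
  have h := Ent_le_bad hp h1 e e (fun _ => ((0, 0) : ℤ × ℤ)) (fun i j _ h => by rw [h]; simp) F hR h5 hF
    S heS hSc
  have e1 := hE (fun q => q)
  have e2 : Ent p (fun _ => ((0, 0) : ℤ × ℤ)) = 0 := Ent_const h1 _
  have e3 : Ent p (fun i => (e i, ((0, 0) : ℤ × ℤ))) = Ent p e :=
    Ent_congr fun i j => by simp
  have e4 : pm p (fun _ => ((0, 0) : ℤ × ℤ)) (0, 0) = 1 := by simp [pm, h1]
  rw [Finset.sum_singleton, e4] at hbad
  have e5 : ∑ j ∈ (FR_U θ n).fin.toFinset, 1 * tau R (pm p (fun i => (e i, ((0, 0) : ℤ × ℤ))) (j, 0, 0) / 1)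
      = Ht (tau R) μ (U θ n) := by
    rw [Ht_eq (gauge_tau R).zero _ _ (FR_U θ n).mem]
    refine Finset.sum_congr rfl fun j _ => ?_
    have := hpm (fun q => (q, ((0, 0) : ℤ × ℤ))) (j, 0, 0)
    rw [one_mul, div_one, this]
    have hs : (fun x => (U θ n x, ((0, 0) : ℤ × ℤ))) ⁻¹' {(j, 0, 0)} = U θ n ⁻¹' {j} := by
      ext x; simp
    exact congrArg (fun s => tau R (μ.real s)) hs
  rw [e5] at hbad
  rw [e2, e3] at h
  have e6 : Ent p e = Hm μ (U θ n) := e1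
  rw [e6] at h
  have := mul_le_mul_of_nonneg_right hbad (Real.log_nonneg (show 1 ≤ 2 * (5 * (2 : ℝ) ^ n) by linarith))
  linarith

lemma hh_le_light (hQ : IsCPDist Q) (θ : ℝ) (n : ℕ) {R : ℝ} (hR : 1 ≤ R) :
    hh Q (U θ n) ≤ Real.log (6 * R) + light Q R θ n * Real.log (2 * (5 * 2 ^ n)) := by
  have := hQ.1
  exact HasI.mono (hh_I hQ (FR_U θ n)) ((HasI.const (μ := Q) _).add
    (HasI.mul_const (v := light Q R θ n) ⟨integrable_Ht hQ (gauge_tau R) (FR_U θ n), rfl⟩ _))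
    (fun p => Hm_le_light _ θ n hR)

/-- The averaged entropy of the projection at scale `n` is at most about `n β log 2`. -/
lemma ent_upper (hQ : IsCPDist Q) {θ β : ℝ}
    (h : ∀ᵐ p ∂Q, ExactDim ((p.1 : Measure (Fin 2 → ℝ)).map (projDir θ)) β) {ε : ℝ} (hε : 0 < ε) :
    ∀ᶠ n : ℕ in atTop, hh Q (U θ n) ≤ n * (β + ε) * Real.log 2 := by
  have := hQ.1
  have hL : 0 < Real.log 2 := Real.log_pos (by norm_num)
  have hβ : 0 ≤ β := by
    obtain ⟨p, hp⟩ := h.exists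
    exact ExactDim.nonneg (measurable_projDir θ) hp
  have hl := light_tendsto hQ h (show 0 < ε / 2 by linarith)
  have hl2 : ∀ᶠ n : ℕ in atTop, light Q (Real.exp (n * (β + ε / 2) * Real.log 2)) θ n < ε / 8 :=
    hl.eventually (gt_mem_nhds (by linarith))
  have hbig : ∀ᶠ n : ℕ in atTop, Real.log 6 + Real.log 10 ≤ n * (ε / 4 * Real.log 2) := by
    have : Tendsto (fun n : ℕ => (n : ℝ) * (ε / 4 * Real.log 2)) atTop atTop :=
      tendsto_natCast_atTop_atTop.atTop_mul_const (by positivity)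
    exact this.eventually_ge_atTop _
  filter_upwards [hl2, hbig, eventually_ge_atTop 1] with n h1 h2 hn
  have h3 := hh_le_light hQ θ n (R := Real.exp (n * (β + ε / 2) * Real.log 2))
    (Real.one_le_exp (by positivity))
  have hl1 : light Q (Real.exp (n * (β + ε / 2) * Real.log 2)) θ n ≤ 1 := by
    refine HasI.mono (g := fun _ => 1) ⟨integrable_Ht hQ (gauge_tau _) (FR_U θ n), rfl⟩ (HasI.const (μ := Q) 1) fun p => ?_
    exact Ht_tau_le_one (FR_U θ n) _
  have e : Real.log (2 * (5 * 2 ^ n)) = Real.log 10 + n * Real.log 2 := by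
    rw [← mul_assoc, Real.log_mul (by norm_num) (by positivity), Real.log_pow]; norm_num
  rw [e, Real.log_mul (by norm_num) (Real.exp_pos _).ne', Real.log_exp] at h3
  have hl10 : 0 < Real.log 10 := Real.log_pos (by norm_num)
  have a1 : light Q (Real.exp (n * (β + ε / 2) * Real.log 2)) θ n * Real.log 10 ≤ 1 * Real.log 10 :=
    mul_le_mul_of_nonneg_right hl1 hl10.le
  have a2 : light Q (Real.exp (n * (β + ε / 2) * Real.log 2)) θ n * (n * Real.log 2)
      ≤ ε / 8 * (n * Real.log 2) := mul_le_mul_of_nonneg_right h1.le (by positivity)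
  have a3 : 0 < (n : ℝ) * Real.log 2 := by
    have : (0 : ℝ) < n := by exact_mod_cast hn
    positivity
  nlinarith

end CPE

namespace CPE

/-! ### Entropy growth of a projection along scales -/

variable {Q : Measure (ProbabilityMeasure (Fin 2 → ℝ) × (Fin 2 → ℝ))}

/-- Averaged entropy of the generation-`k` cell given the projection at scale `2 ^ (-m)`. -/
def cc (Q : Measure (ProbabilityMeasure (Fin 2 → ℝ) × (Fin 2 → ℝ))) (θ : ℝ) (k m : ℕ) : ℝ :=
  hh Q (fun x => (Dk k x, U θ m x)) - hh Q (U θ m)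

/-- Stationarity: inside generation-`k` cells, the projection at scale `m + k` looks like the
projection at scale `m` of a typical measure. -/
lemma cc_shift (hQ : IsCPDist Q) (θ : ℝ) (k m : ℕ) :
    |cc Q θ k (m + k) - (hh Q (Dk k) + hh Q (U θ m) - hh Q (U θ (m + k)))| ≤ Real.log 3 := by
  have hS := (FR_U θ m).precomp (measurable_Sk k)
  have h1 := hh_osc hQ (FR_U θ (m + k)) hS (FR_Dk k) 1
    (fun x y hx hy => (U_shift θ m k hy).1 hx)
  have h2 := hh_osc hQ hS (FR_U θ (m + k)) (FR_Dk k) 1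
    (fun x y hx hy => (U_shift θ m k hy).2 hx)
  have h3 := hh_stat hQ (FR_U θ m) k
  have h4 : hh Q (fun x => (Dk k x, U θ (m + k) x)) = hh Q (fun x => (U θ (m + k) x, Dk k x)) :=
    hh_congr hQ ((FR_U θ (m + k)).pair (FR_Dk k)) ((FR_Dk k).pair (FR_U θ (m + k)))
      fun x y => by simp [and_comm]
  have e : Real.log (2 * ((1 : ℕ) : ℝ) + 1) = Real.log 3 := by norm_num
  rw [e] at h1 h2
  rw [cc, abs_le]
  constructor <;> linarith

lemma cc_antitone (hQ : IsCPDist Q) (θ : ℝ) (k : ℕ) : Antitone (cc Q θ k) := by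
  intro m n hmn
  have h1 := hh_submod hQ (FR_Dk k) (FR_U θ n) (FR_U θ m)
  have h2 : hh Q (fun x => (Dk k x, U θ n x)) = hh Q (fun x => (Dk k x, U θ n x, U θ m x)) :=
    hh_congr hQ ((FR_Dk k).pair ((FR_U θ n).pair (FR_U θ m))) ((FR_Dk k).pair (FR_U θ n))
      fun x y => by simp; exact fun _ h => U_mono θ hmn h
  have h3 : hh Q (U θ n) = hh Q (fun x => (U θ n x, U θ m x)) :=
    hh_congr hQ ((FR_U θ n).pair (FR_U θ m)) (FR_U θ n)
      fun x y => by simp; exact fun h => U_mono θ hmn h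
  simp only [cc]
  linarith

lemma cc_nonneg (hQ : IsCPDist Q) (θ : ℝ) (k m : ℕ) : 0 ≤ cc Q θ k m := by
  have := hh_mono hQ ((FR_Dk k).pair (FR_U θ m)) (FR_U θ m) fun x y h => (Prod.mk.inj h).2
  unfold cc; linarith

/-- The mutual information of a cell and further digits of the projection is an increment of `cc`. -/
lemma aCI_eq_cc (hQ : IsCPDist Q) (θ : ℝ) (k : ℕ) {m n : ℕ} (hmn : m ≤ n) :
    aCI Q (U θ n) (Dk k) (U θ m) = cc Q θ k m - cc Q θ k n := by
  have h2 : hh Q (fun x => (Dk k x, U θ n x)) = hh Q (fun x => ((U θ n x, Dk k x), U θ m x)) :=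
    hh_congr hQ (((FR_U θ n).pair (FR_Dk k)).pair (FR_U θ m)) ((FR_Dk k).pair (FR_U θ n))
      fun x y => by
        simp only [Prod.mk.injEq]
        exact ⟨fun h => ⟨h.1.2, h.1.1⟩, fun h => ⟨⟨h.2, h.1⟩, U_mono θ hmn h.2⟩⟩
  have h3 : hh Q (U θ n) = hh Q (fun x => (U θ n x, U θ m x)) :=
    hh_congr hQ ((FR_U θ n).pair (FR_U θ m)) (FR_U θ n)
      fun x y => by simp; exact fun h => U_mono θ hmn h
  simp only [aCI, aCE, cc]
  linarith

/-- The mutual information between a generation-`n` cell and the next `n` digits of the projection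
tends to zero: it is the increment of a bounded monotone sequence. -/
lemma aCI_tendsto (hQ : IsCPDist Q) (θ : ℝ) (n : ℕ) :
    Tendsto (fun m => aCI Q (U θ (m + n)) (Dk n) (U θ m)) atTop (nhds 0) := by
  obtain ⟨l, hl⟩ : ∃ l, Tendsto (cc Q θ n) atTop (nhds l) :=
    ⟨_, tendsto_atTop_ciInf (cc_antitone hQ θ n) ⟨0, by rintro _ ⟨m, rfl⟩; exact cc_nonneg hQ θ n m⟩⟩
  have h := hl.sub (hl.comp (tendsto_add_atTop_nat n))
  rw [sub_self] at h
  refine h.congr fun m => ?_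
  rw [aCI_eq_cc hQ θ n (Nat.le_add_right m n)]; rfl

/-- Increments of the entropy of the projection are almost monotone in the scale. -/
lemma incr_almost_mono (hQ : IsCPDist Q) (θ : ℝ) (k : ℕ) {m n : ℕ} (hmn : m ≤ n) :
    hh Q (U θ (m + k)) - hh Q (U θ m) ≤ hh Q (U θ (n + k)) - hh Q (U θ n) + 2 * Real.log 3 := by
  have h1 := abs_le.1 (cc_shift hQ θ k m)
  have h2 := abs_le.1 (cc_shift hQ θ k n)
  have h3 := cc_antitone hQ θ k (Nat.add_le_add_right hmn k)
  linarith [h1.1, h1.2, h2.1, h2.2]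

/-- Almost monotonicity turns the asymptotic rate `β` into a bound for every single increment. -/
lemma incr_upper (hQ : IsCPDist Q) {θ β : ℝ}
    (h : ∀ᵐ p ∂Q, ExactDim ((p.1 : Measure (Fin 2 → ℝ)).map (projDir θ)) β) (m k : ℕ) :
    hh Q (U θ (m + k)) - hh Q (U θ m) ≤ k * β * Real.log 2 + 2 * Real.log 3 := by
  have hL : 0 < Real.log 2 := Real.log_pos (by norm_num)
  have hL3 : 0 < Real.log 3 := Real.log_pos (by norm_num)
  rcases Nat.eq_zero_or_pos k with rfl | hk
  · simp; positivity
  set a := hh Q (U θ (m + k)) - hh Q (U θ m) - 2 * Real.log 3 with ha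
  have hsum : ∀ N : ℕ, N * a ≤ hh Q (U θ (m + N * k)) - hh Q (U θ m) := by
    intro N
    induction N with
    | zero => simp
    | succ N ih =>
      have := incr_almost_mono hQ θ k (Nat.le_add_right m (N * k))
      have e : m + (N + 1) * k = m + N * k + k := by ring
      rw [e]; push_cast; linarith
  have hlim : ∀ ε > 0, a ≤ k * (β + ε) * Real.log 2 := by
    intro ε hε
    have hup := (tendsto_atTop_mono (fun N : ℕ => show N ≤ m + N * k by nlinarith) tendsto_id).eventually
      (ent_upper hQ h hε)
    have h0 : Tendsto (fun N : ℕ => k * (β + ε) * Real.log 2 + m * (β + ε) * Real.log 2 / N) atTop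
        (nhds (k * (β + ε) * Real.log 2 + 0)) :=
      tendsto_const_nhds.add (tendsto_const_div_atTop_nhds_zero_nat _)
    rw [add_zero] at h0
    refine ge_of_tendsto h0 ?_
    filter_upwards [hup, eventually_gt_atTop 0] with N h1 h2
    have h3 := hsum N
    have h4 := hh_nonneg (Q := Q) (FR_U θ m)
    have h5 : (0 : ℝ) < N := by exact_mod_cast h2
    push_cast at h1
    have : a ≤ (((m : ℝ) + N * k) * (β + ε) * Real.log 2) / N := by
      rw [le_div_iff₀ h5]; linarith
    refine this.trans (le_of_eq ?_)
    field_simp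
    ring
  have : a ≤ k * β * Real.log 2 := by
    refine le_of_forall_pos_le_add fun ε hε => ?_
    have h1 := hlim (ε / (k * Real.log 2)) (by positivity)
    refine h1.trans (le_of_eq ?_)
    have : (0 : ℝ) < k := by exact_mod_cast hk
    field_simp
  linarith

lemma hh_U_zero (hQ : IsCPDist Q) (θ : ℝ) : hh Q (U θ 0) ≤ Real.log 5 := by
  obtain ⟨S, hS, hc⟩ := U_card θ 0
  exact hh_card hQ (FR_U θ 0) (by norm_num) S hS (by simpa using hc)

lemma incr_lower (hQ : IsCPDist Q) (θ : ℝ) (m n : ℕ) :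
    hh Q (U θ n) - Real.log 5 - 2 * Real.log 3 ≤ hh Q (U θ (m + n)) - hh Q (U θ m) := by
  have h1 := incr_almost_mono hQ θ n (Nat.zero_le m)
  have h2 := hh_U_zero hQ θ
  rw [zero_add] at h1
  linarith

/-- The generation-`n` cell loses at most about `n β log 2` of its entropy when its projection is known. -/
lemma cc_lower (hQ : IsCPDist Q) {θ β : ℝ}
    (h : ∀ᵐ p ∂Q, ExactDim ((p.1 : Measure (Fin 2 → ℝ)).map (projDir θ)) β) {m n : ℕ} (hmn : n ≤ m) :
    hh Q (Dk n) - n * β * Real.log 2 - 3 * Real.log 3 ≤ cc Q θ n m := by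
  obtain ⟨k, rfl⟩ := Nat.exists_eq_add_of_le' hmn
  have h1 := abs_le.1 (cc_shift hQ θ n k)
  have h2 := incr_upper hQ h k n
  linarith [h1.1]

/-- The information shared by a cell and the next `n` digits of its projection is bounded by the
deviation of the entropy of the projection from its asymptotic value. -/
lemma excess (hQ : IsCPDist Q) {θ β : ℝ}
    (h : ∀ᵐ p ∂Q, ExactDim ((p.1 : Measure (Fin 2 → ℝ)).map (projDir θ)) β) (m n : ℕ) :
    aCI Q (U θ (m + n)) (Dk m) (U θ m)
      ≤ n * β * Real.log 2 + 4 * Real.log 3 + Real.log 5 - hh Q (U θ n) := by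
  rw [aCI_eq_cc hQ θ m (Nat.le_add_right m n)]
  have h1 := abs_le.1 (cc_shift hQ θ m 0)
  have h2 := abs_le.1 (cc_shift hQ θ m n)
  have h3 := incr_upper hQ h m n
  have h4 := hh_U_zero hQ θ
  rw [zero_add] at h1
  rw [add_comm n m] at h2
  linarith [h1.1, h1.2, h2.1, h2.2]

/-- Monotonicity of mutual information in its second argument. -/
lemma aCI_mono (hQ : IsCPDist Q) {κ κ' κ'' τ : Type} {f : (Fin 2 → ℝ) → κ} {g : (Fin 2 → ℝ) → κ'}
    {s : (Fin 2 → ℝ) → κ''} {b : (Fin 2 → ℝ) → τ} (hf : FR f) (hg : FR g) (hs : FR s) (hb : FR b)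
    (hgb : ∀ x y, g x = g y → b x = b y) : aCI Q f b s ≤ aCI Q f g s := by
  have h1 := hh_submod hQ hf hg (hb.pair hs)
  have h2 : hh Q (fun x => ((f x, g x), s x)) = hh Q (fun x => (f x, g x, b x, s x)) :=
    hh_congr hQ (hf.pair (hg.pair (hb.pair hs))) ((hf.pair hg).pair hs) fun x y => by
      simp only [Prod.mk.injEq]
      exact ⟨fun h => ⟨⟨h.1, h.2.1⟩, h.2.2.2⟩, fun h => ⟨h.1.1, h.1.2, hgb x y h.1.2, h.2⟩⟩
  have h3 : hh Q (fun x => (g x, s x)) = hh Q (fun x => (g x, b x, s x)) :=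
    hh_congr hQ (hg.pair (hb.pair hs)) (hg.pair hs) fun x y => by
      simp only [Prod.mk.injEq]
      exact ⟨fun h => ⟨h.1, h.2.2⟩, fun h => ⟨h.1, hgb x y h.1, h.2⟩⟩
  have h4 : hh Q (fun x => ((f x, b x), s x)) = hh Q (fun x => (f x, b x, s x)) :=
    hh_congr hQ (hf.pair (hb.pair hs)) ((hf.pair hb).pair hs) fun x y => by
      simp only [Prod.mk.injEq, and_assoc]
  simp only [aCI, aCE]
  linarith

end CPE

namespace CPE

/-! ### Two nearby directions -/

variable {Q : Measure (ProbabilityMeasure (Fin 2 → ℝ) × (Fin 2 → ℝ))}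

lemma proj_rot (θ φ : ℝ) (x : Fin 2 → ℝ) : projDir (θ + φ) x
    = Real.cos φ * projDir θ x + Real.sin φ * projDir (θ + Real.pi / 2) x := by
  simp only [projDir, Real.cos_add, Real.sin_add, Real.cos_pi_div_two, Real.sin_pi_div_two]
  ring

lemma proj_inv (θ : ℝ) (x : Fin 2 → ℝ) :
    x 0 = projDir θ x * Real.cos θ - projDir (θ + Real.pi / 2) x * Real.sin θ ∧
    x 1 = projDir θ x * Real.sin θ + projDir (θ + Real.pi / 2) x * Real.cos θ := by
  simp only [projDir, Real.cos_add, Real.sin_add, Real.cos_pi_div_two, Real.sin_pi_div_two]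
  have := Real.sin_sq_add_cos_sq θ
  constructor
  · linear_combination (-x 0) * this
  · linear_combination (-x 1) * this

/-- The coordinate of the generation-`n` cell orthogonal to the direction `θ`, dilated by `ρ` and
discretised. With `ρ = 2 ^ m * tan φ`, adding it to `U θ (m + n)` gives, up to the factor `cos φ` and a
bounded error, the projection in direction `θ + φ` at scale `2 ^ (-(m + n))`. -/
def Bf (θ ρ : ℝ) (n : ℕ) (x : Fin 2 → ℝ) : ℤ := ⌊ρ * projDir (θ + Real.pi / 2) (zv (Dk n x))⌋

lemma FR_Bf (θ ρ : ℝ) (n : ℕ) : FR (Bf θ ρ n) :=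
  (FR_Dk n).comp fun d => ⌊ρ * projDir (θ + Real.pi / 2) (zv d)⌋

lemma Bf_bound (θ : ℝ) {ρ : ℝ} (hρ : |ρ| ≤ 1) (n : ℕ) (x : Fin 2 → ℝ) :
    |Bf θ ρ n x| ≤ ((2 * 2 ^ n : ℕ) : ℤ) := by
  refine floor_bound ?_
  obtain ⟨h1, h2⟩ := Dk_bound n x
  have h1' : |((Dk n x).1 : ℝ)| ≤ 2 ^ n := by exact_mod_cast h1
  have h2' : |((Dk n x).2 : ℝ)| ≤ 2 ^ n := by exact_mod_cast h2
  have hc := Real.abs_cos_le_one (θ + Real.pi / 2)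
  have hs := Real.abs_sin_le_one (θ + Real.pi / 2)
  have h3 : |projDir (θ + Real.pi / 2) (zv (Dk n x))| ≤ 2 * 2 ^ n := by
    simp only [projDir, zv, Matrix.cons_val_zero, Matrix.cons_val_one]
    refine (abs_add_le _ _).trans ?_
    rw [abs_mul, abs_mul]
    nlinarith [abs_nonneg ((Dk n x).1 : ℝ), abs_nonneg ((Dk n x).2 : ℝ)]
  rw [abs_mul]
  push_cast
  nlinarith [abs_nonneg ρ, abs_nonneg (projDir (θ + Real.pi / 2) (zv (Dk n x)))]

lemma proj_diff {x y : Fin 2 → ℝ} (hx : x ∈ unitCube 2) (hy : y ∈ unitCube 2) (θ : ℝ) {ρ : ℝ}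
    (hρ : |ρ| ≤ 1) : |ρ * projDir θ x - ρ * projDir θ y| ≤ 4 := by
  have h1 := abs_proj_le hx θ
  have h2 := abs_proj_le hy θ
  rw [← mul_sub, abs_mul]
  have h3 : |projDir θ x - projDir θ y| ≤ 4 := by
    refine (abs_sub _ _).trans ?_
    linarith
  nlinarith [abs_nonneg ρ, abs_nonneg (projDir θ x - projDir θ y)]

section Angle

variable {θ φ ρ : ℝ} {m : ℕ}

lemma half_div {c a b : ℝ} (hc : 1 / 2 ≤ c) (h : |c * a - c * b| < 1) : |a - b| < 2 := by
  rw [← mul_sub, abs_mul, abs_of_pos (by linarith)] at h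
  nlinarith [abs_nonneg (a - b)]

lemma osc_X (hφ : 1 / 2 ≤ Real.cos φ) (hρ : (2 : ℝ) ^ m * Real.sin φ = ρ * Real.cos φ)
    (hρ1 : |ρ| ≤ 1) (n : ℕ) {x y : Fin 2 → ℝ}
    (h : U (θ + φ) (m + n) x = U (θ + φ) (m + n) y) :
    |(U θ (m + n) x + Bf θ ρ n x) - (U θ (m + n) y + Bf θ ρ n y)| ≤ ((8 : ℕ) : ℤ) := by
  have h1 := floor_eq_lt h
  have key : ∀ z, (2 : ℝ) ^ (m + n) * projDir (θ + φ) (clip z)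
      = Real.cos φ * ((2 : ℝ) ^ (m + n) * projDir θ (clip z)
        + ρ * projDir (θ + Real.pi / 2) (zv (Dk n z)) + ρ * projDir (θ + Real.pi / 2) (Sk n z)) := by
    intro z
    rw [proj_rot, pow_add]
    have := proj_scale (θ + Real.pi / 2) n z
    linear_combination (2 : ℝ) ^ n * projDir (θ + Real.pi / 2) (clip z) * hρ + ρ * Real.cos φ * this
  rw [key, key] at h1
  have h2 := abs_lt.1 (half_div hφ h1)
  have h3 := abs_le.1 (proj_diff (Sk_mem n x) (Sk_mem n y) (θ + Real.pi / 2) hρ1)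
  have a1 := Int.floor_le ((2 : ℝ) ^ (m + n) * projDir θ (clip x))
  have a2 := Int.lt_floor_add_one ((2 : ℝ) ^ (m + n) * projDir θ (clip x))
  have a3 := Int.floor_le ((2 : ℝ) ^ (m + n) * projDir θ (clip y))
  have a4 := Int.lt_floor_add_one ((2 : ℝ) ^ (m + n) * projDir θ (clip y))
  have b1 := Int.floor_le (ρ * projDir (θ + Real.pi / 2) (zv (Dk n x)))
  have b2 := Int.lt_floor_add_one (ρ * projDir (θ + Real.pi / 2) (zv (Dk n x)))
  have b3 := Int.floor_le (ρ * projDir (θ + Real.pi / 2) (zv (Dk n y)))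
  have b4 := Int.lt_floor_add_one (ρ * projDir (θ + Real.pi / 2) (zv (Dk n y)))
  have : |(((U θ (m + n) x + Bf θ ρ n x) - (U θ (m + n) y + Bf θ ρ n y) : ℤ) : ℝ)| ≤ 8 := by
    rw [abs_le]
    simp only [U, Bf]
    push_cast
    constructor <;> linarith [h2.1, h2.2, h3.1, h3.2]
  exact_mod_cast this

lemma key_m (hρ : (2 : ℝ) ^ m * Real.sin φ = ρ * Real.cos φ) (z : Fin 2 → ℝ) :
    (2 : ℝ) ^ m * projDir (θ + φ) (clip z)
      = Real.cos φ * ((2 : ℝ) ^ m * projDir θ (clip z) + ρ * projDir (θ + Real.pi / 2) (clip z)) := by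
  rw [proj_rot]
  linear_combination projDir (θ + Real.pi / 2) (clip z) * hρ

lemma osc_U (hφ : 1 / 2 ≤ Real.cos φ) (hρ : (2 : ℝ) ^ m * Real.sin φ = ρ * Real.cos φ)
    (hρ1 : |ρ| ≤ 1) {x y : Fin 2 → ℝ} (h : U (θ + φ) m x = U (θ + φ) m y) :
    |U θ m x - U θ m y| ≤ ((7 : ℕ) : ℤ) := by
  have h1 := floor_eq_lt h
  rw [key_m hρ, key_m hρ] at h1
  have h2 := abs_lt.1 (half_div hφ h1)
  have h3 := abs_le.1 (proj_diff (clip_mem x) (clip_mem y) (θ + Real.pi / 2) hρ1)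
  refine floor_diff (r := 6) 7 ?_ (by norm_num)
  rw [abs_le]
  constructor <;> linarith [h2.1, h2.2, h3.1, h3.2]

lemma osc_U' (hφ : 1 / 2 ≤ Real.cos φ) (hρ : (2 : ℝ) ^ m * Real.sin φ = ρ * Real.cos φ)
    (hρ1 : |ρ| ≤ 1) {x y : Fin 2 → ℝ} (h : U θ m x = U θ m y) :
    |U (θ + φ) m x - U (θ + φ) m y| ≤ ((6 : ℕ) : ℤ) := by
  have h1 := abs_lt.1 (floor_eq_lt h)
  have h3 := abs_le.1 (proj_diff (clip_mem x) (clip_mem y) (θ + Real.pi / 2) hρ1)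
  refine floor_diff (r := 5) 6 ?_ (by norm_num)
  rw [key_m hρ, key_m hρ, ← mul_sub, abs_mul, abs_of_pos (by linarith)]
  have hc := Real.cos_le_one φ
  have h4 : |(2 : ℝ) ^ m * projDir θ (clip x) + ρ * projDir (θ + Real.pi / 2) (clip x)
      - ((2 : ℝ) ^ m * projDir θ (clip y) + ρ * projDir (θ + Real.pi / 2) (clip y))| ≤ 5 := by
    rw [abs_le]
    constructor <;> linarith [h1.1, h1.2, h3.1, h3.2]
  refine (mul_le_mul hc h4 (abs_nonneg _) zero_le_one).trans (by norm_num)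

/-- The generation-`n` cell is determined up to a bounded error by its coordinates along `θ` and
orthogonal to `θ`. -/
lemma osc_D (hρ2 : 1 / 2 ≤ |ρ|) {n : ℕ} (hn : n ≤ m) {x y : Fin 2 → ℝ}
    (hB : Bf θ ρ n x = Bf θ ρ n y) (hU : U θ m x = U θ m y) :
    |(Dk n x).1 - (Dk n y).1| ≤ ((7 : ℕ) : ℤ) ∧ |(Dk n x).2 - (Dk n y).2| ≤ ((7 : ℕ) : ℤ) := by
  have h1 := abs_lt.1 (floor_eq_lt (U_mono θ hn hU))
  rw [proj_scale, proj_scale] at h1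
  have h2 := abs_le.1 (proj_diff (Sk_mem n x) (Sk_mem n y) θ (ρ := 1) (by simp))
  have h3 := floor_eq_lt hB
  rw [← mul_sub, abs_mul] at h3
  have hv : |projDir (θ + Real.pi / 2) (zv (Dk n x)) - projDir (θ + Real.pi / 2) (zv (Dk n y))| ≤ 2 := by
    nlinarith [abs_nonneg (projDir (θ + Real.pi / 2) (zv (Dk n x))
      - projDir (θ + Real.pi / 2) (zv (Dk n y)))]
  have hu : |projDir θ (zv (Dk n x)) - projDir θ (zv (Dk n y))| ≤ 5 := by
    rw [abs_le]; constructor <;> linarith [h1.1, h1.2, h2.1, h2.2]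
  have hc := Real.abs_cos_le_one θ
  have hs := Real.abs_sin_le_one θ
  have b : ∀ {a b c d : ℝ}, |a| ≤ 5 → |b| ≤ 2 → |c| ≤ 1 → |d| ≤ 1 →
      |a * c| ≤ 5 ∧ |b * d| ≤ 2 := by
    intro a b c d ha hb hc hd
    rw [abs_mul, abs_mul]
    exact ⟨by nlinarith [abs_nonneg a, abs_nonneg c], by nlinarith [abs_nonneg b, abs_nonneg d]⟩
  obtain ⟨i0x, i1x⟩ := proj_inv θ (zv (Dk n x))
  obtain ⟨i0y, i1y⟩ := proj_inv θ (zv (Dk n y))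
  have z0 : ∀ d : ℤ × ℤ, zv d 0 = (d.1 : ℝ) := fun d => rfl
  have z1 : ∀ d : ℤ × ℤ, zv d 1 = (d.2 : ℝ) := fun d => rfl
  rw [z0] at i0x i0y
  rw [z1] at i1x i1y
  constructor
  · obtain ⟨p1, p2⟩ := b hu hv hc hs
    rw [abs_le] at p1 p2
    have : |(((Dk n x).1 - (Dk n y).1 : ℤ) : ℝ)| ≤ 7 := by
      push_cast
      rw [i0x, i0y, abs_le]
      constructor <;> linarith [p1.1, p1.2, p2.1, p2.2]
    exact_mod_cast this
  · obtain ⟨p1, p2⟩ := b hu hv hs hc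
    rw [abs_le] at p1 p2
    have : |(((Dk n x).2 - (Dk n y).2 : ℤ) : ℝ)| ≤ 7 := by
      push_cast
      rw [i1x, i1y, abs_le]
      constructor <;> linarith [p1.1, p1.2, p2.1, p2.2]
    exact_mod_cast this

/-- The entropy of the sum `U θ (m + n) + Bf θ ρ n` given `U θ m` grows no faster than that of the
projection in direction `θ + φ`. -/
lemma X_upper (hQ : IsCPDist Q) {β' : ℝ}
    (h : ∀ᵐ p ∂Q, ExactDim ((p.1 : Measure (Fin 2 → ℝ)).map (projDir (θ + φ))) β')
    (hφ : 1 / 2 ≤ Real.cos φ) (hρ : (2 : ℝ) ^ m * Real.sin φ = ρ * Real.cos φ)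
    (hρ1 : |ρ| ≤ 1) (n : ℕ) :
    aCE Q (fun x => U θ (m + n) x + Bf θ ρ n x) (U θ m)
      ≤ n * β' * Real.log 2 + 2 * Real.log 3 + 3 * Real.log 17 := by
  have hX : FR (fun x => U θ (m + n) x + Bf θ ρ n x) :=
    ((FR_U θ (m + n)).pair (FR_Bf θ ρ n)).comp fun q => q.1 + q.2
  have hU := FR_U θ m
  have hU' := FR_U (θ + φ) m
  have hU'' := FR_U (θ + φ) (m + n)
  have h1 := hh_osc hQ hX hU'' hU 8 fun x y hx _ => osc_X hφ hρ hρ1 n hx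
  have h2 := hh_osc hQ hU hU'' hU'' 7 fun x y hx _ =>
    osc_U hφ hρ hρ1 (U_mono (θ + φ) (Nat.le_add_right m n) hx)
  have h3 := hh_osc hQ hU' hU hU 6 fun x y hx _ => osc_U' hφ hρ hρ1 hx
  have e1 : hh Q (fun x => (U θ m x, U (θ + φ) (m + n) x)) = hh Q (fun x => (U (θ + φ) (m + n) x, U θ m x)) :=
    hh_congr hQ (hU''.pair hU) (hU.pair hU'') fun x y => by simp [and_comm]
  have e2 : hh Q (fun x => (U (θ + φ) (m + n) x, U (θ + φ) (m + n) x)) = hh Q (U (θ + φ) (m + n)) :=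
    hh_congr hQ hU'' (hU''.pair hU'') fun x y => by simp
  have e3 : hh Q (fun x => (U θ m x, U θ m x)) = hh Q (U θ m) :=
    hh_congr hQ hU (hU.pair hU) fun x y => by simp
  have h4 := hh_mono hQ (hU'.pair hU) hU' fun x y h => (Prod.mk.inj h).1
  have h5 := incr_upper hQ h m n
  have l1 : Real.log (2 * ((8 : ℕ) : ℝ) + 1) ≤ Real.log 17 := Real.log_le_log (by norm_num) (by norm_num)
  have l2 : Real.log (2 * ((7 : ℕ) : ℝ) + 1) ≤ Real.log 17 := Real.log_le_log (by norm_num) (by norm_num)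
  have l3 : Real.log (2 * ((6 : ℕ) : ℝ) + 1) ≤ Real.log 17 := Real.log_le_log (by norm_num) (by norm_num)
  simp only [aCE]
  linarith

/-- Given `U θ m`, the summand `Bf` determines the generation-`n` cell up to a bounded number of choices. -/
lemma B_lower (hQ : IsCPDist Q) (hρ2 : 1 / 2 ≤ |ρ|) {n : ℕ} (hn : n ≤ m) :
    cc Q θ n m - 2 * Real.log 15 ≤ aCE Q (Bf θ ρ n) (U θ m) := by
  have hB := FR_Bf θ ρ n
  have hU := FR_U θ m
  have hD1 : FR (fun x => (Dk n x).1) := (FR_Dk n).comp Prod.fst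
  have hD2 : FR (fun x => (Dk n x).2) := (FR_Dk n).comp Prod.snd
  have h1 := hh_osc hQ hD1 (hB.pair hU) (hB.pair hU) 7 fun x y hx _ =>
    (osc_D hρ2 hn (Prod.mk.inj hx).1 (Prod.mk.inj hx).2).1
  have h2 := hh_osc hQ hD2 (hB.pair hU) (hD1.pair (hB.pair hU)) 7 fun x y hx _ =>
    (osc_D hρ2 hn (Prod.mk.inj hx).1 (Prod.mk.inj hx).2).2
  have h3 := hh_mono hQ (hD2.pair (hD1.pair (hB.pair hU))) ((FR_Dk n).pair hU) fun x y h => by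
    simp only [Prod.mk.injEq] at h ⊢
    exact ⟨Prod.ext h.2.1 h.1, h.2.2.2⟩
  have e1 : hh Q (fun x => ((Bf θ ρ n x, U θ m x), (Bf θ ρ n x, U θ m x)))
      = hh Q (fun x => (Bf θ ρ n x, U θ m x)) :=
    hh_congr hQ (hB.pair hU) ((hB.pair hU).pair (hB.pair hU)) fun x y => by simp
  have e2 : hh Q (fun x => ((Bf θ ρ n x, U θ m x), ((Dk n x).1, Bf θ ρ n x, U θ m x)))
      = hh Q (fun x => ((Dk n x).1, Bf θ ρ n x, U θ m x)) :=
    hh_congr hQ (hD1.pair (hB.pair hU)) ((hB.pair hU).pair (hD1.pair (hB.pair hU))) fun x y => by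
      simp only [Prod.mk.injEq]; tauto
  have l2 : Real.log (2 * ((7 : ℕ) : ℝ) + 1) ≤ Real.log 15 := Real.log_le_log (by norm_num) (by norm_num)
  simp only [aCE, cc]
  linarith

end Angle

/-- The leading block of digits of `Bf` has entropy at most that of one block. -/
lemma B_top (hQ : IsCPDist Q) (θ : ℝ) {ρ : ℝ} (hρ : |ρ| ≤ 1) (W t m : ℕ) :
    aCE Q (fun x => Bf θ ρ ((t + 1) * W) x / (((2 ^ W) ^ t : ℕ) : ℤ)) (U θ m)
      ≤ W * Real.log 2 + Real.log 5 := by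
  set V : (Fin 2 → ℝ) → ℤ := fun x => Bf θ ρ ((t + 1) * W) x / (((2 ^ W) ^ t : ℕ) : ℤ) with hV
  have hB : FR V := (FR_Bf θ ρ ((t + 1) * W)).comp fun b => b / (((2 ^ W) ^ t : ℕ) : ℤ)
  have hU := FR_U θ m
  have hc : FR (fun _ : Fin 2 → ℝ => ()) := hB.comp fun _ => ()
  have h1 := hh_submod hQ hB hU hc
  have e1 : hh Q (fun x => (V x, U θ m x, ())) = hh Q (fun x => (V x, U θ m x)) :=
    hh_congr hQ (hB.pair hU) (hB.pair (hU.pair hc)) fun x y => by simp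
  have e2 : hh Q (fun x => (V x, ())) = hh Q V := hh_congr hQ hB (hB.pair hc) fun x y => by simp
  have e3 : hh Q (fun x => (U θ m x, ())) = hh Q (U θ m) :=
    hh_congr hQ hU (hU.pair hc) fun x y => by simp
  have h0 := hh_nonneg (Q := Q) hc
  have hcard : hh Q V ≤ Real.log (5 * 2 ^ W) := by
    refine hh_card hQ hB (by positivity) (Finset.Icc (-(2 * 2 ^ W : ℤ)) (2 * 2 ^ W)) (fun x => ?_) ?_
    · have hb := abs_le.1 (Bf_bound θ hρ ((t + 1) * W) x)
      have e : ((2 * 2 ^ ((t + 1) * W) : ℕ) : ℤ) = (2 * 2 ^ W) * (((2 ^ W) ^ t : ℕ) : ℤ) := by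
        push_cast; rw [add_mul, one_mul, pow_add, mul_comm t W, pow_mul]; ring
      have hp : (0 : ℤ) < (((2 ^ W) ^ t : ℕ) : ℤ) := by positivity
      rw [e] at hb
      rw [Finset.mem_Icc]
      refine ⟨Int.le_ediv_of_mul_le hp (by linarith [hb.1]), ?_⟩
      exact Int.ediv_le_of_le_mul hp hb.2
    · rw [Int.card_Icc]
      have : ((2 * 2 ^ W + 1 - -(2 * 2 ^ W) : ℤ).toNat : ℝ) = 4 * 2 ^ W + 1 := by
        have h : (2 * 2 ^ W + 1 - -(2 * 2 ^ W) : ℤ) = ((4 * 2 ^ W + 1 : ℕ) : ℤ) := by push_cast; ring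
        rw [h, Int.toNat_natCast]; push_cast; ring
      rw [this]
      have : (1 : ℝ) ≤ 2 ^ W := one_le_pow₀ (by norm_num)
      linarith
  rw [Real.log_mul (by norm_num) (by positivity), Real.log_pow] at hcard
  simp only [aCE]
  linarith

end CPE

namespace CPE

/-! ### Isolation of directions with a dimension drop -/

variable {Q : Measure (ProbabilityMeasure (Fin 2 → ℝ) × (Fin 2 → ℝ))}

/-- The multiscale inequality with all entropies replaced by their asymptotic values. -/
lemma final_ineq (hQ : IsCPDist Q) {θ φ ρ β β' R : ℝ} {m W W1 t : ℕ}
    (h : ∀ᵐ p ∂Q, ExactDim ((p.1 : Measure (Fin 2 → ℝ)).map (projDir θ)) β)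
    (h' : ∀ᵐ p ∂Q, ExactDim ((p.1 : Measure (Fin 2 → ℝ)).map (projDir (θ + φ))) β')
    (hφ : 1 / 2 ≤ Real.cos φ) (hρ : (2 : ℝ) ^ m * Real.sin φ = ρ * Real.cos φ)
    (hρ1 : |ρ| ≤ 1) (hρ2 : 1 / 2 ≤ |ρ|) (hn : (t + 1) * W ≤ m) (hW : W1 ≤ W) (hR : 1 ≤ R)
    (hb : 0 ≤ W1 * Real.log 2 - C0 - Real.log (6 * R)) :
    (W1 * Real.log 2 - C0 - Real.log (6 * R)) *
      (hh Q (Dk ((t + 1) * W)) - (t + 1) * W * β * Real.log 2 - 3 * Real.log 3 - 2 * Real.log 15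
        - (W * Real.log 2 + Real.log 5) - t * (Real.log 4 + W1 * Real.log 2))
    ≤ W * Real.log 2 * (t * (W1 * β * Real.log 2 + 4 * Real.log 3 + Real.log 5 - hh Q (U θ W1)
        + light Q R θ W1 * (Real.log 10 + W1 * Real.log 2)) + 2 * t
        + 4 * ((2 : ℝ) ^ W) ^ 4 * ((t + 1) * aCI Q (U θ (m + (t + 1) * W)) (Dk ((t + 1) * W)) (U θ m)
          + ((t + 1) * W * β' * Real.log 2 + 4 * Real.log 3 + 3 * Real.log 17 + Real.log 5
            - hh Q (U θ ((t + 1) * W))))) := by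
  have l1 : Real.log (((2 ^ W1 : ℕ) : ℕ) : ℝ) = W1 * Real.log 2 := by
    push_cast; rw [Real.log_pow]
  have l2 : Real.log (((2 ^ W : ℕ) : ℕ) : ℝ) = W * Real.log 2 := by
    push_cast; rw [Real.log_pow]
  have l3 : Real.log (4 * (((2 ^ W1 : ℕ) : ℕ) : ℝ)) = Real.log 4 + W1 * Real.log 2 := by
    rw [Real.log_mul (by norm_num) (by positivity), l1]
  have l4 : Real.log (2 * (5 * (2 : ℝ) ^ W1)) = Real.log 10 + W1 * Real.log 2 := by
    rw [← mul_assoc, Real.log_mul (by norm_num) (by positivity), Real.log_pow]; norm_num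
  have hB := FR_Bf θ ρ ((t + 1) * W)
  have h1 := avg_multiscale hQ θ hW t m hR (by rw [l1]; exact hb) hB
  rw [l1, l2, l3, l4] at h1
  refine le_trans (mul_le_mul_of_nonneg_left ?_ hb) (h1.trans (mul_le_mul_of_nonneg_left ?_
    (by have := Real.log_pos (one_lt_two (α := ℝ)); positivity)))
  · have a1 := B_lower (Q := Q) (θ := θ) hQ hρ2 hn
    have a2 := B_top hQ θ hρ1 W t m
    have a3 := cc_lower hQ h hn
    push_cast at a3
    linarith
  · have b1 : ∑ k ∈ Finset.range t, (aCI Q (U θ (m + (t - k) * W)) (Dk (m + (t - k) * W - W1))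
        (U θ (m + (t - k) * W - W1)) + light Q R θ W1 * (Real.log 10 + W1 * Real.log 2))
        ≤ ∑ k ∈ Finset.range t, (W1 * β * Real.log 2 + 4 * Real.log 3 + Real.log 5 - hh Q (U θ W1)
        + light Q R θ W1 * (Real.log 10 + W1 * Real.log 2)) := by
      refine Finset.sum_le_sum fun k hk => ?_
      have hk' := Finset.mem_range.1 hk
      have hle : W1 ≤ m + (t - k) * W := by
        have : 1 * W ≤ (t - k) * W := Nat.mul_le_mul_right W (by omega)
        omega
      have := excess hQ h (m + (t - k) * W - W1) W1
      rw [Nat.sub_add_cancel hle] at this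
      linarith
    rw [Finset.sum_const, Finset.card_range, nsmul_eq_mul] at b1
    have b2 : aCI Q (U θ (m + (t + 1) * W)) (Bf θ ρ ((t + 1) * W)) (U θ m)
        ≤ aCI Q (U θ (m + (t + 1) * W)) (Dk ((t + 1) * W)) (U θ m) :=
      aCI_mono hQ (FR_U _ _) (FR_Dk _) (FR_U _ _) hB fun x y h => by simp only [Bf, h]
    have b3 := X_upper hQ h' hφ hρ hρ1 ((t + 1) * W)
    have b4 := incr_lower hQ θ m ((t + 1) * W)
    have b5 : aCE Q (U θ (m + (t + 1) * W)) (U θ m) = hh Q (U θ (m + (t + 1) * W)) - hh Q (U θ m) := by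
      rw [aCE, hh_congr hQ (FR_U θ (m + (t + 1) * W)) ((FR_U θ (m + (t + 1) * W)).pair (FR_U θ m))]
      intro x y
      simp only [Prod.mk.injEq]
      exact ⟨fun h => ⟨h, U_mono θ (Nat.le_add_right _ _) h⟩, fun h => h.1⟩
    push_cast at b3
    push_cast
    refine add_le_add (add_le_add b1 le_rfl) (mul_le_mul_of_nonneg_left (add_le_add
      (mul_le_mul_of_nonneg_left b2 (by positivity)) ?_) (by positivity))
    rw [b5]
    linarith

/-- Choice of the scale: `2 ^ m * |tan φ|` lies in `[1/2, 1]` with `m` large if `φ` is small. -/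
lemma exists_scale {φ : ℝ} (M : ℕ) (h0 : φ ≠ 0) (h1 : |φ| < 1 / 2 ^ (M + 1)) :
    1 / 2 ≤ Real.cos φ ∧ ∃ m ≥ M, ∃ ρ : ℝ, (2 : ℝ) ^ m * Real.sin φ = ρ * Real.cos φ ∧
      |ρ| ≤ 1 ∧ 1 / 2 ≤ |ρ| := by
  have hM : (1 : ℝ) ≤ 2 ^ M := one_le_pow₀ (by norm_num)
  have hφ : |φ| * 2 ^ M < 1 / 2 := by
    rw [lt_div_iff₀ (by positivity), pow_succ] at h1; linarith
  have hφ1 : |φ| < 1 / 2 := by nlinarith [abs_nonneg φ]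
  have hcos : 1 / 2 ≤ Real.cos φ := by
    have := Real.one_sub_sq_div_two_le_cos (x := φ)
    nlinarith [sq_abs φ, abs_nonneg φ]
  refine ⟨hcos, ?_⟩
  have hcpos : 0 < Real.cos φ := by linarith
  have hsin : Real.sin φ ≠ 0 := by
    have := abs_lt.1 hφ1
    rw [Ne, Real.sin_eq_zero_iff_of_lt_of_lt (by linarith [Real.pi_gt_three])
      (by linarith [Real.pi_gt_three])]
    exact h0
  set x := |Real.sin φ / Real.cos φ| with hx
  have hx0 : 0 < x := abs_pos.2 (div_ne_zero hsin hcpos.ne')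
  have hxM : x * 2 ^ M < 1 := by
    have h2 : x * Real.cos φ = |Real.sin φ| := by
      rw [hx, abs_div, abs_of_pos hcpos]; field_simp
    have h3 := Real.abs_sin_le_abs (x := φ)
    have h4 : x ≤ 2 * |φ| := by nlinarith
    nlinarith
  have hy : 1 ≤ 1 / x := by rw [le_div_iff₀ hx0]; nlinarith
  obtain ⟨m, hm1, hm2⟩ := exists_nat_pow_near hy (one_lt_two (α := ℝ))
  rw [le_div_iff₀ hx0] at hm1
  rw [div_lt_iff₀ hx0] at hm2
  have hmM : M ≤ m := by
    by_contra hlt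
    have : (2 : ℝ) ^ (m + 1) ≤ 2 ^ M := pow_le_pow_right₀ (by norm_num) (by omega)
    nlinarith
  refine ⟨m, hmM, 2 ^ m * (Real.sin φ / Real.cos φ), by field_simp, ?_, ?_⟩
  · rw [abs_mul, abs_of_pos (by positivity)]; exact hm1
  · rw [abs_mul, abs_of_pos (by positivity)]
    rw [pow_succ] at hm2; change 1 / 2 ≤ 2 ^ m * x; nlinarith

end CPE

namespace CPE

/-! ### Choice of parameters and countability -/

variable {Q : Measure (ProbabilityMeasure (Fin 2 → ℝ) × (Fin 2 → ℝ))}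

lemma ev_nat (X : ℝ) : ∀ᶠ n : ℕ in atTop, X ≤ n := tendsto_natCast_atTop_atTop.eventually_ge_atTop X

/-- Choice of the inner block length `n`: the gain per block beats the error per block. -/
lemma choose_W1 (hQ : IsCPDist Q) {θ β : ℝ}
    (h : ∀ᵐ p ∂Q, ExactDim ((p.1 : Measure (Fin 2 → ℝ)).map (projDir θ)) β)
    (h0 : 0 ≤ β) (h1 : β < 1) {κ : ℝ} (hκ : 0 < κ) :
    ∃ n : ℕ, 0 < n ∧ ∃ R : ℝ, 1 ≤ R ∧
      n * (1 - β) * Real.log 2 / 4 ≤ n * Real.log 2 - C0 - Real.log (6 * R) ∧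
      n * β * Real.log 2 + 4 * Real.log 3 + Real.log 5 - hh Q (U θ n)
        + light Q R θ n * (Real.log 10 + n * Real.log 2) + 3 < κ * n := by
  have hL : 0 < Real.log 2 := Real.log_pos (by norm_num)
  have hL10 : 0 < Real.log 10 := Real.log_pos (by norm_num)
  set δ := 1 - β with hδ
  have hδ0 : 0 < δ := by linarith
  set e := κ / (8 * Real.log 2) with he
  have he0 : 0 < e := by positivity
  have heL : e * Real.log 2 = κ / 8 := by rw [he]; field_simp
  have hlight := (light_tendsto hQ h (half_pos hδ0)).eventually_le_const he0
  have hent := ent_lower hQ (measurable_projDir θ) h (FR_U θ) (U_dist θ) he0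
  obtain ⟨n, a1, a2, a3, a4, a5⟩ := (hlight.and (hent.and ((eventually_gt_atTop 0).and
    ((ev_nat ((C0 + Real.log 6) / (δ * Real.log 2 / 4))).and
      (ev_nat ((4 * Real.log 3 + Real.log 5 + e * Real.log 10 + 4) / (κ / 2))))))).exists
  rw [div_le_iff₀ (by positivity)] at a4 a5
  have hn : (0 : ℝ) < n := by exact_mod_cast a3
  refine ⟨n, a3, Real.exp (n * (β + δ / 2) * Real.log 2), ?_, ?_, ?_⟩
  · exact Real.one_le_exp (by positivity)
  · rw [Real.log_mul (by norm_num) (Real.exp_pos _).ne', Real.log_exp]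
    have : β = 1 - δ := by rw [hδ]; ring
    rw [this]
    nlinarith
  · have b1 : light Q (Real.exp (n * (β + δ / 2) * Real.log 2)) θ n * (Real.log 10 + n * Real.log 2)
        ≤ e * (Real.log 10 + n * Real.log 2) := mul_le_mul_of_nonneg_right a1 (by positivity)
    have b2 : e * (Real.log 10 + n * Real.log 2) = e * Real.log 10 + n * (κ / 8) := by
      rw [← heL]; ring
    have b3 : n * (β - e) * Real.log 2 = n * β * Real.log 2 - n * (κ / 8) := by
      rw [← heL]; ring
    have b4 : 0 < κ * n := by positivity
    linarith

/-- A direction whose projection has dimension below `min 1 α` is isolated among the directions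
whose projections have comparable dimension. -/
lemma main_prop (hQ : IsCPDist Q) {α : ℝ}
    (hα : ∀ᵐ p ∂Q, ExactDim (p.1 : Measure (Fin 2 → ℝ)) α) {β : ℝ → ℝ}
    (hβ : ∀ θ : ℝ, ∀ᵐ p ∂Q, ExactDim ((p.1 : Measure (Fin 2 → ℝ)).map (projDir θ)) (β θ))
    (θ : ℝ) (h1 : β θ < 1) (h2 : β θ < α) :
    ∃ ε > 0, ∀ φ : ℝ, φ ≠ 0 → |φ| < ε → β θ + ε ≤ β (θ + φ) := by
  have hprob := hQ.1
  have hL : 0 < Real.log 2 := Real.log_pos (by norm_num)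
  have hβ0 : 0 ≤ β θ := by
    obtain ⟨p, hp⟩ := (hβ θ).exists
    exact ExactDim.nonneg (measurable_projDir θ) hp
  set γ := α - β θ with hγ
  set δ := 1 - β θ with hδ
  have hγ0 : 0 < γ := by linarith
  have hδ0 : 0 < δ := by linarith
  set L := Real.log 2 with hLdef
  set κ := δ * γ * L / 16 with hκ
  obtain ⟨W1, hW1, R, hR, hlam, hE⟩ := choose_W1 hQ (hβ θ) hβ0 h1 (κ := κ) (by positivity)
  rw [← hδ, ← hLdef] at hlam
  rw [← hLdef] at hE
  set lam := W1 * L - C0 - Real.log (6 * R) with hlamdef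
  set E := W1 * β θ * L + 4 * Real.log 3 + Real.log 5 - hh Q (U θ W1)
    + light Q R θ W1 * (Real.log 10 + W1 * L) with hEdef
  -- the outer block length
  obtain ⟨W, c1, c2, c3⟩ := ((eventually_ge_atTop W1).and ((ev_nat (4 * W1 / γ)).and
    (ev_nat (Real.log 4 / (γ * L / 8))))).exists
  rw [div_le_iff₀ (by positivity)] at c2 c3
  have hW0 : (0 : ℝ) < W := by exact_mod_cast lt_of_lt_of_le hW1 c1
  have hW10 : (0 : ℝ) < W1 := by exact_mod_cast hW1
  set P : ℝ := 4 * ((2 : ℝ) ^ W) ^ 4 with hP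
  have hP0 : 0 < P := by positivity
  set η := min (γ / 4) (1 / (16 * P * W * L)) with hη
  have hη0 : 0 < η := lt_min (by positivity) (by positivity)
  have hη1 : η ≤ γ / 4 := min_le_left _ _
  have hη2 : P * (W * L * η) ≤ 1 / 16 := by
    have : η ≤ 1 / (16 * P * W * L) := min_le_right _ _
    rw [le_div_iff₀ (by positivity)] at this
    linarith
  -- the number of blocks
  have hD := ent_lower hQ measurable_id (by simpa only [Measure.map_id] using hα) FR_Dk D_dist hη0
  have hU := ent_lower hQ (measurable_projDir θ) (hβ θ) (FR_U θ) (U_dist θ) hη0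
  have hsub : Tendsto (fun t : ℕ => (t + 1) * W) atTop atTop := by
    refine tendsto_atTop_mono (fun t : ℕ => ?_) tendsto_id
    have : 1 ≤ W := le_trans hW1 c1
    change t ≤ (t + 1) * W
    nlinarith
  set C1 := 3 * Real.log 3 + 2 * Real.log 15 + (W * L + Real.log 5) with hC1
  set C2 := 4 * Real.log 3 + 3 * Real.log 17 + Real.log 5 with hC2
  obtain ⟨t, d1, d2, d3, d4, d5⟩ := ((hsub.eventually hD).and ((hsub.eventually hU).and
    ((ev_nat (C1 / (W * γ * L / 8))).and ((ev_nat (P * C2 * 4)).and (ev_nat 1))))).exists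
  rw [div_le_iff₀ (by positivity)] at d3
  push_cast at d1 d2
  rw [← hLdef] at d1 d2
  set n := (t + 1) * W with hn
  -- beyond this scale the cell and the digits of the projection are almost independent
  have hI : ∀ᶠ m in atTop, aCI Q (U θ (m + n)) (Dk n) (U θ m) ≤ 1 / (8 * P) :=
    (aCI_tendsto hQ θ n).eventually_le_const (by positivity)
  obtain ⟨m0, hm0⟩ := eventually_atTop.1 hI
  refine ⟨min η (1 / 2 ^ (max m0 n + 1)), lt_min hη0 (by positivity), fun φ hφ0 hφ => ?_⟩
  by_contra hlt
  rw [not_le] at hlt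
  obtain ⟨hcos, m, hm, ρ, hρ, hρ1, hρ2⟩ := exists_scale (max m0 n) hφ0 (hφ.trans_le (min_le_right _ _))
  have hβ' : β (θ + φ) ≤ β θ + η := hlt.le.trans (by linarith [min_le_left η (1 / 2 ^ (max m0 n + 1))])
  have hI' := hm0 m ((le_max_left _ _).trans hm)
  have hlam0 : 0 ≤ lam := le_trans (by positivity) hlam
  have hfin := final_ineq (R := R) (t := t) hQ (hβ θ) (hβ (θ + φ)) hcos hρ hρ1 hρ2
    ((le_max_right m0 n).trans hm) c1 hR hlam0
  rw [← hLdef, ← hP, ← hn, ← hEdef, ← hlamdef] at hfin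
  have ht : (0 : ℝ) < t := by linarith
  have hlow : t * W * γ * L / 4 ≤ hh Q (Dk n) - (t + 1) * W * β θ * L - 3 * Real.log 3
      - 2 * Real.log 15 - (W * L + Real.log 5) - t * (Real.log 4 + W1 * L) := by
    have e1 : ((t : ℝ) + 1) * W * (α - η) * L ≥ ((t : ℝ) + 1) * W * (β θ + 3 / 4 * γ) * L := by
      have : α - η ≥ β θ + 3 / 4 * γ := by linarith
      gcongr
    have e2 : (t : ℝ) * (Real.log 4 + W1 * L) ≤ t * (W * (γ * L / 8) + W * γ / 4 * L) := by
      have : (W1 : ℝ) ≤ W * γ / 4 := by linarith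
      gcongr
    have e3 : 0 < W * γ * L := by positivity
    linarith
  have hup : P * ((t + 1) * aCI Q (U θ (m + n)) (Dk n) (U θ m)
      + ((t + 1) * W * β (θ + φ) * L + 4 * Real.log 3 + 3 * Real.log 17 + Real.log 5
        - hh Q (U θ n))) ≤ t := by
    have e1 : P * aCI Q (U θ (m + n)) (Dk n) (U θ m) ≤ 1 / 8 := by
      calc P * aCI Q (U θ (m + n)) (Dk n) (U θ m) ≤ P * (1 / (8 * P)) := by gcongr
        _ = 1 / 8 := by field_simp
    have e2 : ((t : ℝ) + 1) * W * β (θ + φ) * L ≤ ((t : ℝ) + 1) * W * (β θ + η) * L := by gcongr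
    have e3 : ((t : ℝ) + 1) * W * β (θ + φ) * L + 4 * Real.log 3 + 3 * Real.log 17 + Real.log 5
        - hh Q (U θ n) ≤ 2 * (t + 1) * (W * L * η) + C2 := by
      linarith
    calc _ ≤ P * ((t + 1) * aCI Q (U θ (m + n)) (Dk n) (U θ m) + (2 * (t + 1) * (W * L * η) + C2)) := by
          gcongr
      _ = (t + 1) * (P * aCI Q (U θ (m + n)) (Dk n) (U θ m)) + 2 * (t + 1) * (P * (W * L * η)) + P * C2 := by
          ring
      _ ≤ (t + 1) * (1 / 8) + 2 * (t + 1) * (1 / 16) + P * C2 := by gcongr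
      _ ≤ t := by linarith
  have hl : (W1 * δ * L / 4) * (t * W * γ * L / 4) ≤ W * L * (t * E + 2 * t + t) := by
    refine le_trans (mul_le_mul hlam hlow (by positivity) hlam0) (hfin.trans ?_)
    gcongr
  have hr : W * L * (t * E + 2 * t + t) < W * L * (t * (κ * W1)) := by
    have : t * E + 2 * t + t = t * (E + 3) := by ring
    rw [this]
    gcongr
  have : W * L * (t * (κ * W1)) = (W1 * δ * L / 4) * (t * W * γ * L / 4) := by
    rw [hκ]; ring
  linarith

/-- Distinct points of `S` lie in distinct boxes `(q₁, q₂) × (-∞, q₃)` with rational data. -/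
lemma countable_of_isolated {β : ℝ → ℝ} {S : Set ℝ}
    (h : ∀ θ ∈ S, ∃ ε > 0, ∀ φ : ℝ, φ ≠ 0 → |φ| < ε → β θ + ε ≤ β (θ + φ)) : S.Countable := by
  have h' : ∀ θ : ℝ, ∃ q : ℚ × ℚ × ℚ, θ ∈ S → ((q.1 : ℝ) < θ ∧ θ < q.2.1 ∧ β θ < q.2.2 ∧
      ∀ φ : ℝ, φ ≠ 0 → |φ| < q.2.1 - q.1 → q.2.2 ≤ β (θ + φ)) := by
    intro θ
    by_cases hθ : θ ∈ S
    · obtain ⟨ε, hε, hh⟩ := h θ hθ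
      obtain ⟨a, ha1, ha2⟩ := exists_rat_btwn (show θ - ε / 2 < θ by linarith)
      obtain ⟨b, hb1, hb2⟩ := exists_rat_btwn (show θ < θ + ε / 2 by linarith)
      obtain ⟨c, hc1, hc2⟩ := exists_rat_btwn (show β θ < β θ + ε by linarith)
      exact ⟨(a, b, c), fun _ => ⟨ha2, hb1, hc1, fun φ h0 hφ =>
        hc2.le.trans (hh φ h0 (hφ.trans (by dsimp only; linarith)))⟩⟩
    · exact ⟨0, fun h => absurd h hθ⟩
  choose q hq using h'
  refine MapsTo.countable_of_injOn (f := q) (t := univ) (mapsTo_univ _ _) ?_ countable_univ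
  intro x hx y hy hxy
  by_contra hne
  obtain ⟨a1, a2, a3, a4⟩ := hq x hx
  obtain ⟨b1, b2, b3, b4⟩ := hq y hy
  have := a4 (y - x) (sub_ne_zero.2 (Ne.symm hne)) (by
    rw [hxy] at a1 a2 ⊢
    rw [abs_lt]; constructor <;> linarith)
  rw [add_sub_cancel, hxy] at this
  linarith

end CPE

/-- for an ergodic CP-distribution `Q` on the plane, the set of directions in
which the projected dimension drops below `min(1, dim Q)` is at most countable. -/
theorem stmt3 (Q : Measure (ProbabilityMeasure (Fin 2 → ℝ) × (Fin 2 → ℝ)))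
    (hQ : IsCPDist Q) (herg : CPErgodic Q)
    (α : ℝ) (hα : ∀ᵐ p ∂Q, ExactDim (p.1 : Measure (Fin 2 → ℝ)) α)
    (β : ℝ → ℝ)
    (hβ : ∀ θ : ℝ, ∀ᵐ p ∂Q, ExactDim ((p.1 : Measure (Fin 2 → ℝ)).map (projDir θ)) (β θ)) :
    {θ : ℝ | β θ < min 1 α}.Countable :=
  CPE.countable_of_isolated fun θ hθ =>
    CPE.main_prop hQ hα hβ θ (lt_of_lt_of_le hθ (min_le_left _ _))
      (lt_of_lt_of_le hθ (min_le_right _ _))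

end
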